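/- arXiv:1607.01457 — 8 statements merged into one kernel-verified Lean document; each statement's English description precedes it below -/
import Mathlib

section
/- Let G be a finite group of order 2^m (m ≥ 1) and let S be a minimal generating set for G, i.e. Subgroup.closure S = ⊤ and no proper subset of S generates G. Then for every non-empty subset X ⊆ S there exists a surjective group homomorphism φ : G →* Multiplicative (ZMod 2) such that for every g ∈ S, φ g is the non-identity element of Multiplicative (ZMod 2) if and only if g ∈ X. -/
/-!
For each `x ∈ S`, minimality makes `closure (S \ {x})` a proper subgroup. In a group of order
`2 ^ m` every proper subgroup lies in a subgroup of index two, that is, in the kernel of a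
character to the group of order two. The resulting character is trivial on `S \ {x}`, hence
non-trivial at `x` since `S` generates (`exists_dual_character`). These characters form a dual
basis to `S`, and the product of those indexed by `X` is the required homomorphism.
-/

/-- The character of `G` with kernel a given subgroup of index two. -/
noncomputable def indexTwoCharacter {G : Type*} [Group G] (M : Subgroup G) (hM : M.index = 2) :
    G →* Multiplicative (ZMod 2) := by
  classical
  exact
  { toFun := fun g => if g ∈ M then 1 else Multiplicative.ofAdd 1
    map_one' := if_pos M.one_mem
    map_mul' := fun a b => by
      have h := Subgroup.mul_mem_iff_of_index_two hM (a := a) (b := b)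
      by_cases ha : a ∈ M <;> by_cases hb : b ∈ M <;> simp only [h, ha, hb] <;> decide }

lemma exists_index_two_ge {G : Type*} [Group G] [Finite G] (m : ℕ)
    (hcard : Nat.card G = 2 ^ m) (K : Subgroup G) (hK : K ≠ ⊤) :
    ∃ M : Subgroup G, M.index = 2 ∧ K ≤ M := by
  haveI : Fact (Nat.Prime 2) := ⟨Nat.prime_two⟩
  obtain ⟨n, hnm, hn⟩ := (Nat.dvd_prime_pow Nat.prime_two).1 (hcard ▸ K.card_subgroup_dvd_card)
  have hlt : n < m := by
    refine lt_of_le_of_ne hnm ?_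
    rintro rfl
    exact hK (Subgroup.eq_top_of_card_eq K (hn.trans hcard.symm))
  obtain ⟨k, rfl⟩ : ∃ k, m = k + 1 := ⟨m - 1, by omega⟩
  obtain ⟨M, hMcard, hKM⟩ := Sylow.exists_subgroup_card_pow_prime_le 2
    (hcard ▸ pow_dvd_pow 2 (Nat.le_succ k)) K hn (Nat.lt_succ_iff.1 hlt)
  refine ⟨M, ?_, hKM⟩
  have h := M.card_mul_index
  rw [hMcard, hcard, pow_succ] at h
  exact Nat.eq_of_mul_eq_mul_left (by positivity) h

/-- The characters dual to a minimal generating set. -/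
lemma exists_dual_character {G : Type*} [Group G] [Finite G] (m : ℕ)
    (hcard : Nat.card G = 2 ^ m) (S : Set G) (hSgen : Subgroup.closure S = ⊤)
    (hSmin : ∀ T : Set G, T ⊂ S → Subgroup.closure T ≠ ⊤) (x : G) (hx : x ∈ S) :
    ∃ φ : G →* Multiplicative (ZMod 2), φ x = Multiplicative.ofAdd 1 ∧
      ∀ g ∈ S, g ≠ x → φ g = 1 := by
  obtain ⟨M, hM, hle⟩ := exists_index_two_ge m hcard _
    (hSmin (S \ {x}) ⟨Set.diff_subset, fun h => (h hx).2 rfl⟩)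
  have hmem : ∀ g ∈ S, g ≠ x → g ∈ M := fun g hg hgx =>
    hle (Subgroup.subset_closure ⟨hg, hgx⟩)
  have hxM : x ∉ M := fun hxM => by
    have htop : M = ⊤ := by
      rw [eq_top_iff, ← hSgen, Subgroup.closure_le]
      intro g hg
      by_cases h : g = x
      · exact h ▸ hxM
      · exact hmem g hg h
    rw [htop, Subgroup.index_top] at hM
    omega
  exact ⟨indexTwoCharacter M hM, if_neg hxM, fun g hg hgx => if_pos (hmem g hg hgx)⟩

/-- Let G be a finite group of order 2^m (m ≥ 1) and let S be a minimal
generating set for G. Then for every non-empty subset X ⊆ S there exists a surjective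
group homomorphism φ : G →* Multiplicative (ZMod 2) such that for every g ∈ S,
φ g is the non-identity element of Multiplicative (ZMod 2) iff g ∈ X. -/
theorem stmt_0 {G : Type*} [Group G] [Finite G] (m : ℕ) (hm : 1 ≤ m)
    (hcard : Nat.card G = 2 ^ m) (S : Set G)
    (hSgen : Subgroup.closure S = ⊤)
    (hSmin : ∀ T : Set G, T ⊂ S → Subgroup.closure T ≠ ⊤)
    (X : Set G) (hXS : X ⊆ S) (hX : X.Nonempty) :
    ∃ φ : G →* Multiplicative (ZMod 2), Function.Surjective φ ∧
      ∀ g ∈ S, (φ g = Multiplicative.ofAdd (1 : ZMod 2) ↔ g ∈ X) := by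
  classical
  choose! ψ hψ_self hψ_ne using exists_dual_character m hcard S hSgen hSmin
  have hfin : X.Finite := X.toFinite
  have key : ∀ g ∈ S, ((∏ x ∈ hfin.toFinset, ψ x) g = Multiplicative.ofAdd (1 : ZMod 2) ↔
      g ∈ X) := by
    intro g hg
    rw [MonoidHom.finsetProd_apply]
    by_cases hgX : g ∈ X
    · rw [Finset.prod_eq_single_of_mem g (hfin.mem_toFinset.2 hgX)
        fun x hx hxg => hψ_ne x (hXS (hfin.mem_toFinset.1 hx)) g hg hxg.symm]
      exact iff_of_true (hψ_self g hg) hgX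
    · rw [Finset.prod_eq_one fun x hx => hψ_ne x (hXS (hfin.mem_toFinset.1 hx)) g hg
        fun h => hgX (h ▸ hfin.mem_toFinset.1 hx)]
      exact iff_of_false (by decide) hgX
  refine ⟨_, fun y => ?_, key⟩
  obtain ⟨x, hx⟩ := hX
  have hy : y = 1 ∨ y = Multiplicative.ofAdd (1 : ZMod 2) := by
    revert y; decide
  rcases hy with rfl | rfl
  · exact ⟨1, map_one _⟩
  · exact ⟨x, (key x (hXS hx)).2 hx⟩
end

section
/- Let G be a group generated by three pairwise distinct involutions s₀, s₁, s₂ (each sᵢ ≠ 1 and sᵢ² = 1, and Subgroup.closure {s₀, s₁, s₂} = ⊤) satisfying the string condition that s₀ commutes with s₂. If Subgroup.closure {s₀, s₁} ⊓ Subgroup.closure {s₁, s₂} = Subgroup.closure {s₁}, then G satisfies the full intersection condition: for all subsets J, K ⊆ {0, 1, 2}, Subgroup.closure {sⱼ : j ∈ J} ⊓ Subgroup.closure {sₖ : k ∈ K} = Subgroup.closure {sᵢ : i ∈ J ∩ K}. -/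
/-!
Write `H_J` for the subgroup generated by the `s j` with `j ∈ J`.

The hypothesis `H_{0,1} ⊓ H_{1,2} = H_{1}` makes the generators independent: if `s 2 ∈ H_{0,1}`,
then `s 2` lies in `H_{1} = {1, s 1}`, which is impossible; the same goes for `s 0 ∈ H_{1,2}`.
Since `s 0` and `s 2` commute, `H_{0,2} = {1, s 0, s 2, s 0 * s 2}`, and `s 1` in this group would
again force `s 2 = s 0 * s 1 ∈ H_{0,1}`.

If `J` and `K` are comparable the claim is trivial. Otherwise one of them is a singleton, and
independence applies because `H_{i} = {1, s i}`, or both are pairs. The pairs other than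
`{0,1}, {1,2}` involve the Klein four-group `H_{0,2}`, whose intersection with a subgroup that
contains one of the two generators and not the other is computed by `closure_pair_inf`.
-/

theorem mem_closure_involution {G : Type*} [Group G] {a x : G} (ha : a ^ 2 = 1)
    (hx : x ∈ Subgroup.closure {a}) : x = 1 ∨ x = a := by
  have haa : a * a = 1 := by rw [← sq, ha]
  have hai : a⁻¹ = a := inv_eq_of_mul_eq_one_left haa
  induction hx using Subgroup.closure_induction with
  | mem y hy => exact Or.inr hy
  | one => exact Or.inl rfl
  | mul y z _ _ hy hz => rcases hy with rfl | rfl <;> rcases hz with rfl | rfl <;> simp [haa]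
  | inv y _ hy => rcases hy with rfl | rfl <;> simp [hai]

theorem mem_closure_commuting_pair {G : Type*} [Group G] {a b x : G} (ha : a ^ 2 = 1)
    (hb : b ^ 2 = 1) (hab : Commute a b) (hx : x ∈ Subgroup.closure {a, b}) :
    ∃ y ∈ Subgroup.closure {a}, x = y ∨ x = y * b := by
  have hbb : b * b = 1 := by rw [← sq, hb]
  have hbi : b⁻¹ = b := inv_eq_of_mul_eq_one_left hbb
  have hcomm : ∀ y ∈ Subgroup.closure {a}, b * y = y * b := by
    intro y hy
    rcases mem_closure_involution ha hy with rfl | rfl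
    · simp
    · exact hab.eq.symm
  induction hx using Subgroup.closure_induction with
  | mem y hy =>
    rcases hy with rfl | rfl
    · exact ⟨y, Subgroup.subset_closure rfl, Or.inl rfl⟩
    · exact ⟨1, one_mem _, Or.inr (one_mul _).symm⟩
  | one => exact ⟨1, one_mem _, Or.inl rfl⟩
  | mul y z _ _ hy hz =>
    obtain ⟨u, hu, hy⟩ := hy
    obtain ⟨v, hv, hz⟩ := hz
    refine ⟨u * v, mul_mem hu hv, ?_⟩
    have hc := hcomm v hv
    rcases hy with rfl | rfl <;> rcases hz with rfl | rfl
    · exact Or.inl rfl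
    · exact Or.inr (mul_assoc _ _ _).symm
    · exact Or.inr (by rw [mul_assoc, hc, mul_assoc])
    · exact Or.inl (by rw [mul_assoc, ← mul_assoc b, hc, mul_assoc v, hbb, mul_one])
  | inv y _ hy =>
    obtain ⟨u, hu, hy⟩ := hy
    refine ⟨u⁻¹, inv_mem hu, ?_⟩
    rcases hy with rfl | rfl
    · exact Or.inl rfl
    · exact Or.inr (by rw [mul_inv_rev, hbi, hcomm _ (inv_mem hu)])

theorem closure_pair_inf {G : Type*} [Group G] {a b : G} (ha : a ^ 2 = 1) (hb : b ^ 2 = 1)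
    (hab : Commute a b) {H : Subgroup G} (haH : a ∈ H) (hbH : b ∉ H) :
    Subgroup.closure {a, b} ⊓ H = Subgroup.closure {a} := by
  have hle : Subgroup.closure {a} ≤ H := by simpa using haH
  refine le_antisymm ?_ (le_inf (Subgroup.closure_mono (by simp)) hle)
  rintro x ⟨hx, hxH⟩
  obtain ⟨y, hy, rfl | rfl⟩ := mem_closure_commuting_pair ha hb hab hx
  · exact hy
  · exact absurd ((H.mul_mem_cancel_left (hle hy)).1 hxH) hbH

/-- A group generated by three pairwise distinct involutions
s₀, s₁, s₂ with s₀ commuting with s₂ satisfies the full intersection condition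
provided ⟨s₀, s₁⟩ ⊓ ⟨s₁, s₂⟩ = ⟨s₁⟩. -/
theorem stmt_2 {G : Type*} [Group G] (s : Fin 3 → G)
    (hne : ∀ i, s i ≠ 1) (hinv : ∀ i, (s i) ^ 2 = 1)
    (hdist : Function.Injective s)
    (hgen : Subgroup.closure (Set.range s) = ⊤)
    (hstring : Commute (s 0) (s 2))
    (h : Subgroup.closure {s 0, s 1} ⊓ Subgroup.closure {s 1, s 2} =
      Subgroup.closure {s 1}) :
    ∀ J K : Set (Fin 3),
      Subgroup.closure (s '' J) ⊓ Subgroup.closure (s '' K) =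
        Subgroup.closure (s '' (J ∩ K)) := by
  have h1 : ∀ i, i ≠ 1 → s i ∉ Subgroup.closure {s 1} := fun i hi hx =>
    (mem_closure_involution (hinv 1) hx).elim (hne i) fun he => hi (hdist he)
  have n2 : s 2 ∉ Subgroup.closure {s 0, s 1} := fun hx =>
    h1 2 (by decide) (h ▸ ⟨hx, Subgroup.subset_closure (by simp)⟩)
  have n0 : s 0 ∉ Subgroup.closure {s 1, s 2} := fun hx =>
    h1 0 (by decide) (h ▸ ⟨Subgroup.subset_closure (by simp), hx⟩)
  have n1 : s 1 ∉ Subgroup.closure {s 0, s 2} := by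
    intro hx
    obtain ⟨y, hy, he | he⟩ := mem_closure_commuting_pair (hinv 0) (hinv 2) hstring hx
    · rcases mem_closure_involution (hinv 0) (he ▸ hy) with he | he
      · exact hne 1 he
      · exact absurd (hdist he) (by decide)
    · have hy' : y ∈ Subgroup.closure {s 0, s 1} := Subgroup.closure_mono (by simp) hy
      have hs1 : s 1 ∈ Subgroup.closure {s 0, s 1} := Subgroup.subset_closure (by simp)
      have hyb : y * s 2 ∈ Subgroup.closure {s 0, s 1} := by
        rwa [← he]
      exact n2 ((Subgroup.mul_mem_cancel_left _ hy').1 hyb)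
  have indep : ∀ i, ∀ K : Set (Fin 3), i ∉ K → s i ∉ Subgroup.closure (s '' K) := by
    have key : ∀ i a b : Fin 3, (∀ l, l ≠ i → l = a ∨ l = b) →
        s i ∉ Subgroup.closure {s a, s b} →
        ∀ K : Set (Fin 3), i ∉ K → s i ∉ Subgroup.closure (s '' K) := by
      intro i a b hl hn K hK hx
      refine hn (Subgroup.closure_mono ?_ hx)
      rintro _ ⟨l, hlK, rfl⟩
      rcases hl l (fun e => hK (e ▸ hlK)) with rfl | rfl <;> simp
    intro i
    fin_cases i
    · exact key 0 1 2 (by decide) n0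
    · exact key 1 0 2 (by decide) n1
    · exact key 2 0 1 (by decide) n2
  have single : ∀ i, ∀ K : Set (Fin 3), i ∉ K →
      Subgroup.closure {s i} ⊓ Subgroup.closure (s '' K) = ⊥ := by
    intro i K hK
    rw [eq_bot_iff]
    rintro x ⟨hx, hxK⟩
    rcases mem_closure_involution (hinv i) hx with rfl | rfl
    · exact one_mem _
    · exact absurd hxK (indep i K hK)
  have p0 : Subgroup.closure {s 2, s 0} ⊓ Subgroup.closure {s 1, s 0} =
      Subgroup.closure {s 0} := by
    rw [Set.pair_comm (s 2)]
    exact closure_pair_inf (hinv 0) (hinv 2) hstring (Subgroup.subset_closure (by simp))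
      (by rwa [Set.pair_comm])
  have p2 : Subgroup.closure {s 0, s 2} ⊓ Subgroup.closure {s 1, s 2} =
      Subgroup.closure {s 2} := by
    rw [Set.pair_comm (s 0)]
    exact closure_pair_inf (hinv 2) (hinv 0) hstring.symm (Subgroup.subset_closure (by simp)) n0
  have p1 : Subgroup.closure {s 0, s 1} ⊓ Subgroup.closure {s 2, s 1} =
      Subgroup.closure {s 1} := by rwa [Set.pair_comm (s 2)]
  have pair : ∀ i j k : Fin 3, i ≠ j → k ≠ i → k ≠ j →
      Subgroup.closure {s i, s k} ⊓ Subgroup.closure {s j, s k} = Subgroup.closure {s k} := by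
    intro i j k
    fin_cases i <;> fin_cases j <;> fin_cases k <;> intro hij hki hkj <;>
      first
      | exact absurd rfl hij
      | exact absurd rfl hki
      | exact absurd rfl hkj
      | assumption
      | (rw [inf_comm]; assumption)
  intro J K
  by_cases hJK : J ⊆ K
  · rw [Set.inter_eq_left.2 hJK, inf_eq_left.2 (Subgroup.closure_mono (Set.image_mono hJK))]
  by_cases hKJ : K ⊆ J
  · rw [Set.inter_eq_right.2 hKJ, inf_eq_right.2 (Subgroup.closure_mono (Set.image_mono hKJ))]
  obtain ⟨i, hiJ, hiK⟩ := Set.not_subset.1 hJK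
  obtain ⟨j, hjK, hjJ⟩ := Set.not_subset.1 hKJ
  have hij : i ≠ j := fun e => hiK (e ▸ hjK)
  obtain ⟨k, hki, hkj, hall⟩ : ∃ k, k ≠ i ∧ k ≠ j ∧ ∀ l, l = i ∨ l = j ∨ l = k := by
    have third : ∀ i j : Fin 3, i ≠ j → ∃ k, k ≠ i ∧ k ≠ j ∧ ∀ l, l = i ∨ l = j ∨ l = k := by
      decide
    exact third i j hij
  by_cases hkJ : k ∈ J
  · by_cases hkK : k ∈ K
    · have eJ : J = {i, k} := by ext l; rcases hall l with rfl | rfl | rfl <;> grind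
      have eK : K = {j, k} := by ext l; rcases hall l with rfl | rfl | rfl <;> grind
      have eI : J ∩ K = {k} := by ext l; rcases hall l with rfl | rfl | rfl <;> grind
      rw [eI, eJ, eK, Set.image_pair, Set.image_pair, Set.image_singleton]
      exact pair i j k hij hki hkj
    · have eK : K = {j} := by ext l; rcases hall l with rfl | rfl | rfl <;> grind
      have eI : J ∩ K = ∅ := by ext l; rcases hall l with rfl | rfl | rfl <;> grind
      rw [eI, eK, Set.image_singleton, inf_comm, single j J hjJ]
      simp
  · have eJ : J = {i} := by ext l; rcases hall l with rfl | rfl | rfl <;> grind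
    have eI : J ∩ K = ∅ := by ext l; rcases hall l with rfl | rfl | rfl <;> grind
    rw [eI, eJ, Set.image_singleton, single i K hiK]
    simp
end

section
/- Let G be a finite group with Nat.card G = 2^m for some m ≥ 2 and Monoid.exponent G = 2^(m−1), and suppose (G, s) is a string C-group of rank n for some n ≥ 1 and s : Fin n → G. Then G is isomorphic to the dihedral group DihedralGroup (2^(m−1)) of order 2^m. -/
/-!
A group of order `2 ^ m` and exponent `2 ^ (m - 1)` that is generated by involutions is dihedral.

A finite `p`-group attains its exponent, so there is `g` of order `2 ^ (m - 1)`, and `C = ⟨g⟩` has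
index two.  As the generators do not all lie in `C`, one of them, `t`, lies outside.  Let `A` be
the subgroup of those `x ∈ C` that `t` inverts by conjugation.  Then `A ∪ tA` is a subgroup, and
it contains every involution: an involution `x ∉ C` satisfies `t * x ∈ C` and
`t (t x) t⁻¹ = (t x)⁻¹`, while the unique involution of the cyclic group `C` is centralised, hence
inverted, by `t`.  So `A ∪ tA = G`, which forces `g ∈ A` (`conj_eq_inv_of_closure_involutions`).
The relations `g ^ N = 1`, `t ^ 2 = 1` and `t g t⁻¹ = g⁻¹` then give the isomorphism with the
dihedral group (`nonempty_mulEquiv_dihedralGroup`).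
-/

/-- `(G, s)` is a string C-group: `s` is an injective family of involutions
generating `G`, satisfying the string condition and the intersection condition. -/
def IsStringCGroup {G : Type*} [Group G] {n : ℕ} (s : Fin n → G) : Prop :=
  Function.Injective s ∧
  (∀ i, s i ≠ 1 ∧ (s i) ^ 2 = 1) ∧
  Subgroup.closure (Set.range s) = ⊤ ∧
  (∀ i j : Fin n, (i : ℕ) + 2 ≤ (j : ℕ) → Commute (s i) (s j)) ∧
  (∀ J K : Set (Fin n),
    Subgroup.closure (s '' J) ⊓ Subgroup.closure (s '' K) =
      Subgroup.closure (s '' (J ∩ K)))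

/-- A string C-group is connected if adjacent generators have product of order > 2. -/
def IsConnectedFamily {G : Type*} [Group G] {n : ℕ} (s : Fin n → G) : Prop :=
  ∀ (i : ℕ) (h1 : i < n) (h2 : i + 1 < n), 2 < orderOf (s ⟨i, h1⟩ * s ⟨i + 1, h2⟩)

/-- A group of order `2 * N` containing an element `g` of order `N` and an involution outside `⟨g⟩`
that inverts `g` is dihedral. -/
lemma nonempty_mulEquiv_dihedralGroup {G : Type*} [Group G] [Finite G] {N : ℕ} [NeZero N]
    {g t : G} (hcard : Nat.card G = 2 * N) (hg : orderOf g = N)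
    (ht : t * t = 1) (htC : t ∉ Subgroup.zpowers g) (hconj : t * g * t⁻¹ = g⁻¹) :
    Nonempty (G ≃* DihedralGroup N) := by
  have key : ∀ a : ℤ, g ^ ((a : ZMod N).val) = g ^ a := by
    intro a
    rw [← zpow_natCast, zpow_eq_zpow_iff_modEq, hg, ← ZMod.intCast_eq_intCast_iff]
    simp
  have tinv : t⁻¹ = t := inv_eq_of_mul_eq_one_right ht
  have hc : ∀ a : ℤ, t * g ^ a * t = g ^ (-a) := by
    intro a
    have h := conj_zpow (i := a) (a := t) (b := g)
    rw [hconj, tinv, inv_zpow] at h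
    rw [← h, zpow_neg]
  have hc' : ∀ a : ℤ, g ^ a * t = t * g ^ (-a) := by
    intro a
    rw [← hc a, ← mul_assoc, ← mul_assoc, ht, one_mul]
  let f : DihedralGroup N → G := fun x => match x with
    | .r i => g ^ i.val
    | .sr i => t * g ^ i.val
  have fr : ∀ a : ℤ, f (.r (a : ZMod N)) = g ^ a := key
  have fs : ∀ a : ℤ, f (.sr (a : ZMod N)) = t * g ^ a := fun a => congrArg (t * ·) (key a)
  have fmul : ∀ x y, f (x * y) = f x * f y := by
    rintro (i | i) (j | j) <;> obtain ⟨a, rfl⟩ := ZMod.intCast_surjective i <;>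
      obtain ⟨b, rfl⟩ := ZMod.intCast_surjective j
    · rw [DihedralGroup.r_mul_r, ← Int.cast_add, fr, fr, fr, zpow_add]
    · rw [DihedralGroup.r_mul_sr, ← Int.cast_sub, fr, fs, fs, ← mul_assoc, hc', mul_assoc,
        ← zpow_add, neg_add_eq_sub]
    · rw [DihedralGroup.sr_mul_r, ← Int.cast_add, fr, fs, fs, mul_assoc, zpow_add]
    · rw [DihedralGroup.sr_mul_sr, ← Int.cast_sub, fr, fs, fs, ← mul_assoc, hc,
        ← zpow_add, neg_add_eq_sub]
  let F : DihedralGroup N →* G := MonoidHom.mk' f fmul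
  have hinj : Function.Injective F := by
    rw [injective_iff_map_eq_one]
    rintro (i | i) h <;> obtain ⟨a, rfl⟩ := ZMod.intCast_surjective i
    · have h1 : g ^ a = 1 := (fr a).symm.trans h
      rw [← orderOf_dvd_iff_zpow_eq_one, hg] at h1
      rw [(ZMod.intCast_zmod_eq_zero_iff_dvd a N).2 h1, DihedralGroup.r_zero]
    · have h1 : t * g ^ a = 1 := (fs a).symm.trans h
      refine absurd ?_ htC
      rw [mul_eq_one_iff_eq_inv.1 h1]
      exact inv_mem (Subgroup.zpow_mem_zpowers g a)
  have hbij : Function.Bijective F :=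
    hinj.bijective_of_nat_card_le (by rw [hcard, DihedralGroup.nat_card])
  exact ⟨(MulEquiv.ofBijective F hbij).symm⟩

/-- The only solutions of `x ^ 2 = 1` in a cyclic group of order `2 * M` are `1` and `g ^ M`. -/
lemma eq_one_or_eq_pow_of_mem_zpowers {G : Type*} [Group G] {M : ℕ} {g x : G}
    (hg : orderOf g = 2 * M) (hx : x ∈ Subgroup.zpowers g) (hx2 : x * x = 1) :
    x = 1 ∨ x = g ^ M := by
  obtain ⟨a, rfl⟩ := Subgroup.mem_zpowers_iff.1 hx
  rw [← zpow_add, ← orderOf_dvd_iff_zpow_eq_one, hg] at hx2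
  have hgM : (g ^ (M : ℤ)) ^ (2 : ℤ) = 1 := by
    rw [← zpow_mul, ← orderOf_dvd_iff_zpow_eq_one, hg]
    exact ⟨1, by push_cast; ring⟩
  obtain ⟨b, hb⟩ := hx2
  have ha : a = M * b := by push_cast at hb; linarith
  subst ha
  rw [zpow_mul, ← zpow_natCast]
  obtain ⟨c, rfl | rfl⟩ := Int.even_or_odd' b
  · left; rw [zpow_mul, hgM, one_zpow]
  · right; rw [zpow_add, zpow_mul, hgM, one_zpow, one_mul, zpow_one]

/-- If a set `S` of elements squaring to `1` generates `G`, and `⟨g⟩` has index two and even order,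
then every `t ∈ S` outside `⟨g⟩` inverts `g`. -/
lemma conj_eq_inv_of_closure_involutions {G : Type*} [Group G] {M : ℕ} {g t : G} {S : Set G}
    (hg : orderOf g = 2 * M) (hidx : (Subgroup.zpowers g).index = 2)
    (hS : ∀ x ∈ S, x * x = 1) (hgen : Subgroup.closure S = ⊤)
    (htS : t ∈ S) (htC : t ∉ Subgroup.zpowers g) : t * g * t⁻¹ = g⁻¹ := by
  have ht := hS t htS
  have tinv : t⁻¹ = t := inv_eq_of_mul_eq_one_right ht
  have hnorm : (Subgroup.zpowers g).Normal := Subgroup.normal_of_index_eq_two hidx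
  have hcomm : ∀ x ∈ Subgroup.zpowers g, ∀ y ∈ Subgroup.zpowers g, x * y = y * x := by
    intro x hx y hy
    obtain ⟨a, rfl⟩ := Subgroup.mem_zpowers_iff.1 hx
    obtain ⟨b, rfl⟩ := Subgroup.mem_zpowers_iff.1 hy
    exact (Commute.refl g).zpow_zpow a b
  -- the subgroup of elements of `⟨g⟩` inverted by `t`
  let A : Subgroup G :=
    { carrier := {x | x ∈ Subgroup.zpowers g ∧ t * x * t⁻¹ = x⁻¹}
      one_mem' := ⟨one_mem _, by simp⟩
      mul_mem' := by
        rintro x y ⟨hx, hx'⟩ ⟨hy, hy'⟩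
        refine ⟨mul_mem hx hy, ?_⟩
        rw [conj_mul.symm, hx', hy', hcomm x hx y hy, mul_inv_rev]
      inv_mem' := by
        rintro x ⟨hx, hx'⟩
        exact ⟨inv_mem hx, by rw [conj_inv.symm, hx']⟩ }
  have hconjA : ∀ x ∈ A, t * x * t⁻¹ ∈ A := by
    intro x hx
    rw [hx.2]
    exact inv_mem hx
  have hSA : ∀ x ∈ S, x ∈ A ∨ t * x ∈ A := by
    intro x hx
    have hx2 := hS x hx
    have xinv : x⁻¹ = x := inv_eq_of_mul_eq_one_right hx2
    by_cases hxC : x ∈ Subgroup.zpowers g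
    · refine Or.inl ⟨hxC, ?_⟩
      rw [xinv]
      rcases eq_one_or_eq_pow_of_mem_zpowers hg hxC hx2 with h | h
      · simp [h]
      · rcases eq_one_or_eq_pow_of_mem_zpowers hg (hnorm.conj_mem x hxC t)
          (by rw [conj_mul, hx2]; simp) with h' | h'
        · rw [conj_eq_one_iff] at h'
          simp [h']
        · rw [h', h]
    · refine Or.inr ⟨?_, ?_⟩
      · rw [Subgroup.mul_mem_iff_of_index_two hidx]
        tauto
      · rw [mul_inv_rev, xinv, ← mul_assoc, ht, one_mul]
  have hall : ∀ x : G, x ∈ A ∨ t * x ∈ A := by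
    intro x
    have hx : x ∈ Subgroup.closure S := hgen ▸ Subgroup.mem_top x
    -- if `t * x ∈ A` then also `x * t = t * (t * x) * t⁻¹ ∈ A`
    have hflip : ∀ y, t * y ∈ A → y * t ∈ A := by
      intro y hy
      have h := hconjA _ hy
      rwa [← mul_assoc, ht, one_mul, tinv] at h
    induction hx using Subgroup.closure_induction with
    | mem x hx => exact hSA x hx
    | one => exact Or.inl (one_mem _)
    | mul x y _ _ ihx ihy =>
      rcases ihx with hx | hx <;> rcases ihy with hy | hy
      · exact Or.inl (mul_mem hx hy)
      · right
        have h := mul_mem (hconjA x hx) hy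
        rwa [show t * x * t⁻¹ * (t * y) = t * (x * y) by group] at h
      · right
        rw [← mul_assoc]
        exact mul_mem hx hy
      · left
        have h := mul_mem (hflip x hx) hy
        rwa [show x * t * (t * y) = x * (t * t) * y by group, ht, mul_one] at h
    | inv x _ ihx =>
      rcases ihx with hx | hx
      · exact Or.inl (inv_mem hx)
      · right
        have h := inv_mem (hflip x hx)
        rwa [mul_inv_rev, tinv] at h
  rcases hall g with h | h
  · exact h.2
  · exact absurd ((Subgroup.mul_mem_cancel_right _ (Subgroup.mem_zpowers g)).1 h.1) htC

/-- A string C-group of order 2^m (m ≥ 2) and exponent 2^(m-1) is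
isomorphic to the dihedral group of order 2^m. -/
theorem stmt_4 {G : Type*} [Group G] [Finite G] (m n : ℕ) (hm : 2 ≤ m) (hn : 1 ≤ n)
    (hcard : Nat.card G = 2 ^ m) (hexp : Monoid.exponent G = 2 ^ (m - 1))
    (s : Fin n → G) (hs : IsStringCGroup s) :
    Nonempty (G ≃* DihedralGroup (2 ^ (m - 1))) := by
  obtain ⟨-, hinv, hgen, -, -⟩ := hs
  obtain ⟨k, rfl⟩ : ∃ k, m = k + 2 := ⟨m - 2, by omega⟩
  rw [show k + 2 - 1 = k + 1 by omega] at hexp ⊢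
  obtain ⟨g, hg⟩ := Nat.prime_two.exists_orderOf_eq_pow_factorization_exponent G
  rw [hexp, Nat.prime_two.factorization_pow, Finsupp.single_eq_same] at hg
  have hidx : (Subgroup.zpowers g).index = 2 := by
    have h := (Subgroup.zpowers g).card_mul_index
    rw [Nat.card_zpowers, hg, hcard, pow_succ 2 (k + 1)] at h
    exact Nat.eq_of_mul_eq_mul_left (by positivity) h
  have hsq : ∀ x ∈ Set.range s, x * x = 1 := by
    rintro _ ⟨i, rfl⟩
    rw [← pow_two, (hinv i).2]
  obtain ⟨t, htS, htC⟩ : ∃ t ∈ Set.range s, t ∉ Subgroup.zpowers g := by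
    by_contra! h
    have htop : Subgroup.zpowers g = ⊤ := top_le_iff.1 (hgen ▸ (Subgroup.closure_le _).2 h)
    rw [htop, Subgroup.index_top] at hidx
    omega
  exact nonempty_mulEquiv_dihedralGroup (by rw [hcard]; ring) hg (hsq t htS) htC
    (conj_eq_inv_of_closure_involutions (M := 2 ^ k) (by rw [hg]; ring) hidx hsq hgen htS htC)
end

section
/- Let G be a finite group with Nat.card G = 2^m for some m ≥ 3 and Monoid.exponent G = 2^(m−2), and suppose (G, s) is a string C-group of rank n for some n ≥ 1 and s : Fin n → G. Then (G, s) is disconnected (some adjacent pair s i, s (i+1) commutes) and G is isomorphic to DihedralGroup (2^(m−2)) × Multiplicative (ZMod 2). -/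
/-- Two elements with trivial squares whose product has order dividing `k` define a homomorphism
from the dihedral group of order `2 * k` whose range is the subgroup they generate. -/
theorem exists_dihedralGroup_hom {G : Type*} [Group G] {a b : G} {k : ℕ}
    (ha : a ^ 2 = 1) (hb : b ^ 2 = 1) (hab : (a * b) ^ k = 1) :
    ∃ f : DihedralGroup k →* G, f.range = Subgroup.closure {a, b} := by
  have hainv : a⁻¹ = a := inv_eq_of_mul_eq_one_right (by rw [← sq, ha])
  have hbinv : b⁻¹ = b := inv_eq_of_mul_eq_one_right (by rw [← sq, hb])
  let e : ZMod k →+ Additive G := ZMod.lift k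
    ⟨zmultiplesHom (Additive G) (Additive.ofMul (a * b)), by
      rw [zmultiplesHom_apply, natCast_zsmul, ← ofMul_pow, hab, ofMul_one]⟩
  let p : ZMod k → G := fun i => (e i).toMul
  have hp_add (i j : ZMod k) : p (i + j) = p i * p j := by simp [p]
  have hp_zero : p 0 = 1 := by simp [p]
  have hp_int (i : ℤ) : p i = (a * b) ^ i := by
    simp only [p, e, ZMod.lift_coe, zmultiplesHom_apply, toMul_zsmul, toMul_ofMul]
  -- Conjugation by `a` inverts every power of `a * b`.
  have hp_conj (i : ZMod k) : p i * a = a * p (-i) := by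
    obtain ⟨i, rfl⟩ := ZMod.intCast_surjective i
    have h : a * (a * b) ^ (-i) * a⁻¹ = (a * b) ^ i := by
      rw [← conj_zpow, zpow_neg, ← inv_zpow]
      congr 1
      simp [hainv, hbinv, mul_assoc, ← sq, ha]
    have h' := hp_int (-i)
    push_cast at h'
    rw [hp_int, h', ← h]
    group
  have haa : a * a = 1 := by rw [← sq, ha]
  let f : DihedralGroup k →* G := MonoidHom.mk'
    (fun g => match g with
      | .r i => p i
      | .sr i => a * p i) (by
      rintro (i | i) (j | j)
      · exact hp_add i j
      · change a * p (j - i) = p i * (a * p j)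
        rw [← mul_assoc, hp_conj, mul_assoc, ← hp_add, neg_add_eq_sub]
      · change a * p (i + j) = a * p i * p j
        rw [hp_add, mul_assoc]
      · change p (j - i) = a * p i * (a * p j)
        rw [mul_assoc, ← mul_assoc (p i), hp_conj, mul_assoc, ← mul_assoc a a, haa, one_mul,
          ← hp_add, neg_add_eq_sub])
  have hp_one : p 1 = a * b := by simpa using hp_int 1
  refine ⟨f, le_antisymm ?_ ?_⟩
  · have hca : a ∈ Subgroup.closure {a, b} := Subgroup.subset_closure (by simp)
    have hcb : b ∈ Subgroup.closure {a, b} := Subgroup.subset_closure (by simp)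
    have hcp (i : ZMod k) : p i ∈ Subgroup.closure {a, b} := by
      obtain ⟨i, rfl⟩ := ZMod.intCast_surjective i
      rw [hp_int]
      exact Subgroup.zpow_mem _ (mul_mem hca hcb) i
    rintro _ ⟨i | i, rfl⟩
    · exact hcp i
    · exact mul_mem hca (hcp i)
  · rw [Subgroup.closure_le]
    rintro g (rfl | rfl)
    · refine ⟨.sr 0, ?_⟩
      change g * p 0 = g
      rw [hp_zero, mul_one]
    · refine ⟨.sr 1, ?_⟩
      change a * p 1 = g
      rw [hp_one, ← mul_assoc, haa, one_mul]

/-- A group generated by `a`, `b`, `c` with trivial squares, where `c` commutes with `a` and `b`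
and `a * b` has order dividing `k`, is a quotient of `DihedralGroup k × Multiplicative (ZMod 2)`;
if its order is `4 * k`, the quotient map is an isomorphism. -/
theorem nonempty_mulEquiv_of_commute {G : Type*} [Group G] [Finite G] {a b c : G} {k : ℕ}
    (ha : a ^ 2 = 1) (hb : b ^ 2 = 1) (hc : c ^ 2 = 1) (hab : (a * b) ^ k = 1)
    (hca : Commute a c) (hcb : Commute b c) (hgen : Subgroup.closure {a, b, c} = ⊤)
    (hcard : Nat.card G = 4 * k) :
    Nonempty (G ≃* DihedralGroup k × Multiplicative (ZMod 2)) := by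
  obtain ⟨f, hf⟩ := exists_dihedralGroup_hom ha hb hab
  let g : Multiplicative (ZMod 2) →* G := AddMonoidHom.toMultiplicativeLeft (ZMod.lift 2
    ⟨zmultiplesHom (Additive G) (Additive.ofMul c), by
      rw [zmultiplesHom_apply, natCast_zsmul, ← ofMul_pow, hc, ofMul_one]⟩)
  have hg (i : ℤ) : g (Multiplicative.ofAdd (i : ZMod 2)) = c ^ i := by
    simp [g]
  have hcomm (x : DihedralGroup k) (y : Multiplicative (ZMod 2)) : Commute (f x) (g y) := by
    obtain ⟨i, hi⟩ := ZMod.intCast_surjective y.toAdd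
    have hy : g y = c ^ i := by rw [← hg, hi, ofAdd_toAdd]
    have hx : f x ∈ Subgroup.closure {a, b} := hf ▸ ⟨x, rfl⟩
    have hle : Subgroup.closure {a, b} ≤ Subgroup.centralizer {c} := by
      rw [Subgroup.closure_le]
      rintro z (rfl | rfl)
      · exact Subgroup.mem_centralizer_singleton_iff.2 hca.eq
      · exact Subgroup.mem_centralizer_singleton_iff.2 hcb.eq
    have hxc : Commute (f x) c := Subgroup.mem_centralizer_singleton_iff.1 (hle hx)
    rw [hy]
    exact hxc.zpow_right i
  let h : DihedralGroup k × Multiplicative (ZMod 2) →* G := f.noncommCoprod g hcomm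
  have hfr (x : G) (hx : x ∈ f.range) : x ∈ h.range := by
    obtain ⟨y, rfl⟩ := hx
    exact ⟨(y, 1), by simp [h]⟩
  have hsurj : Function.Surjective h := by
    rw [← MonoidHom.range_eq_top, eq_top_iff, ← hgen, Subgroup.closure_le]
    rintro z (rfl | rfl | rfl)
    · exact hfr _ (hf ▸ Subgroup.subset_closure (by simp))
    · exact hfr _ (hf ▸ Subgroup.subset_closure (by simp))
    · exact ⟨(1, Multiplicative.ofAdd 1), by simpa [h] using hg 1⟩
  have hk : 0 < k := by
    have := Nat.card_pos (α := G)
    omega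
  have : NeZero k := ⟨hk.ne'⟩
  have hcards : Nat.card (DihedralGroup k × Multiplicative (ZMod 2)) = Nat.card G := by
    rw [Nat.card_prod, DihedralGroup.nat_card, hcard, Nat.card_congr Multiplicative.toAdd,
      Nat.card_zmod]
    ring
  exact ⟨(MulEquiv.ofBijective h ((Nat.bijective_iff_surjective_and_card h).2
    ⟨hsurj, hcards⟩)).symm⟩

/-- The intersection condition makes the generating family irredundant. In a `2`-group each `s i`
is therefore avoided by an index-two subgroup containing all the other generators. -/
theorem IsStringCGroup.exists_index_two {G : Type*} [Group G] [Finite G] {n : ℕ} {s : Fin n → G}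
    (hs : IsStringCGroup s) (hG : IsPGroup 2 G) (i : Fin n) :
    ∃ M : Subgroup G, M.index = 2 ∧ s i ∉ M ∧ ∀ j, j ≠ i → s j ∈ M := by
  obtain ⟨-, hinv, hgen, -, hint⟩ := hs
  have hne : Subgroup.closure (s '' {i}ᶜ) ≠ ⊤ := by
    intro h
    have h1 := hint {i}ᶜ {i}
    rw [h, top_inf_eq, Set.compl_inter_self, Set.image_empty, Subgroup.closure_empty,
      Set.image_singleton] at h1
    exact (hinv i).1 (Subgroup.mem_bot.1 (h1 ▸ Subgroup.subset_closure (Set.mem_singleton _)))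
  obtain ⟨M, hM, hle⟩ := (eq_top_or_exists_le_coatom _).resolve_left hne
  have hmem (j : Fin n) (hj : j ≠ i) : s j ∈ M :=
    hle (Subgroup.subset_closure ⟨j, hj, rfl⟩)
  have hnot : s i ∉ M := by
    intro hi
    refine hM.1 (eq_top_iff.2 ?_)
    rw [← hgen, Subgroup.closure_le]
    rintro _ ⟨j, rfl⟩
    by_cases hj : j = i
    · exact hj ▸ hi
    · exact hmem j hj
  have : Group.IsNilpotent G := hG.isNilpotent
  have : M.Normal := Subgroup.NormalizerCondition.normal_of_coatom M Group.normalizerCondition_of_isNilpotent hM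
  refine ⟨M, ?_, hnot, hmem⟩
  -- Modulo `M` the group is generated by the involution `s i`.
  have hcases (g : G) : (g : G ⧸ M) = 1 ∨ (g : G ⧸ M) = (s i : G ⧸ M) := by
    have hg : g ∈ Subgroup.closure (Set.range s) := hgen ▸ Subgroup.mem_top g
    have hsi : (s i : G ⧸ M) * (s i : G ⧸ M) = 1 := by
      rw [← QuotientGroup.mk_mul, ← sq, (hinv i).2, QuotientGroup.mk_one]
    have hsi' : (s i : G ⧸ M)⁻¹ = (s i : G ⧸ M) := inv_eq_of_mul_eq_one_right hsi
    induction hg using Subgroup.closure_induction with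
    | mem x hx =>
      obtain ⟨j, rfl⟩ := hx
      by_cases hj : j = i
      · exact .inr (by rw [hj])
      · exact .inl ((QuotientGroup.eq_one_iff _).2 (hmem j hj))
    | one => exact .inl rfl
    | mul x y _ _ hx hy =>
      rw [QuotientGroup.mk_mul]
      rcases hx with hx | hx <;> rcases hy with hy | hy <;> simp [hx, hy, hsi]
    | inv x _ hx =>
      rw [QuotientGroup.mk_inv]
      rcases hx with hx | hx <;> simp [hx, hsi']
  rw [Subgroup.index_eq_card, Nat.card_eq_two_iff]
  refine ⟨1, (s i : G ⧸ M), fun h => hnot ((QuotientGroup.eq_one_iff _).1 h.symm), ?_⟩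
  rw [Set.eq_univ_iff_forall]
  intro q
  obtain ⟨g, rfl⟩ := QuotientGroup.mk_surjective q
  exact hcases g

/-- The subgroup `K` playing the role of the Frattini subgroup: the string C-group generators form
a basis of the elementary abelian quotient `G ⧸ K`. -/
theorem IsStringCGroup.exists_index_eq {G : Type*} [Group G] [Finite G] {n : ℕ} {s : Fin n → G}
    (hs : IsStringCGroup s) (hG : IsPGroup 2 G) :
    ∃ K : Subgroup G, K.index = 2 ^ n ∧ (∀ g, g ^ 2 ∈ K) ∧ ∀ i, s i ∉ K := by
  choose M hM hnot hmem using hs.exists_index_two hG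
  have hnormal (i : Fin n) : (M i).Normal := Subgroup.normal_of_index_eq_two (hM i)
  let φ : G →* ∀ i, G ⧸ M i := MonoidHom.pi fun i => QuotientGroup.mk' (M i)
  have hφ (g : G) (i : Fin n) : φ g i = (g : G ⧸ M i) := rfl
  have hsingle (i : Fin n) : φ (s i) = Pi.mulSingle i (s i : G ⧸ M i) := by
    funext j
    rw [hφ]
    by_cases hj : j = i
    · subst hj
      simp
    · rw [Pi.mulSingle_eq_of_ne hj]
      exact (QuotientGroup.eq_one_iff _).2 (hmem j i (Ne.symm hj))
  have hcases (i : Fin n) (q : G ⧸ M i) : q = 1 ∨ q = (s i : G ⧸ M i) := by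
    have h2 : Nat.card (G ⧸ M i) = 2 := by rw [← Subgroup.index_eq_card, hM i]
    have hne : (s i : G ⧸ M i) ≠ 1 := fun h => hnot i ((QuotientGroup.eq_one_iff _).1 h)
    obtain ⟨y, hy, huniq⟩ := (Nat.card_eq_two_iff' (1 : G ⧸ M i)).1 h2
    by_cases hq : q = 1
    · exact .inl hq
    · exact .inr ((huniq q hq).trans (huniq _ hne).symm)
  have hsurj : Function.Surjective φ := by
    rw [← MonoidHom.range_eq_top, eq_top_iff]
    intro q _
    refine Subgroup.pi_mem_of_mulSingle_mem q fun i => ?_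
    rcases hcases i (q i) with h | h
    · rw [h, Pi.mulSingle_one]
      exact one_mem _
    · rw [h, ← hsingle]
      exact ⟨s i, rfl⟩
  refine ⟨φ.ker, ?_, fun g => ?_, fun i hi => ?_⟩
  · rw [Subgroup.index_ker, MonoidHom.range_eq_top.2 hsurj, Subgroup.card_top, Nat.card_pi]
    simp [← Subgroup.index_eq_card, hM]
  · rw [MonoidHom.mem_ker]
    funext i
    exact (QuotientGroup.eq_one_iff _).2 (Subgroup.sq_mem_of_index_two (hM i) g)
  · rw [MonoidHom.mem_ker] at hi
    exact hnot i ((QuotientGroup.eq_one_iff _).1 (congrFun hi i))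

/-- In a `2`-group, every nontrivial element has an involution among its powers. -/
theorem exists_orderOf_eq_two_mem_zpowers {G : Type*} [Group G] [Finite G] (hG : IsPGroup 2 G)
    {u : G} (hu : u ≠ 1) : ∃ z ∈ Subgroup.zpowers u, orderOf z = 2 := by
  obtain ⟨k, hk⟩ := (IsPGroup.iff_orderOf.1 hG) u
  have hk0 : k ≠ 0 := by
    rintro rfl
    exact hu (orderOf_eq_one_iff.1 (by simpa using hk))
  refine ⟨u ^ (orderOf u / 2), Subgroup.pow_mem _ (Subgroup.mem_zpowers u) _, ?_⟩
  exact orderOf_pow_orderOf_div (orderOf_pos u).ne' (hk ▸ dvd_pow_self 2 hk0)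

/-- A string C-group of order 2^m (m ≥ 3) and exponent 2^(m-2) is
disconnected (some adjacent pair of generators commutes) and is isomorphic to
D_{2^(m-2)} × Z_2. -/
theorem stmt_5 {G : Type*} [Group G] [Finite G] (m n : ℕ) (hm : 3 ≤ m) (hn : 1 ≤ n)
    (hcard : Nat.card G = 2 ^ m) (hexp : Monoid.exponent G = 2 ^ (m - 2))
    (s : Fin n → G) (hs : IsStringCGroup s) :
    (∃ (i : ℕ) (h1 : i < n) (h2 : i + 1 < n), Commute (s ⟨i, h1⟩) (s ⟨i + 1, h2⟩)) ∧
      Nonempty (G ≃* DihedralGroup (2 ^ (m - 2)) × Multiplicative (ZMod 2)) := by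
  have hG : IsPGroup 2 G := IsPGroup.of_card hcard
  obtain ⟨K, hKidx, hKsq, hKs⟩ := hs.exists_index_eq hG
  have hpow (g : G) : g ^ 2 ^ (m - 2) = 1 := hexp ▸ Monoid.pow_exponent_eq_one g
  obtain ⟨-, hinv, hgen, hstring, hint⟩ := hs
  obtain ⟨k, rfl⟩ : ∃ k, m = k + 3 := ⟨m - 3, by omega⟩
  have hk2 : k + 3 - 2 = k + 1 := by omega
  rw [hk2] at *
  obtain ⟨x, hx⟩ : ∃ x : G, orderOf x = 2 ^ (k + 1) := by
    obtain ⟨x, hx⟩ := Nat.prime_two.exists_orderOf_eq_pow_factorization_exponent G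
    rw [hexp, Nat.prime_two.factorization_pow, Finsupp.single_eq_same] at hx
    exact ⟨x, hx⟩
  have hx2 : orderOf (x ^ 2) = 2 ^ k := by
    rw [orderOf_pow_of_dvd two_ne_zero (hx ▸ dvd_pow_self 2 k.succ_ne_zero), hx, pow_succ]
    simp
  have hle : Subgroup.zpowers (x ^ 2) ≤ K := (Subgroup.zpowers_le).2 (hKsq x)
  have hKcard : Nat.card K * 2 ^ n = 2 ^ (k + 3) := by
    rw [← hKidx, Subgroup.card_mul_index, hcard]
  have hcardle : 2 ^ k ≤ Nat.card K := by
    rw [← hx2, ← Nat.card_zpowers]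
    exact Subgroup.card_le_of_le hle
  have hn3 : n ≤ 3 := by
    have h : 2 ^ (k + n) ≤ 2 ^ (k + 3) := by
      rw [← hKcard, pow_add]
      exact Nat.mul_le_mul_right _ hcardle
    have := (Nat.pow_le_pow_iff_right (by norm_num)).1 h
    omega
  -- A group generated by two involutions would be a quotient of a dihedral group of half its order.
  have htwo (a b : G) (ha : a ^ 2 = 1) (hb : b ^ 2 = 1) :
      Subgroup.closure {a, b} ≠ ⊤ := by
    intro h
    obtain ⟨f, hf⟩ := exists_dihedralGroup_hom ha hb (hpow (a * b))
    have hsurj : Function.Surjective f := MonoidHom.range_eq_top.1 (hf.trans h)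
    have : NeZero (2 ^ (k + 1)) := ⟨by positivity⟩
    have hcle := Nat.card_le_card_of_surjective f hsurj
    rw [DihedralGroup.nat_card, hcard, ← pow_succ'] at hcle
    have := (Nat.pow_le_pow_iff_right (by norm_num)).1 hcle
    omega
  obtain rfl : n = 3 := by
    by_contra hne
    obtain rfl | rfl : n = 1 ∨ n = 2 := by omega
    · refine htwo (s 0) (s 0) (hinv 0).2 (hinv 0).2 ?_
      rw [← hgen]
      congr 1
      ext g
      simp [Fin.exists_fin_one, eq_comm]
    · refine htwo (s 0) (s 1) (hinv 0).2 (hinv 1).2 ?_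
      rw [← hgen]
      congr 1
      ext g
      simp [Fin.exists_fin_two, eq_comm]
  have h02 : Commute (s 0) (s 2) := hstring 0 2 (by norm_num)
  have hgen3 : Subgroup.closure {s 0, s 1, s 2} = ⊤ := by
    rw [← hgen]
    congr 1
    ext g
    simp [Fin.exists_fin_succ, eq_comm]
  have hcard4 : Nat.card G = 4 * 2 ^ (k + 1) := by
    rw [hcard]
    ring
  have hKeq : Subgroup.zpowers (x ^ 2) = K := by
    refine Subgroup.eq_of_le_of_card_ge hle ?_
    rw [Nat.card_zpowers, hx2]
    have : Nat.card K * 8 = 2 ^ k * 8 := by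
      rw [pow_add] at hKcard
      exact hKcard
    omega
  have hKuniq (z w : G) (hz : z ∈ K) (hw : w ∈ K) (hz2 : orderOf z = 2) (hw2 : orderOf w = 2) :
      z = w := by
    have : IsCyclic K := hKeq ▸ Subgroup.isCyclic_zpowers (x ^ 2)
    obtain ⟨_⟩ := nonempty_fintype K
    have hz2' : orderOf (⟨z, hz⟩ : K) = 2 := by rw [Subgroup.orderOf_mk, hz2]
    have hw2' : orderOf (⟨w, hw⟩ : K) = 2 := by rw [Subgroup.orderOf_mk, hw2]
    have hone := IsCyclic.card_orderOf_eq_totient (α := K) (hz2' ▸ orderOf_dvd_card)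
    rw [Nat.totient_two] at hone
    have h := Finset.card_le_one.1 hone.le ⟨z, hz⟩ (by simpa using hz2) ⟨w, hw⟩ (by simpa using hw2)
    exact congrArg Subtype.val h
  have hcomm : Commute (s 0) (s 1) ∨ Commute (s 1) (s 2) := by
    by_contra! hcon
    have hsq (a b : G) (ha : a ^ 2 = 1) (hb : b ^ 2 = 1) (h : ¬ Commute a b) :
        (a * b) ^ 2 ≠ 1 := by
      intro h1
      refine h ?_
      have hainv : a⁻¹ = a := inv_eq_of_mul_eq_one_right (by rw [← sq, ha])
      have hbinv : b⁻¹ = b := inv_eq_of_mul_eq_one_right (by rw [← sq, hb])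
      have hab : (a * b)⁻¹ = a * b := inv_eq_of_mul_eq_one_right (by rw [← sq, h1])
      rw [mul_inv_rev, hainv, hbinv] at hab
      exact hab.symm
    obtain ⟨z, hz, hz2⟩ := exists_orderOf_eq_two_mem_zpowers hG
      (hsq _ _ (hinv 0).2 (hinv 1).2 hcon.1)
    obtain ⟨w, hw, hw2⟩ := exists_orderOf_eq_two_mem_zpowers hG
      (hsq _ _ (hinv 1).2 (hinv 2).2 hcon.2)
    have hzK : z ∈ K := (Subgroup.zpowers_le.2 (hKsq _)) hz
    have hwK : w ∈ K := (Subgroup.zpowers_le.2 (hKsq _)) hw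
    obtain rfl := hKuniq z w hzK hwK hz2 hw2
    have hmem (i j : Fin 3) (h : z ∈ Subgroup.zpowers ((s i * s j) ^ 2)) :
        z ∈ Subgroup.closure (s '' {i, j}) := by
      refine Subgroup.zpowers_le.2 (pow_mem (mul_mem ?_ ?_) 2) h
      · exact Subgroup.subset_closure ⟨i, by simp, rfl⟩
      · exact Subgroup.subset_closure ⟨j, by simp, rfl⟩
    have hinter : ({0, 1} ∩ {1, 2} : Set (Fin 3)) = {1} := by
      ext i
      fin_cases i <;> simp
    have hz1 : z ∈ Subgroup.closure (s '' {1}) := by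
      rw [← hinter, ← hint]
      exact ⟨hmem 0 1 hz, hmem 1 2 hw⟩
    rw [Set.image_singleton, ← Subgroup.zpowers_eq_closure] at hz1
    -- `z` generates the group `⟨s 1⟩` of order two, so `s 1` would lie in `K`.
    have heq : Subgroup.zpowers z = Subgroup.zpowers (s 1) := by
      refine Subgroup.eq_of_le_of_card_ge (Subgroup.zpowers_le.2 hz1) ?_
      rw [Nat.card_zpowers, Nat.card_zpowers, hz2]
      exact orderOf_le_of_pow_eq_one two_pos (hinv 1).2
    exact hKs 1 (Subgroup.zpowers_le.2 hzK (heq ▸ Subgroup.mem_zpowers (s 1)))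
  rcases hcomm with h01 | h12
  · refine ⟨⟨0, by norm_num, by norm_num, h01⟩, ?_⟩
    refine nonempty_mulEquiv_of_commute (hinv 1).2 (hinv 2).2 (hinv 0).2 (hpow _) h01.symm h02.symm
      ?_ hcard4
    rw [← hgen3]
    congr 1
    ext g
    simp only [Set.mem_insert_iff, Set.mem_singleton_iff]
    tauto
  · refine ⟨⟨1, by norm_num, by norm_num, h12⟩, ?_⟩
    exact nonempty_mulEquiv_of_commute (hinv 0).2 (hinv 1).2 (hinv 2).2 (hpow _) h02 h12
      hgen3 hcard4
end

section
/- Let G be a finite group with Nat.card G = 2^m for some m ≥ 4 and Monoid.exponent G = 2^(m−3), and suppose (G, s) is a disconnected string C-group of rank n for some n ≥ 1 and s : Fin n → G (that is, some adjacent pair s i, s (i+1) commutes). Then G is isomorphic to DihedralGroup (2^(m−3)) × Multiplicative (ZMod 2) × Multiplicative (ZMod 2). -/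
/-- The homomorphism from the cyclic group of order `N` sending the generator to `x`,
where `x ^ N = 1`. -/
def zmodPowHom {G : Type*} [Group G] {N : ℕ} (x : G) (hx : x ^ N = 1) :
    Multiplicative (ZMod N) →* G :=
  AddMonoidHom.toMultiplicativeLeft
    (ZMod.lift N ⟨zmultiplesHom (Additive G) (Additive.ofMul x), by
      simpa using congrArg Additive.ofMul hx⟩)

lemma zmodPowHom_intCast {G : Type*} [Group G] {N : ℕ} (x : G) (hx : x ^ N = 1) (k : ℤ) :
    zmodPowHom x hx (Multiplicative.ofAdd (k : ZMod N)) = x ^ k := by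
  change Additive.toMul (ZMod.lift N _ (k : ZMod N)) = x ^ k
  rw [ZMod.lift_coe]
  simp

lemma zmodPowHom_one {G : Type*} [Group G] {N : ℕ} (x : G) (hx : x ^ N = 1) :
    zmodPowHom x hx (Multiplicative.ofAdd (1 : ZMod N)) = x := by
  simpa using zmodPowHom_intCast x hx 1

lemma zmodPowHom_eq_zpow {G : Type*} [Group G] {N : ℕ} (x : G) (hx : x ^ N = 1)
    (i : Multiplicative (ZMod N)) : ∃ k : ℤ, zmodPowHom x hx i = x ^ k := by
  obtain ⟨k, hk⟩ := ZMod.intCast_surjective (Multiplicative.toAdd i)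
  refine ⟨k, ?_⟩
  rw [← zmodPowHom_intCast x hx k, hk, ofAdd_toAdd]

/-- The homomorphism from the dihedral group determined by two involutions `a`, `b` with
`(a * b) ^ N = 1`: the rotation `r 1` goes to `a * b` and the reflection `sr 0` to `a`. -/
def dihedralHom {G : Type*} [Group G] {N : ℕ} (a b : G) (ha : a ^ 2 = 1) (hb : b ^ 2 = 1)
    (hab : (a * b) ^ N = 1) : DihedralGroup N →* G :=
  -- reflecting a rotation inverts it
  have hconj : ∀ i : ZMod N, zmodPowHom (a * b) hab (Multiplicative.ofAdd i) * a =
      a * zmodPowHom (a * b) hab (Multiplicative.ofAdd (-i)) := by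
    intro i
    obtain ⟨k, rfl⟩ := ZMod.intCast_surjective i
    rw [← Int.cast_neg, zmodPowHom_intCast, zmodPowHom_intCast]
    have hinv : SemiconjBy a (a * b)⁻¹ (a * b) := by
      have h1 : a⁻¹ = a := inv_eq_of_mul_eq_one_left (by rw [← sq, ha])
      have h2 : b⁻¹ = b := inv_eq_of_mul_eq_one_left (by rw [← sq, hb])
      simp [SemiconjBy, h1, h2, mul_assoc]
    have h := hinv.zpow_right k
    rw [inv_zpow'] at h
    exact h.eq.symm
  have haa : a * a = 1 := by rw [← sq, ha]
  MonoidHom.mk'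
    (fun x => match x with
      | .r i => zmodPowHom (a * b) hab (Multiplicative.ofAdd i)
      | .sr i => a * zmodPowHom (a * b) hab (Multiplicative.ofAdd i))
    (by
      rintro (i | i) (j | j)
      · simp [ofAdd_add]
      · simp only [DihedralGroup.r_mul_sr]
        rw [← mul_assoc, hconj, mul_assoc, ← map_mul, ← ofAdd_add, neg_add_eq_sub]
      · simp only [DihedralGroup.sr_mul_r]
        rw [mul_assoc, ← map_mul, ← ofAdd_add]
      · simp only [DihedralGroup.sr_mul_sr]
        rw [mul_assoc, ← mul_assoc _ a, hconj, mul_assoc, ← mul_assoc a a, haa, one_mul,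
          ← map_mul, ← ofAdd_add, neg_add_eq_sub])

/-- A group of order `2 ^ m` and exponent `2 ^ (m - 3)` generated by two elements `a`, `b`
of order at most two and two further such elements `p`, `q` that commute with everything is the
asserted direct product: the natural homomorphism from the product to `G` is surjective, and both
sides have order `2 ^ m`. Neither `p ≠ 1` nor `q ≠ 1` has to be assumed. -/
lemma nonempty_mulEquiv_of_generators {G : Type*} [Group G] [Finite G] (m : ℕ) (hm : 4 ≤ m)
    (hcard : Nat.card G = 2 ^ m) (hexp : Monoid.exponent G = 2 ^ (m - 3)) (a b p q : G)
    (ha : a ^ 2 = 1) (hb : b ^ 2 = 1) (hp : p ^ 2 = 1) (hq : q ^ 2 = 1)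
    (hpc : ∀ g, Commute g p) (hqc : ∀ g, Commute g q)
    (hgen : ∀ H : Subgroup G, a ∈ H → b ∈ H → p ∈ H → q ∈ H → H = ⊤) :
    Nonempty (G ≃* DihedralGroup (2 ^ (m - 3)) ×
      Multiplicative (ZMod 2) × Multiplicative (ZMod 2)) := by
  have hab : (a * b) ^ 2 ^ (m - 3) = 1 := by rw [← hexp]; exact Monoid.pow_exponent_eq_one _
  have hpow : ∀ x : G, (∀ g, Commute g x) → ∀ (hx : x ^ 2 = 1) (g : G) i,
      Commute g (zmodPowHom x hx i) := by
    intro x hxc hx g i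
    obtain ⟨k, hk⟩ := zmodPowHom_eq_zpow x hx i
    rw [hk]
    exact (hxc g).zpow_right k
  let f₂ : Multiplicative (ZMod 2) × Multiplicative (ZMod 2) →* G :=
    (zmodPowHom p hp).noncommCoprod (zmodPowHom q hq) fun _ _ => hpow q hqc hq _ _
  let f : DihedralGroup (2 ^ (m - 3)) × Multiplicative (ZMod 2) × Multiplicative (ZMod 2) →* G :=
    (dihedralHom a b ha hb hab).noncommCoprod f₂ fun x y =>
      (hpow p hpc hp _ _).mul_right (hpow q hqc hq _ _)
  have hf : ∀ x y z, f (x, y, z) = dihedralHom a b ha hb hab x *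
      (zmodPowHom p hp y * zmodPowHom q hq z) := fun _ _ _ => rfl
  have hda : dihedralHom a b ha hb hab (.sr 0) = a := by
    simp [dihedralHom]
  have hdab : dihedralHom a b ha hb hab (.r 1) = a * b := by
    simp [dihedralHom, zmodPowHom_one]
  have hamem : a ∈ f.range := ⟨(.sr 0, 1, 1), by simp [hf, hda]⟩
  have habmem : a * b ∈ f.range := ⟨(.r 1, 1, 1), by simp [hf, hdab]⟩
  have hrange : f.range = ⊤ := by
    apply hgen _ hamem
    · exact (Subgroup.mul_mem_cancel_left _ hamem).1 habmem
    · exact ⟨(1, Multiplicative.ofAdd 1, 1), by simp [hf, zmodPowHom_one]⟩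
    · exact ⟨(1, 1, Multiplicative.ofAdd 1), by simp [hf, zmodPowHom_one]⟩
  have hcards : Nat.card (DihedralGroup (2 ^ (m - 3)) ×
      Multiplicative (ZMod 2) × Multiplicative (ZMod 2)) = Nat.card G := by
    obtain ⟨k, rfl⟩ := Nat.exists_eq_add_of_le hm
    have h2 : Nat.card (Multiplicative (ZMod 2)) = 2 := by
      rw [Nat.card_congr Multiplicative.toAdd, Nat.card_zmod]
    rw [Nat.card_prod, Nat.card_prod, DihedralGroup.nat_card, h2, hcard,
      show 4 + k - 3 = k + 1 by omega]
    ring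
  have hbij : Function.Bijective f :=
    (Nat.bijective_iff_surjective_and_card f).2 ⟨MonoidHom.range_eq_top.1 hrange, hcards⟩
  exact ⟨(MulEquiv.ofBijective f hbij).symm⟩

/-- A proper subgroup of a `2`-group extends to one of index two. For the subgroup generated by all
generators but `s i` this separates `s i` from the remaining generators. -/
lemma exists_index_two_of_independent {G : Type*} [Group G] [Finite G] (m n : ℕ)
    (hcard : Nat.card G = 2 ^ m) (s : Fin n → G) (hs : IsStringCGroup s) (i : Fin n) :
    ∃ M : Subgroup G, M.index = 2 ∧ s i ∉ M ∧ ∀ j, j ≠ i → s j ∈ M := by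
  obtain ⟨-, hinv, htop, -, hint⟩ := hs
  have : Fact (Nat.Prime 2) := ⟨Nat.prime_two⟩
  have hnotmem : s i ∉ Subgroup.closure (s '' {i}ᶜ) := by
    intro h
    have h' : s i ∈ Subgroup.closure (s '' {i}) ⊓ Subgroup.closure (s '' {i}ᶜ) :=
      ⟨Subgroup.subset_closure ⟨i, rfl, rfl⟩, h⟩
    rw [hint, Set.inter_compl_self, Set.image_empty, Subgroup.closure_empty,
      Subgroup.mem_bot] at h'
    exact (hinv i).1 h'
  obtain ⟨k, hk, hkcard⟩ := (Nat.dvd_prime_pow Nat.prime_two).1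
    (hcard ▸ Subgroup.card_subgroup_dvd_card (Subgroup.closure (s '' {i}ᶜ)))
  have hkm : k < m := by
    refine lt_of_le_of_ne hk fun h => hnotmem ?_
    have htop' := Subgroup.eq_top_of_card_eq (Subgroup.closure (s '' {i}ᶜ))
      (by rw [hkcard, hcard, h])
    exact htop' ▸ Subgroup.mem_top _
  obtain ⟨M, hMcard, hM⟩ := Sylow.exists_subgroup_card_pow_prime_le 2 (m := m - 1)
    (hcard ▸ pow_dvd_pow 2 (Nat.sub_le m 1)) _ hkcard (by omega)
  have hmem : ∀ j, j ≠ i → s j ∈ M := fun j hj => hM (Subgroup.subset_closure ⟨j, hj, rfl⟩)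
  have hindex : M.index = 2 := by
    have h := M.card_mul_index
    rw [hMcard, hcard, show m = m - 1 + 1 by omega, pow_succ, Nat.add_sub_cancel] at h
    exact Nat.eq_of_mul_eq_mul_left (by positivity) h
  refine ⟨M, hindex, fun hi => ?_, hmem⟩
  have hMtop : M = ⊤ := by
    rw [eq_top_iff, ← htop, Subgroup.closure_le]
    rintro _ ⟨j, rfl⟩
    by_cases hj : j = i
    · exact hj ▸ hi
    · exact hmem j hj
  rw [hMtop, Subgroup.index_top] at hindex
  omega

/-- A normal subgroup `K` containing all squares with `G ⧸ K` elementary abelian of rank `n`;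
it is the kernel of the map to the product of the index-two quotients detecting the generators. -/
lemma exists_frattini_like {G : Type*} [Group G] [Finite G] (m n : ℕ)
    (hcard : Nat.card G = 2 ^ m) (s : Fin n → G) (hs : IsStringCGroup s) :
    ∃ K : Subgroup G, K.Normal ∧ (∀ g : G, g ^ 2 ∈ K) ∧ Nat.card K * 2 ^ n = 2 ^ m := by
  choose M hM2 hMi hMj using exists_index_two_of_independent m n hcard s hs
  have : ∀ i, (M i).Normal := fun i => Subgroup.normal_of_index_eq_two (hM2 i)
  let φ : G →* ∀ i, G ⧸ M i := MonoidHom.pi fun i => QuotientGroup.mk' (M i)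
  have hφ : φ.range = ⊤ := by
    refine eq_top_iff.2 fun x _ => Subgroup.pi_mem_of_mulSingle_mem x fun i => ?_
    obtain ⟨g, hg⟩ := QuotientGroup.mk_surjective (x i)
    rw [← hg]
    by_cases hgi : g ∈ M i
    · rw [(QuotientGroup.eq_one_iff g).2 hgi, Pi.mulSingle_one]
      exact one_mem _
    · refine ⟨s i, funext fun j => ?_⟩
      by_cases hj : j = i
      · subst hj
        rw [Pi.mulSingle_eq_same]
        refine QuotientGroup.eq.2 ?_
        rw [Subgroup.mul_mem_iff_of_index_two (hM2 j)]
        simp [hMi j, hgi]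
      · rw [Pi.mulSingle_eq_of_ne hj]
        exact (QuotientGroup.eq_one_iff _).2 (hMj j i (Ne.symm hj))
  refine ⟨φ.ker, inferInstance, fun g => ?_, ?_⟩
  · refine funext fun i => (QuotientGroup.eq_one_iff _).2 ?_
    exact Subgroup.sq_mem_of_index_two (hM2 i) g
  · have h := φ.ker.card_mul_index
    rw [Subgroup.index_ker, hφ, Subgroup.card_top, Nat.card_pi, hcard] at h
    have h2 : ∀ i, Nat.card (G ⧸ M i) = 2 := hM2
    simpa [h2] using h

lemma eq_of_sq_eq_one_of_mem_cyclic {G : Type*} [Group G] [Finite G] (K : Subgroup G) [IsCyclic K]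
    {x y : G} (hx : x ∈ K) (hy : y ∈ K) (hx1 : x ≠ 1) (hy1 : y ≠ 1) (hx2 : x ^ 2 = 1)
    (hy2 : y ^ 2 = 1) : x = y := by
  classical
  have := Fintype.ofFinite K
  by_contra hxy
  have hle := IsCyclic.card_pow_eq_one_le (α := K) (n := 2) two_pos
  have hsub : ({1, ⟨x, hx⟩, ⟨y, hy⟩} : Finset K) ⊆ Finset.univ.filter fun a : K => a ^ 2 = 1 := by
    intro a ha
    simp only [Finset.mem_insert, Finset.mem_singleton] at ha
    rcases ha with rfl | rfl | rfl <;> simp [Subtype.ext_iff, hx2, hy2]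
  have h3 : ({1, ⟨x, hx⟩, ⟨y, hy⟩} : Finset K).card = 3 := by
    rw [Finset.card_eq_three]
    exact ⟨_, _, _, by simpa [Subtype.ext_iff] using Ne.symm hx1,
      by simpa [Subtype.ext_iff] using Ne.symm hy1, by simpa [Subtype.ext_iff] using hxy, rfl⟩
  have := Finset.card_le_card hsub
  omega

/-- If the squares of a `2`-group lie in `K`, any subgroup containing two noncommuting involutions
`x`, `y` shares an involution with `K`, namely a power of `(x * y) ^ 2`. -/
lemma exists_involution_mem {G : Type*} [Group G] [Finite G] (m : ℕ) (hcard : Nat.card G = 2 ^ m)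
    (K : Subgroup G) (hsq : ∀ g : G, g ^ 2 ∈ K) {x y : G} (hx : x ^ 2 = 1) (hy : y ^ 2 = 1)
    (hxy : ¬ Commute x y) (H : Subgroup G) (hxH : x ∈ H) (hyH : y ∈ H) :
    ∃ z, z ∈ H ∧ z ∈ K ∧ z ≠ 1 ∧ z ^ 2 = 1 := by
  have hne : (x * y) ^ 2 ≠ 1 := by
    intro h
    apply hxy
    have h1 : x⁻¹ = x := inv_eq_of_mul_eq_one_left (by rw [← sq, hx])
    have h2 : y⁻¹ = y := inv_eq_of_mul_eq_one_left (by rw [← sq, hy])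
    have h3 : (x * y)⁻¹ = x * y := inv_eq_of_mul_eq_one_left (by rw [← sq, h])
    rw [mul_inv_rev, h1, h2] at h3
    exact h3.symm
  set w := (x * y) ^ 2
  obtain ⟨k, -, hk⟩ := (Nat.dvd_prime_pow Nat.prime_two).1 (hcard ▸ orderOf_dvd_natCard w)
  have hdvd : 2 ∣ orderOf w := by
    rw [hk]
    refine dvd_pow_self 2 ?_
    rintro rfl
    exact hne (orderOf_eq_one_iff.1 (by simpa using hk))
  have hord : orderOf (w ^ (orderOf w / 2)) = 2 :=
    orderOf_pow_orderOf_div (orderOf_pos w).ne' hdvd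
  refine ⟨w ^ (orderOf w / 2), pow_mem (pow_mem (mul_mem hxH hyH) 2) _, pow_mem (hsq _) _, ?_, ?_⟩
  · intro h
    rw [h, orderOf_one] at hord
    omega
  · exact orderOf_dvd_iff_pow_eq_one.1 hord.dvd

/-- When the squares lie in a cyclic normal subgroup, any two noncommuting pairs of generators
coincide (the conclusion applies to each member of each pair): the unique involution of that
subgroup is central in `G` and lies in the subgroup generated by any such pair. -/
lemma pair_eq_of_not_commute {G : Type*} [Group G] [Finite G] (m n : ℕ)
    (hcard : Nat.card G = 2 ^ m) (s : Fin n → G) (hs : IsStringCGroup s)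
    (K : Subgroup G) [K.Normal] [IsCyclic K] (hsq : ∀ g : G, g ^ 2 ∈ K) (i j i' j' : Fin n)
    (hij : ¬ Commute (s i) (s j)) (hij' : ¬ Commute (s i') (s j')) :
    i ∈ ({i', j'} : Set (Fin n)) := by
  obtain ⟨-, hinv, -, -, hint⟩ := hs
  by_contra hi
  have hmem : ∀ (J : Set (Fin n)) (k), k ∈ J → s k ∈ Subgroup.closure (s '' J) :=
    fun J k hk => Subgroup.subset_closure ⟨k, hk, rfl⟩
  obtain ⟨z, hzH, hzK, hz1, hz2⟩ := exists_involution_mem m hcard K hsq (hinv i).2 (hinv j).2 hij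
    (Subgroup.closure (s '' {i, j})) (hmem _ _ (by simp)) (hmem _ _ (by simp))
  obtain ⟨z', hzH', hzK', hz1', hz2'⟩ := exists_involution_mem m hcard K hsq (hinv i').2
    (hinv j').2 hij' (Subgroup.closure (s '' {i', j'})) (hmem _ _ (by simp)) (hmem _ _ (by simp))
  obtain rfl := eq_of_sq_eq_one_of_mem_cyclic K hzK hzK' hz1 hz1' hz2 hz2'
  have hcentral : ∀ g, Commute g z := by
    intro g
    have h : g * z * g⁻¹ = z := eq_of_sq_eq_one_of_mem_cyclic K
      (Subgroup.Normal.conj_mem inferInstance z hzK g) hzK (by simpa using hz1) hz1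
      (by rw [conj_pow, hz2]; simp) hz2
    exact mul_inv_eq_iff_eq_mul.1 h
  have hz : z ∈ Subgroup.closure (s '' {i, j}) ⊓ Subgroup.closure (s '' {i', j'}) := ⟨hzH, hzH'⟩
  rw [hint] at hz
  have hle : Subgroup.closure (s '' ({i, j} ∩ {i', j'})) ≤ Subgroup.zpowers (s j) := by
    rw [Subgroup.closure_le]
    rintro _ ⟨k, ⟨hk, hk'⟩, rfl⟩
    rcases hk with rfl | rfl
    · exact absurd hk' hi
    · exact Subgroup.mem_zpowers _
  obtain ⟨k, hk⟩ := Subgroup.mem_zpowers_iff.1 (hle hz)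
  -- `z` is a nontrivial power of the involution `s j`
  have hzj : z = s j := by
    rcases Int.even_or_odd' k with ⟨l, rfl | rfl⟩
    · refine absurd ?_ hz1
      rw [← hk, zpow_mul, zpow_ofNat, (hinv j).2, one_zpow]
    · rw [← hk, zpow_add, zpow_mul, zpow_ofNat, (hinv j).2, one_zpow, one_mul, zpow_one]
  exact hij (hzj ▸ hcentral (s i))

/-- A disconnected string C-group of order 2^m (m ≥ 4) and exponent
2^(m-3) is isomorphic to D_{2^(m-3)} × Z_2 × Z_2. -/
theorem stmt_6 {G : Type*} [Group G] [Finite G] (m n : ℕ) (hm : 4 ≤ m) (hn : 1 ≤ n)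
    (hcard : Nat.card G = 2 ^ m) (hexp : Monoid.exponent G = 2 ^ (m - 3))
    (s : Fin n → G) (hs : IsStringCGroup s)
    (hdisc : ∃ (i : ℕ) (h1 : i < n) (h2 : i + 1 < n),
      Commute (s ⟨i, h1⟩) (s ⟨i + 1, h2⟩)) :
    Nonempty (G ≃* DihedralGroup (2 ^ (m - 3)) ×
      Multiplicative (ZMod 2) × Multiplicative (ZMod 2)) := by
  obtain ⟨K, hKn, hsq, hKcard⟩ := exists_frattini_like m n hcard s hs
  obtain ⟨c, hc⟩ := Nat.prime_two.exists_orderOf_eq_pow_factorization_exponent G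
  rw [hexp, Nat.Prime.factorization_pow Nat.prime_two, Finsupp.single_eq_same] at hc
  have hc2 : orderOf (c ^ 2) = 2 ^ (m - 4) := by
    rw [orderOf_pow_of_dvd two_ne_zero (hc ▸ dvd_pow_self 2 (by omega)), hc,
      show m - 3 = m - 4 + 1 by omega, pow_succ, Nat.mul_div_cancel _ two_pos]
  have hcK : Subgroup.zpowers (c ^ 2) ≤ K := by
    rw [Subgroup.zpowers_le]
    exact hsq c
  have hle : 2 ^ (m - 4) ≤ Nat.card K := by
    rw [← hc2, ← Nat.card_zpowers]
    exact Subgroup.card_le_of_le hcK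
  have hn4 : n ≤ 4 := by
    have h : 2 ^ (m - 4 + n) ≤ 2 ^ m := by
      rw [pow_add, ← hKcard]
      exact Nat.mul_le_mul_right _ hle
    have := (Nat.pow_le_pow_iff_right one_lt_two).1 h
    omega
  have hinv := hs.2.1
  have htop := hs.2.2.1
  have hstr := hs.2.2.2.1
  have hcomm : ∀ x : G, (∀ i, Commute (s i) x) → ∀ g, Commute g x := by
    intro x hx g
    have hcl : Subgroup.closure (Set.range s) ≤ Subgroup.centralizer {x} := by
      rw [Subgroup.closure_le]
      rintro _ ⟨i, rfl⟩
      exact Subgroup.mem_centralizer_singleton_iff.2 (hx i).eq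
    exact Subgroup.mem_centralizer_singleton_iff.1 (hcl (htop ▸ Subgroup.mem_top g))
  have hgen : ∀ H : Subgroup G, (∀ i, s i ∈ H) → H = ⊤ := by
    intro H hH
    rw [eq_top_iff, ← htop, Subgroup.closure_le]
    rintro _ ⟨i, rfl⟩
    exact hH i
  obtain ⟨i, h1, h2, hi⟩ := hdisc
  have hcases : n = 2 ∨ n = 3 ∨ n = 4 := by omega
  rcases hcases with rfl | rfl | rfl
  · refine nonempty_mulEquiv_of_generators m hm hcard hexp (s 0) (s 1) 1 1 (hinv 0).2 (hinv 1).2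
      (one_pow 2) (one_pow 2) Commute.one_right Commute.one_right fun H ha hb _ _ => hgen H ?_
    intro k
    fin_cases k <;> assumption
  · -- the end of the string beyond the gap is central
    have h02 : Commute (s 0) (s 2) := hstr 0 2 (by simp)
    have hi01 : i = 0 ∨ i = 1 := by omega
    rcases hi01 with rfl | rfl
    · have h01 : Commute (s 0) (s 1) := hi
      refine nonempty_mulEquiv_of_generators m hm hcard hexp (s 1) (s 2) (s 0) 1 (hinv 1).2
        (hinv 2).2 (hinv 0).2 (one_pow 2) (hcomm _ fun k => ?_) Commute.one_right
        fun H ha hb hp _ => hgen H fun k => ?_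
      · fin_cases k
        exacts [Commute.refl _, h01.symm, h02.symm]
      · fin_cases k <;> assumption
    · have h12 : Commute (s 1) (s 2) := hi
      refine nonempty_mulEquiv_of_generators m hm hcard hexp (s 0) (s 1) (s 2) 1 (hinv 0).2
        (hinv 1).2 (hinv 2).2 (one_pow 2) (hcomm _ fun k => ?_) Commute.one_right
        fun H ha hb hp _ => hgen H fun k => ?_
      · fin_cases k
        exacts [h02, h12, Commute.refl _]
      · fin_cases k <;> assumption
  · have hKeq : Subgroup.zpowers (c ^ 2) = K := by
      refine Subgroup.eq_of_le_of_card_ge hcK ?_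
      have h4 : Nat.card K * 2 ^ 4 = 2 ^ (m - 4) * 2 ^ 4 := by
        rw [hKcard, ← pow_add, show m - 4 + 4 = m by omega]
      rw [Nat.card_zpowers, hc2]
      exact (Nat.eq_of_mul_eq_mul_right (by positivity) h4).le
    have : IsCyclic K := hKeq ▸ inferInstance
    have hpair := pair_eq_of_not_commute m 4 hcard s hs K hsq
    obtain ⟨a, b, hab, honly⟩ : ∃ a b : Fin 4, a ≠ b ∧
        ∀ k l, ¬ Commute (s k) (s l) → k = a ∨ k = b := by
      by_cases hall : ∀ k l, Commute (s k) (s l)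
      · exact ⟨0, 1, by decide, fun k l h => absurd (hall k l) h⟩
      · push Not at hall
        obtain ⟨a, b, hab⟩ := hall
        refine ⟨a, b, ?_, fun k l h => by simpa using hpair k l a b h hab⟩
        rintro rfl
        exact hab (Commute.refl _)
    obtain ⟨p, q, hpa, hpb, hqa, hqb, hcover⟩ : ∃ p q : Fin 4, p ≠ a ∧ p ≠ b ∧ q ≠ a ∧ q ≠ b ∧
        ∀ k, k = a ∨ k = b ∨ k = p ∨ k = q := by
      clear honly
      revert a b
      decide
    have hcen : ∀ p, p ≠ a → p ≠ b → ∀ g, Commute g (s p) := by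
      intro p hpa hpb
      refine hcomm _ fun k => ?_
      by_contra h
      rcases honly p k fun h' => h h'.symm with h' | h'
      exacts [hpa h', hpb h']
    refine nonempty_mulEquiv_of_generators m hm hcard hexp (s a) (s b) (s p) (s q) (hinv a).2
      (hinv b).2 (hinv p).2 (hinv q).2 (hcen p hpa hpb) (hcen q hqa hqb)
      fun H ha hb hp hq => hgen H fun k => ?_
    rcases hcover k with rfl | rfl | rfl | rfl <;> assumption
end

section
/- Let G be a finite group with Nat.card G = 2^m and Monoid.exponent G = 2^(m−3), and suppose (G, s) is a connected string C-group of rank n for some n ≥ 1 and s : Fin n → G. Then m ≥ 5 and there exists e ∈ {0, 1}, with e = 0 if m = 5, such that G is isomorphic to the presented group M(m, e). In particular, G is a smooth quotient of the string Coxeter group [4, 2^(m−3)]. -/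
/-- The relation set of the presented group `M(m, e)` on generators
`x₀, x₁, x₂`: relations `x₀², x₁², x₂², (x₀x₁)⁴, (x₀x₂)², (x₁x₂)^(2^(m-3))`,
and `(x₀x₁x₂x₁)² · (x₂x₁)^(2^(m-4)·e)`. -/
def Mrels (m e : ℕ) : Set (FreeGroup (Fin 3)) :=
  {(FreeGroup.of 0) ^ 2, (FreeGroup.of 1) ^ 2, (FreeGroup.of 2) ^ 2,
    (FreeGroup.of 0 * FreeGroup.of 1) ^ 4,
    (FreeGroup.of 0 * FreeGroup.of 2) ^ 2,
    (FreeGroup.of 1 * FreeGroup.of 2) ^ (2 ^ (m - 3)),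
    (FreeGroup.of 0 * FreeGroup.of 1 * FreeGroup.of 2 * FreeGroup.of 1) ^ 2 *
      (FreeGroup.of 2 * FreeGroup.of 1) ^ (2 ^ (m - 4) * e)}

/-- The presented group `M(m, e)`. -/
abbrev Mgrp (m e : ℕ) : Type := PresentedGroup (Mrels m e)

/-- `σ i`: the image in `M(m, e)` of the generator `xᵢ`. -/
def Msigma (m e : ℕ) (i : Fin 3) : Mgrp m e := PresentedGroup.of i

/-! ### Finite groups generated by few involutions -/

/-- The dihedral normal form: in the subgroup generated by two involutions `b`, `c`, every
element is a power of `b * c`, possibly followed by `b`. -/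
lemma mem_dihedral {G : Type*} [Group G] {b c : G} (hb : b * b = 1) (hc : c * c = 1) {x : G}
    (hx : x ∈ Subgroup.closure ({b, c} : Set G)) :
    ∃ i : ℤ, x = (b * c) ^ i ∨ x = (b * c) ^ i * b := by
  have hbi : b⁻¹ = b := inv_eq_of_mul_eq_one_left hb
  have hci : c⁻¹ = c := inv_eq_of_mul_eq_one_left hc
  have key : ∀ i : ℤ, b * (b * c) ^ i = (b * c) ^ (-i) * b := by
    intro i
    have h1 : b * (b * c) * b⁻¹ = (b * c)⁻¹ := by
      rw [mul_inv_rev, hbi, hci, ← mul_assoc, hb, one_mul]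
    have h2 : b * (b * c) ^ i * b⁻¹ = (b * c) ^ (-i) := by
      rw [← conj_zpow, h1, inv_zpow, zpow_neg]
    rw [← h2]; group
  have hcb : c = b * (b * c) := by rw [← mul_assoc, hb, one_mul]
  have step : ∀ x : G, x = b ∨ x = c → ∀ y : G,
      (∃ i : ℤ, y = (b * c) ^ i ∨ y = (b * c) ^ i * b) →
      ∃ i : ℤ, x * y = (b * c) ^ i ∨ x * y = (b * c) ^ i * b := by
    have stepb : ∀ y : G, (∃ i : ℤ, y = (b * c) ^ i ∨ y = (b * c) ^ i * b) →
        ∃ i : ℤ, b * y = (b * c) ^ i ∨ b * y = (b * c) ^ i * b := by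
      rintro y ⟨i, rfl | rfl⟩
      · exact ⟨-i, Or.inr (key i)⟩
      · exact ⟨-i, Or.inl (by rw [← mul_assoc, key, mul_assoc, hb, mul_one])⟩
    rintro x (hx | hx) y hy
    · rw [hx]; exact stepb y hy
    · have hxy : x * y = b * ((b * c) * y) := by rw [← mul_assoc b, ← hcb, hx]
      rw [hxy]
      refine stepb _ ?_
      obtain ⟨i, rfl | rfl⟩ := hy
      · exact ⟨1 + i, Or.inl (by rw [zpow_add, zpow_one])⟩
      · exact ⟨1 + i, Or.inr (by rw [zpow_add, zpow_one]; simp only [mul_assoc])⟩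
  induction hx using Subgroup.closure_induction_left with
  | one => exact ⟨0, Or.inl (by simp)⟩
  | mul_left x hx y hy ih => exact step x (by simpa using hx) y ih
  | inv_mul_cancel x hx y hy ih =>
    have hx' : x = b ∨ x = c := by simpa using hx
    have : x⁻¹ = x := by rcases hx' with rfl | rfl <;> assumption
    rw [this]; exact step x hx' y ih

lemma card_dihedral_le {G : Type*} [Group G] {b c : G} (hb : b * b = 1) (hc : c * c = 1)
    {N : ℕ} (hN : 0 < N) (hbc : (b * c) ^ N = 1) :
    Finite (Subgroup.closure ({b, c} : Set G)) ∧
      Nat.card (Subgroup.closure ({b, c} : Set G)) ≤ 2 * N := by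
  have hfo : IsOfFinOrder (b * c) := isOfFinOrder_iff_pow_eq_one.2 ⟨N, hN, hbc⟩
  have hfin : Finite (Subgroup.zpowers (b * c)) := hfo.finite_zpowers
  have hle : Nat.card (Subgroup.zpowers (b * c)) ≤ N := by
    rw [Nat.card_zpowers]; exact orderOf_le_of_pow_eq_one hN hbc
  let f : Bool × Subgroup.zpowers (b * c) → G := fun p => p.2.1 * (if p.1 then b else 1)
  have hsub : (Subgroup.closure ({b, c} : Set G) : Set G) ⊆ Set.range f := by
    intro x hx
    obtain ⟨i, rfl | rfl⟩ := mem_dihedral hb hc hx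
    · exact ⟨(false, ⟨_, i, rfl⟩), by simp [f]⟩
    · exact ⟨(true, ⟨_, i, rfl⟩), by simp [f]⟩
  have hfr : (Set.range f).Finite := Set.finite_range f
  refine ⟨hfr.subset hsub, ?_⟩
  calc Nat.card (Subgroup.closure ({b, c} : Set G))
      ≤ Nat.card (Set.range f) := Nat.card_mono hfr hsub
    _ ≤ Nat.card (Bool × Subgroup.zpowers (b * c)) := Finite.card_range_le f
    _ = 2 * Nat.card (Subgroup.zpowers (b * c)) := by simp [Nat.card_prod]
    _ ≤ 2 * N := by omega

/-- Induction over a group generated by three involutions, multiplying on the left. -/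
lemma induction_three {G : Type*} [Group G] {a b c : G} (ha : a * a = 1) (hb : b * b = 1)
    (hc : c * c = 1) (hgen : Subgroup.closure ({a, b, c} : Set G) = ⊤) {P : G → Prop}
    (h1 : P 1) (hPa : ∀ y, P y → P (a * y)) (hPb : ∀ y, P y → P (b * y))
    (hPc : ∀ y, P y → P (c * y)) (x : G) : P x := by
  have hx : x ∈ Subgroup.closure ({a, b, c} : Set G) := by rw [hgen]; trivial
  have step : ∀ x : G, x ∈ ({a, b, c} : Set G) → ∀ y, P y → P (x * y) := by
    rintro x (rfl | rfl | rfl) y hy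
    exacts [hPa y hy, hPb y hy, hPc y hy]
  induction hx using Subgroup.closure_induction_left with
  | one => exact h1
  | mul_left x hx y hy ih => exact step x hx y ih
  | inv_mul_cancel x hx y hy ih =>
    have : x⁻¹ = x := by
      rcases hx with rfl | rfl | rfl <;> exact inv_eq_of_mul_eq_one_left (by assumption)
    rw [this]; exact step x hx y ih

/-- A group generated by three involutions whose commutators are powers of an involution `u`
commuting with `b` and `c` has order at most 16. -/
lemma card_le_sixteen {G : Type*} [Group G] {a b c u : G} (ha : a * a = 1) (hb : b * b = 1)
    (hc : c * c = 1) (hu : u * u = 1) (hgen : Subgroup.closure ({a, b, c} : Set G) = ⊤)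
    (hub : u * b = b * u) (huc : u * c = c * u)
    (hab : b * a = a * b * u) (hac : a * c = c * a) (hbc : c * b = b * c ∨ c * b = b * c * u) :
    Nat.card G ≤ 16 := by
  let f : Bool × Bool × Bool × Bool → G := fun p =>
    (if p.1 then a else 1) * (if p.2.1 then b else 1) * (if p.2.2.1 then c else 1) *
      (if p.2.2.2 then u else 1)
  have hf : Function.Surjective f := by
    have hA : ∀ x, a * (a * x) = x := fun x => by rw [← mul_assoc, ha, one_mul]
    have hB : ∀ x, b * (b * x) = x := fun x => by rw [← mul_assoc, hb, one_mul]
    have hC : ∀ x, c * (c * x) = x := fun x => by rw [← mul_assoc, hc, one_mul]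
    have hUB : ∀ x, u * (b * x) = b * (u * x) := fun x => by rw [← mul_assoc, hub, mul_assoc]
    have hUC : ∀ x, u * (c * x) = c * (u * x) := fun x => by rw [← mul_assoc, huc, mul_assoc]
    have hBA : ∀ x, b * (a * x) = a * (b * (u * x)) := fun x => by
      rw [← mul_assoc, hab]; simp only [mul_assoc]
    have hCA : ∀ x, c * (a * x) = a * (c * x) := fun x => by
      rw [← mul_assoc, ← hac, mul_assoc]
    have hab' : b * a = a * (b * u) := by rw [hab, mul_assoc]
    intro x
    refine induction_three ha hb hc hgen (P := fun x => ∃ p, f p = x)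
      ⟨(false, false, false, false), by simp [f]⟩ ?_ ?_ ?_ x
    · rintro _ ⟨⟨i, j, k, l⟩, rfl⟩
      refine ⟨(!i, j, k, l), ?_⟩
      cases i <;> simp [f, mul_assoc, hA, ha]
    · rintro _ ⟨⟨i, j, k, l⟩, rfl⟩
      refine ⟨(i, !j, k, xor i l), ?_⟩
      cases i <;> cases j <;> cases k <;> cases l <;>
        simp [f, mul_assoc, hB, hBA, hab', hu, hub, huc, hUB, hUC, hb]
    · rcases hbc with hbc | hbc
      · have hCB : ∀ x, c * (b * x) = b * (c * x) := fun x => by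
          rw [← mul_assoc, hbc, mul_assoc]
        rintro _ ⟨⟨i, j, k, l⟩, rfl⟩
        refine ⟨(i, j, !k, l), ?_⟩
        cases i <;> cases j <;> cases k <;> cases l <;>
          simp [f, mul_assoc, hCB, hbc, hC, hCA, hac.symm, hc]
      · have hCB : ∀ x, c * (b * x) = b * (c * (u * x)) := fun x => by
          rw [← mul_assoc, hbc]; simp only [mul_assoc]
        have hcb : c * b = b * (c * u) := by rw [hbc, mul_assoc]
        rintro _ ⟨⟨i, j, k, l⟩, rfl⟩
        refine ⟨(i, j, !k, xor j l), ?_⟩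
        cases i <;> cases j <;> cases k <;> cases l <;>
          simp [f, mul_assoc, hCB, hcb, hC, hCA, hac.symm, hu, huc, hUC, hc]
  have := Nat.card_le_card_of_surjective f hf
  simpa [Nat.card_prod] using this

/-! ### Cyclic 2-groups and subgroups of index 2 -/

lemma zpow_pow_dvd {G : Type*} [Group G] {h : G} {k : ℕ} (hh : orderOf h = 2 ^ k) (j : ℤ) :
    h ^ j = 1 ↔ (2 : ℤ) ^ k ∣ j := by
  rw [← orderOf_dvd_iff_zpow_eq_one, hh]; push_cast; rfl

/-- Any two nontrivial subgroups of a cyclic 2-group meet nontrivially: both contain the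
involution. -/
lemma involution_mem {G : Type*} [Group G] {h x : G} {k : ℕ} (hh : orderOf h = 2 ^ (k + 1))
    (hx : x ∈ Subgroup.zpowers h) (hx1 : x ≠ 1) : h ^ (2 ^ k) ∈ Subgroup.zpowers x := by
  have hd : orderOf x ∣ 2 ^ (k + 1) := hh ▸ orderOf_dvd_of_mem_zpowers hx
  obtain ⟨i, -, hi⟩ := (Nat.dvd_prime_pow Nat.prime_two).1 hd
  obtain _ | i := i
  · exact absurd (orderOf_eq_one_iff.1 (by simpa using hi)) hx1
  have hy1 : x ^ (2 ^ i) ≠ 1 := by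
    intro hc
    have := orderOf_dvd_of_pow_eq_one hc
    rw [hi] at this
    have := (Nat.pow_dvd_pow_iff_le_right (by norm_num : 1 < 2)).1 this
    omega
  have hy2 : (x ^ (2 ^ i)) ^ 2 = 1 := by rw [← pow_mul, ← pow_succ, ← hi, pow_orderOf_eq_one]
  obtain ⟨j, hj⟩ := Subgroup.pow_mem _ hx (2 ^ i)
  simp only at hj
  have h2j : h ^ (j * 2) = 1 := by
    rw [zpow_mul, hj]; exact_mod_cast hy2
  rw [zpow_pow_dvd hh, pow_succ] at h2j
  obtain ⟨t, ht⟩ := Int.dvd_of_mul_dvd_mul_right (by norm_num) h2j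
  have hodd : ¬ Even t := by
    rintro ⟨s, hs⟩
    apply hy1
    rw [← hj, zpow_pow_dvd hh]
    exact ⟨s, by rw [ht, hs]; ring⟩
  obtain ⟨s, hs⟩ := Int.not_even_iff_odd.1 hodd
  refine ⟨(2 ^ i : ℕ), ?_⟩
  have : h ^ j = h ^ (2 ^ k) * (h ^ (2 ^ (k + 1))) ^ s := by
    rw [← zpow_natCast, ← zpow_natCast, ← zpow_mul, ← zpow_add, ht, hs]
    congr 1; push_cast; ring
  rw [← hh, pow_orderOf_eq_one, one_zpow, mul_one] at this
  rw [← this, hj]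
  exact zpow_natCast x _

lemma coset_of_card {G : Type*} [Group G] [Finite G] {Z N : Subgroup G} (hZN : Z ≤ N)
    (hcard : Nat.card N = 2 * Nat.card Z) {u x : G} (hu : u ∈ N) (huZ : u ∉ Z) (hx : x ∈ N)
    (hxZ : x ∉ Z) : ∃ z ∈ Z, x = u * z := by
  have hidx : (Z.subgroupOf N).index = 2 := by
    have h1 := (Z.subgroupOf N).card_mul_index
    have h2 : Nat.card (Z.subgroupOf N) = Nat.card Z :=
      Nat.card_congr (Subgroup.subgroupOfEquivOfLe hZN).toEquiv
    rw [h2, hcard, mul_comm 2] at h1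
    exact Nat.eq_of_mul_eq_mul_left Nat.card_pos h1
  have := Subgroup.mul_mem_iff_of_index_two hidx (a := (⟨u, hu⟩ : N)⁻¹) (b := ⟨x, hx⟩)
  simp only [Subgroup.mem_subgroupOf, Subgroup.coe_mul, InvMemClass.coe_inv, inv_mem_iff] at this
  exact ⟨u⁻¹ * x, this.2 ⟨fun h => absurd h huZ, fun h => absurd h hxZ⟩, by simp⟩

/-! ### Identities between three involutions -/

section Identities

variable {G : Type*} [Group G] {a b c : G}

lemma last_rel (ha : a * a = 1) (hb : b * b = 1) (hc : c * c = 1) (hac : a * c = c * a) :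
    (a * b * c * b) ^ 2 = (a * b) ^ 2 * ((b * c) * (a * b) ^ 2 * (b * c)⁻¹) := by
  have hbi : b⁻¹ = b := inv_eq_of_mul_eq_one_left hb
  have hci : c⁻¹ = c := inv_eq_of_mul_eq_one_left hc
  have hA : ∀ x, a * (a * x) = x := fun x => by rw [← mul_assoc, ha, one_mul]
  have hB : ∀ x, b * (b * x) = x := fun x => by rw [← mul_assoc, hb, one_mul]
  have hAC : ∀ x, a * (c * x) = c * (a * x) := fun x => by rw [← mul_assoc, hac, mul_assoc]
  simp only [pow_two, mul_assoc, mul_inv_rev, hbi, hci, hB, hAC, hA]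

lemma a_conj_v (ha : a * a = 1) (hb : b * b = 1) (hac : a * c = c * a) :
    a * (b * c) ^ 2 * a⁻¹ = (a * b) ^ 2 * ((b * c) * (a * b) ^ 2 * (b * c)⁻¹) * (b * c) ^ 2 := by
  have hai : a⁻¹ = a := inv_eq_of_mul_eq_one_left ha
  have hA : ∀ x, a * (a * x) = x := fun x => by rw [← mul_assoc, ha, one_mul]
  have hB : ∀ x, b * (b * x) = x := fun x => by rw [← mul_assoc, hb, one_mul]
  have hAC : ∀ x, a * (c * x) = c * (a * x) := fun x => by rw [← mul_assoc, hac, mul_assoc]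
  have h1 : (a * b) ^ 2 * ((b * c) * (a * b) ^ 2 * (b * c)⁻¹) * (b * c) ^ 2 =
      (a * b) ^ 2 * (b * c) * (a * b) ^ 2 * (b * c) := by
    rw [pow_two (b * c)]; group
  rw [h1, hai]
  simp only [pow_two, mul_assoc, hB, hAC, hA, ← hac]

lemma a_conj_u (ha : a * a = 1) (hb : b * b = 1) (hu : (a * b) ^ 2 * (a * b) ^ 2 = 1) :
    a * (a * b) ^ 2 * a⁻¹ = (a * b) ^ 2 := by
  have hai : a⁻¹ = a := inv_eq_of_mul_eq_one_left ha
  have hbi : b⁻¹ = b := inv_eq_of_mul_eq_one_left hb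
  have hA : ∀ x, a * (a * x) = x := fun x => by rw [← mul_assoc, ha, one_mul]
  conv_rhs => rw [← inv_eq_of_mul_eq_one_left hu]
  simp only [pow_two, mul_assoc, mul_inv_rev, hai, hbi, hA]

lemma b_conj_u (ha : a * a = 1) (hb : b * b = 1) (hu : (a * b) ^ 2 * (a * b) ^ 2 = 1) :
    b * (a * b) ^ 2 * b⁻¹ = (a * b) ^ 2 := by
  have hai : a⁻¹ = a := inv_eq_of_mul_eq_one_left ha
  have hbi : b⁻¹ = b := inv_eq_of_mul_eq_one_left hb
  conv_rhs => rw [← inv_eq_of_mul_eq_one_left hu]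
  simp only [pow_two, mul_assoc, mul_inv_rev, hai, hbi, hb, mul_one]

lemma b_conj_w (hb : b * b = 1) (hc : c * c = 1) :
    b * (b * c) * b⁻¹ = (b * c)⁻¹ := by
  have hbi : b⁻¹ = b := inv_eq_of_mul_eq_one_left hb
  have hci : c⁻¹ = c := inv_eq_of_mul_eq_one_left hc
  rw [mul_inv_rev, hbi, hci, ← mul_assoc, hb, one_mul]

end Identities

/-! ### The order of the presented group -/

/-- Coset enumeration over `D = ⟨b, c⟩`: the relations force `D`, `aD`, `baD` and `(ab)²D` to be
all the cosets of `D`. -/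
lemma card_le_of_rels {M : Type*} [Group M] {a b c : M} (ha : a * a = 1) (hb : b * b = 1)
    (hc : c * c = 1) (hu : (a * b) ^ 2 * (a * b) ^ 2 = 1) (hac : a * c = c * a)
    {N : ℕ} (hN : 0 < N) (hbc : (b * c) ^ N = 1) {j : ℤ}
    (hj : (a * b) ^ 2 * ((b * c) * (a * b) ^ 2 * (b * c)⁻¹) = (b * c) ^ j)
    (hgen : Subgroup.closure ({a, b, c} : Set M) = ⊤) :
    Finite M ∧ Nat.card M ≤ 8 * N := by
  obtain ⟨hDfin, hDcard⟩ := card_dihedral_le hb hc hN hbc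
  have hau : a * (a * b) ^ 2 = b * a * b := by
    have hA : ∀ x, a * (a * x) = x := fun x => by rw [← mul_assoc, ha, one_mul]
    simp only [pow_two, mul_assoc, hA]
  have haba : a * (b * a) = (a * b) ^ 2 * b := by
    simp only [pow_two, mul_assoc, hb, mul_one]
  have hbu : b * (a * b) ^ 2 = (a * b) ^ 2 * b := mul_inv_eq_iff_eq_mul.1 (b_conj_u ha hb hu)
  have hcw : c = b * (b * c) := by rw [← mul_assoc, hb, one_mul]
  have hwc : b * c * c = b := by rw [mul_assoc, hc, mul_one]
  have hawa : a * (b * c) = (a * b) ^ 2 * (b * c) * a := by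
    rw [mul_assoc _ _ a, mul_assoc b c a, ← hac, ← mul_assoc b, ← mul_assoc _ (b * a), pow_two]
    have hB : ∀ x, b * (b * x) = x := fun x => by rw [← mul_assoc, hb, one_mul]
    have hA : ∀ x, a * (a * x) = x := fun x => by rw [← mul_assoc, ha, one_mul]
    simp only [mul_assoc, hB, hA]
  generalize (a * b) ^ 2 = u at *
  have hui : u⁻¹ = u := inv_eq_of_mul_eq_one_left hu
  have hwu : (b * c) * u = u * (b * c) ^ j * (b * c) := by
    rw [← hj, ← mul_assoc u, hu]; group
  have hcu : c * u = u * (b * (b * c) ^ j * b) * c := by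
    calc c * u = b * ((b * c) * u) := by rw [← mul_assoc, ← hcw]
      _ = (b * u) * ((b * c) ^ j * (b * c)) := by rw [hwu]; simp only [mul_assoc]
      _ = u * (b * (b * c) ^ j * b) * c := by rw [hbu]; simp only [mul_assoc]
  have hcba : c * (b * a) = b * a * (b * ((b * c) ^ j)⁻¹ * (b * c)⁻¹) := by
    -- Both sides are `(b * c)⁻¹ * a`, because `a * (b * c) * a = u * (b * c)`.
    have h1 : c * b = (b * c)⁻¹ := by
      rw [mul_inv_rev, inv_eq_of_mul_eq_one_left hb, inv_eq_of_mul_eq_one_left hc]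
    have h2 : u * (b * c) = (b * c) * (b * c) ^ j * u := by
      have : (b * c) * (b * c) ^ j = (b * c) ^ j * (b * c) := by
        rw [← zpow_one_add, ← zpow_add_one, add_comm]
      rw [this, ← hj]
      have h3 : u * (b * c * u * (b * c)⁻¹) * (b * c) * u = u * (b * c) * (u * u) := by group
      rw [h3, hu, mul_one]
    have h4 : (b * c) * (b * c) ^ j * (u * a) = a * (b * c) := by
      rw [hawa, h2]; simp only [mul_assoc]
    have h5 : b * a * b * ((b * c) ^ j)⁻¹ * (b * c)⁻¹ = (b * c)⁻¹ * a := by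
      have h6 : u * a = ((b * c) ^ j)⁻¹ * (b * c)⁻¹ * (a * (b * c)) := by
        rw [← h4, mul_assoc (b * c), mul_assoc, inv_mul_cancel_left, inv_mul_cancel_left]
      have hai := inv_eq_of_mul_eq_one_left ha
      have h7 : a * u = (b * c)⁻¹ * a * (b * c) * (b * c) ^ j := by
        have := congrArg (·⁻¹) h6
        simp only [mul_inv_rev, inv_inv, hai, hui] at this
        rw [this]; simp only [mul_assoc, mul_inv_rev]
      rw [← hau, h7]; group
    rw [← mul_assoc c b a, h1, ← h5]; simp only [mul_assoc]
  have hbD : b ∈ Subgroup.closure ({b, c} : Set M) := Subgroup.subset_closure (by simp)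
  have hcD : c ∈ Subgroup.closure ({b, c} : Set M) := Subgroup.subset_closure (by simp)
  generalize Subgroup.closure ({b, c} : Set M) = D at *
  have hwD : b * c ∈ D := D.mul_mem hbD hcD
  have hwj : (b * c) ^ j ∈ D := D.zpow_mem hwD j
  let r : Fin 4 → M := ![1, a, b * a, u]
  let f : Fin 4 × D → M := fun p => r p.1 * p.2.1
  have hf : Function.Surjective f := by
    have hf' : ∀ (i : Fin 4) (d : M), d ∈ D → ∃ p, f p = r i * d := fun i d hd =>
      ⟨(i, ⟨d, hd⟩), rfl⟩
    intro x
    refine induction_three ha hb hc hgen (P := fun x => ∃ p, f p = x)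
      ⟨(0, 1), by simp [f, r]⟩ ?_ ?_ ?_ x
    · rintro _ ⟨⟨i, ⟨d, hd⟩⟩, rfl⟩
      fin_cases i
      · convert hf' 1 d hd using 2; simp [f, r]
      · convert hf' 0 d hd using 2; simp [f, r, ← mul_assoc, ha]
      · convert hf' 3 (b * d) (D.mul_mem hbD hd) using 3
        change a * (b * a * d) = u * (b * d)
        rw [← mul_assoc, haba, mul_assoc]
      · convert hf' 2 (b * d) (D.mul_mem hbD hd) using 2
        simp [f, r, ← mul_assoc, hau]
    · rintro _ ⟨⟨i, ⟨d, hd⟩⟩, rfl⟩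
      fin_cases i
      · convert hf' 0 (b * d) (D.mul_mem hbD hd) using 2; simp [f, r]
      · convert hf' 2 d hd using 2; simp [f, r, mul_assoc]
      · convert hf' 1 d hd using 2; simp [f, r, ← mul_assoc, hb]
      · convert hf' 3 (b * d) (D.mul_mem hbD hd) using 2
        simp [f, r, ← mul_assoc, hbu]
    · rintro _ ⟨⟨i, ⟨d, hd⟩⟩, rfl⟩
      fin_cases i
      · convert hf' 0 (c * d) (D.mul_mem hcD hd) using 2; simp [f, r]
      · convert hf' 1 (c * d) (D.mul_mem hcD hd) using 2; simp [f, r, ← mul_assoc, hac]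
      · convert hf' 2 ((b * ((b * c) ^ j)⁻¹ * (b * c)⁻¹) * d) (D.mul_mem (D.mul_mem (D.mul_mem
          hbD (D.inv_mem hwj)) (D.inv_mem hwD)) hd) using 3
        change c * (b * a * d) = b * a * _
        rw [← mul_assoc, hcba]; simp only [mul_assoc]
      · convert hf' 3 ((b * (b * c) ^ j * b) * c * d) (D.mul_mem (D.mul_mem (D.mul_mem (D.mul_mem
          hbD hwj) hbD) hcD) hd) using 3
        change c * (u * d) = u * _
        rw [← mul_assoc, hcu]; simp only [mul_assoc]
  refine ⟨Finite.of_surjective f hf, ?_⟩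
  have := Nat.card_le_card_of_surjective f hf
  rw [Nat.card_prod, Nat.card_fin] at this
  omega

lemma mgrp_card_le (m e : ℕ) (hm : 5 ≤ m) : Finite (Mgrp m e) ∧ Nat.card (Mgrp m e) ≤ 2 ^ m := by
  have hrel : ∀ r ∈ Mrels m e, PresentedGroup.mk (Mrels m e) r = 1 := fun r hr =>
    PresentedGroup.one_of_mem hr
  have hgen : Subgroup.closure ({Msigma m e 0, Msigma m e 1, Msigma m e 2} : Set (Mgrp m e)) = ⊤ := by
    rw [← PresentedGroup.closure_range_of]
    congr 1
    ext x
    simp only [Set.mem_insert_iff, Set.mem_singleton_iff, Set.mem_range, Fin.exists_fin_succ]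
    simp [Msigma, eq_comm]
  have h0 := hrel _ (show FreeGroup.of 0 ^ 2 ∈ _ by simp [Mrels])
  have h1 := hrel _ (show FreeGroup.of 1 ^ 2 ∈ _ by simp [Mrels])
  have h2 := hrel _ (show FreeGroup.of 2 ^ 2 ∈ _ by simp [Mrels])
  have h3 := hrel _ (show (FreeGroup.of 0 * FreeGroup.of 1) ^ 4 ∈ _ by simp [Mrels])
  have h4 := hrel _ (show (FreeGroup.of 0 * FreeGroup.of 2) ^ 2 ∈ _ by simp [Mrels])
  have h5 := hrel _ (show (FreeGroup.of 1 * FreeGroup.of 2) ^ (2 ^ (m - 3)) ∈ _ by simp [Mrels])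
  have h6 := hrel _ (show (FreeGroup.of 0 * FreeGroup.of 1 * FreeGroup.of 2 * FreeGroup.of 1) ^ 2 *
      (FreeGroup.of 2 * FreeGroup.of 1) ^ (2 ^ (m - 4) * e) ∈ _ by simp [Mrels])
  simp only [map_mul, map_pow] at h0 h1 h2 h3 h4 h5 h6
  have hmk : ∀ i, PresentedGroup.mk (Mrels m e) (FreeGroup.of i) = Msigma m e i := fun i => rfl
  simp only [hmk] at h0 h1 h2 h3 h4 h5 h6
  generalize Msigma m e 0 = a at *
  generalize Msigma m e 1 = b at *
  generalize Msigma m e 2 = c at *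
  rw [pow_two] at h0 h1 h2
  have hai : a⁻¹ = a := inv_eq_of_mul_eq_one_left h0
  have hbi : b⁻¹ = b := inv_eq_of_mul_eq_one_left h1
  have hci : c⁻¹ = c := inv_eq_of_mul_eq_one_left h2
  have hac : a * c = c * a := by
    rw [pow_two] at h4
    have := inv_eq_of_mul_eq_one_left h4
    rw [mul_inv_rev, hai, hci] at this
    exact this.symm
  have hu : (a * b) ^ 2 * (a * b) ^ 2 = 1 := by rw [← pow_add]; exact h3
  have hcb : c * b = (b * c)⁻¹ := by rw [mul_inv_rev, hbi, hci]
  have := card_le_of_rels h0 h1 h2 hu hac (N := 2 ^ (m - 3)) (by positivity) h5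
    (j := (2 ^ (m - 4) * e : ℕ)) (by
      rw [← last_rel h0 h1 h2 hac, eq_inv_of_mul_eq_one_left h6, hcb, inv_pow, inv_inv,
        zpow_natCast]) hgen
  refine ⟨this.1, this.2.trans_eq ?_⟩
  obtain ⟨k, rfl⟩ := Nat.exists_eq_add_of_le hm
  rw [show 5 + k - 3 = k + 2 by omega]; ring

/-- To identify `G` with `M(m, e)` it suffices to find generators satisfying the relations,
since `M(m, e)` has order at most `2 ^ m`. -/
lemma mulEquiv_of_rels {G : Type*} [Group G] {m e : ℕ} (hm : 5 ≤ m) (hcard : Nat.card G = 2 ^ m)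
    {a b c : G} (ha : a * a = 1) (hb : b * b = 1)
    (hc : c * c = 1) (hu : (a * b) ^ 2 * (a * b) ^ 2 = 1) (hac : a * c = c * a)
    (hbc : (b * c) ^ (2 ^ (m - 3)) = 1)
    (hj : (a * b) ^ 2 * ((b * c) * (a * b) ^ 2 * (b * c)⁻¹) = (b * c) ^ (2 ^ (m - 4) * e))
    (hgen : Subgroup.closure ({a, b, c} : Set G) = ⊤) : Nonempty (G ≃* Mgrp m e) := by
  have hbi : b⁻¹ = b := inv_eq_of_mul_eq_one_left hb
  have hci : c⁻¹ = c := inv_eq_of_mul_eq_one_left hc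
  have hcb : c * b = (b * c)⁻¹ := by rw [mul_inv_rev, hbi, hci]
  have hac2 : (a * c) * (a * c) = 1 := by
    nth_rw 2 [hac]; rw [mul_assoc, ← mul_assoc c, hc, one_mul, ha]
  have hr : ∀ r ∈ Mrels m e, FreeGroup.lift ![a, b, c] r = 1 := by
    intro r hr
    simp only [Mrels, Set.mem_insert_iff, Set.mem_singleton_iff] at hr
    rcases hr with rfl | rfl | rfl | rfl | rfl | rfl | rfl <;>
      simp only [map_mul, map_pow, FreeGroup.lift_apply_of, Matrix.cons_val]
    · rw [pow_two, ha]
    · rw [pow_two, hb]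
    · rw [pow_two, hc]
    · rw [← hu, ← pow_add]
    · rw [pow_two, hac2]
    · exact hbc
    · rw [last_rel ha hb hc hac, hj, hcb, inv_pow, mul_inv_cancel]
  let φ : Mgrp m e →* G := PresentedGroup.toGroup hr
  have hφ : Function.Surjective φ := by
    rw [← MonoidHom.range_eq_top, eq_top_iff, ← hgen, Subgroup.closure_le]
    rintro x (rfl | rfl | rfl)
    · exact ⟨PresentedGroup.of 0, by simp [φ]⟩
    · exact ⟨PresentedGroup.of 1, by simp [φ]⟩
    · exact ⟨PresentedGroup.of 2, by simp [φ]⟩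
  obtain ⟨hfin, hle⟩ := mgrp_card_le m e hm
  exact ⟨(MulEquiv.ofBijective φ (hφ.bijective_of_nat_card_le (by rw [hcard]; exact hle))).symm⟩

/-! ### The rank of a generating set of a 2-group -/

/-- In a 2-group generated by an independent family of `n` involutions, the squares lie in a
subgroup of index `2 ^ n` (the Frattini subgroup). Each generator `s i` lies outside a maximal
subgroup containing the others; this has index 2, and the intersection of these is the kernel of
a surjection onto `{±1}ⁿ`. -/
lemma exists_frattini {G : Type*} [Group G] [Finite G] (hG : IsPGroup 2 G) {n : ℕ} {s : Fin n → G}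
    (hinv : ∀ i, s i * s i = 1) (hgen : Subgroup.closure (Set.range s) = ⊤)
    (hind : ∀ i, s i ∉ Subgroup.closure (s '' {i}ᶜ)) :
    ∃ N : Subgroup G, Nat.card N * 2 ^ n = Nat.card G ∧ ∀ x, x ^ 2 ∈ N := by
  classical
  have : Group.IsNilpotent G := hG.isNilpotent
  have hchar : ∀ i, ∃ χ : G →* ℤˣ, χ (s i) = -1 ∧ ∀ j, j ≠ i → χ (s j) = 1 := by
    intro i
    obtain h | ⟨M, hM, hle⟩ := eq_top_or_exists_le_coatom (Subgroup.closure (s '' {i}ᶜ))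
    · exact absurd (h ▸ Subgroup.mem_top _) (hind i)
    have hj : ∀ j, j ≠ i → s j ∈ M := fun j hj =>
      hle (Subgroup.subset_closure ⟨j, hj, rfl⟩)
    have hi : s i ∉ M := by
      intro hi
      apply hM.1
      rw [eq_top_iff, ← hgen, Subgroup.closure_le]
      rintro _ ⟨j, rfl⟩
      by_cases h : j = i
      · rw [h]; exact hi
      · exact hj j h
    have hN : M.Normal := Subgroup.NormalizerCondition.normal_of_coatom M
      Group.normalizerCondition_of_isNilpotent hM
    have hidx : M.index = 2 := by
      rw [Subgroup.index_eq_two_iff']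
      refine ⟨s i, fun x => ?_⟩
      have hx : x ∈ Subgroup.closure (Set.range s) := by rw [hgen]; trivial
      have step : ∀ j y, (y ∈ M ∨ s i * y ∈ M) → (s j * y ∈ M ∨ s i * (s j * y) ∈ M) := by
        intro j y hy
        by_cases hji : j = i
        · rw [hji, ← mul_assoc, hinv, one_mul]; exact hy.symm
        · rcases hy with hy | hy
          · exact Or.inl (M.mul_mem (hj j hji) hy)
          · right
            have : s i * (s j * y) = (s i * s j * (s i)⁻¹) * (s i * y) := by group
            rw [this]
            exact M.mul_mem (hN.conj_mem _ (hj j hji) _) hy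
      have hor : x ∈ M ∨ s i * x ∈ M := by
        induction hx using Subgroup.closure_induction_left with
        | one => exact Or.inl M.one_mem
        | mul_left x hx y hy ih => obtain ⟨j, rfl⟩ := hx; exact step j y ih
        | inv_mul_cancel x hx y hy ih =>
          obtain ⟨j, rfl⟩ := hx
          rw [inv_eq_of_mul_eq_one_left (hinv j)]; exact step j y ih
      have hnot : ¬ (x ∈ M ∧ s i * x ∈ M) := fun h => hi ((M.mul_mem_cancel_right h.1).1 h.2)
      rw [xor_iff_or_and_not_and]
      tauto
    refine ⟨{ toFun := fun x => if x ∈ M then 1 else -1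
              map_one' := by simp [M.one_mem]
              map_mul' := fun x y => ?_ }, ?_, ?_⟩
    · have := Subgroup.mul_mem_iff_of_index_two hidx (a := x) (b := y)
      by_cases hx : x ∈ M <;> by_cases hy : y ∈ M <;> simp [this, hx, hy]
    · simp [hi]
    · intro j hji; simp [hj j hji]
  choose χ h1 h2 using hchar
  let φ : G →* (Fin n → ℤˣ) := MonoidHom.pi χ
  have hφ : φ.range = ⊤ := by
    rw [eq_top_iff]
    intro x _
    refine Subgroup.pi_mem_of_mulSingle_mem x fun i => ?_
    rcases Int.units_eq_one_or (x i) with h | h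
    · rw [h, Pi.mulSingle_one]; exact Subgroup.one_mem _
    · refine ⟨s i, ?_⟩
      ext j
      by_cases hji : j = i
      · subst hji; simp [φ, h1, h]
      · simp [φ, h2 j i (Ne.symm hji), Pi.mulSingle_eq_of_ne hji]
  refine ⟨φ.ker, ?_, fun x => ?_⟩
  · rw [← φ.ker.card_mul_index, Subgroup.index_ker, hφ]
    simp [Nat.card_eq_fintype_card]
  · rw [MonoidHom.mem_ker, map_pow]
    ext i; simp

/-! ### The rank 3 case -/

/-- Commutators act trivially by conjugation on a normal cyclic subgroup, since the automorphism
group of a cyclic group is abelian. -/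
lemma comm_of_normalize {G : Type*} [Group G] {a b h : G} {α β : ℤ} (ha : a * a = 1)
    (hb : b * b = 1) (hα : a * h * a⁻¹ = h ^ α) (hβ : b * h * b⁻¹ = h ^ β) :
    (a * b) ^ 2 * h * ((a * b) ^ 2)⁻¹ = h := by
  have hα' : ∀ i : ℤ, a * h ^ i * a⁻¹ = h ^ (α * i) := fun i => by
    rw [← conj_zpow, hα, zpow_mul]
  have hβ' : ∀ i : ℤ, b * h ^ i * b⁻¹ = h ^ (β * i) := fun i => by
    rw [← conj_zpow, hβ, zpow_mul]
  have h1 : h ^ (α * α) = h := by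
    rw [← hα', ← hα]
    have : a * (a * h * a⁻¹) * a⁻¹ = (a * a) * h * (a * a)⁻¹ := by group
    rw [this, ha]; simp
  have h2 : h ^ (β * β) = h := by
    rw [← hβ', ← hβ]
    have : b * (b * h * b⁻¹) * b⁻¹ = (b * b) * h * (b * b)⁻¹ := by group
    rw [this, hb]; simp
  have h3 : (a * b) ^ 2 * h * ((a * b) ^ 2)⁻¹ =
      a * (b * (a * (b * h * b⁻¹) * a⁻¹) * b⁻¹) * a⁻¹ := by
    rw [pow_two]; group
  rw [h3, hβ, hα', hβ', hα', show α * (β * (α * β)) = (α * α) * (β * β) by ring, zpow_mul, h1, h2]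

/-- If `(bc)²` is trivial or equal to `(ab)²`, then `(ab)²` is central and the group is small. -/
lemma card_le_sixteen_of_v {Q : Type*} [Group Q] {a b c : Q} (ha : a * a = 1) (hb : b * b = 1)
    (hc : c * c = 1) (hac : a * c = c * a) (hu : (a * b) ^ 2 * (a * b) ^ 2 = 1)
    (hgen : Subgroup.closure ({a, b, c} : Set Q) = ⊤)
    (hv : (b * c) ^ 2 = 1 ∨ (b * c) ^ 2 = (a * b) ^ 2) : Nat.card Q ≤ 16 := by
  have hai : a⁻¹ = a := inv_eq_of_mul_eq_one_left ha
  have hbi : b⁻¹ = b := inv_eq_of_mul_eq_one_left hb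
  have hci : c⁻¹ = c := inv_eq_of_mul_eq_one_left hc
  have hbu : b * (a * b) ^ 2 = (a * b) ^ 2 * b := mul_inv_eq_iff_eq_mul.1 (b_conj_u ha hb hu)
  have hab : b * a = a * b * (a * b) ^ 2 := by
    have h1 : a * b * (a * b) ^ 2 = (a * b)⁻¹ * ((a * b) ^ 2 * (a * b) ^ 2) := by
      simp only [pow_two]; group
    rw [h1, hu, mul_one, mul_inv_rev, hai, hbi]
  rcases hv with hv | hv
  · have hbc : c * b = b * c := by
      rw [pow_two] at hv
      rw [← inv_eq_of_mul_eq_one_left hv, mul_inv_rev, hbi, hci]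
    have hcu : Commute c ((a * b) ^ 2) :=
      Commute.pow_right (Commute.mul_right (show c * a = a * c from hac.symm) hbc) 2
    exact card_le_sixteen ha hb hc hu hgen hbu.symm hcu.eq.symm hab hac (Or.inl hbc)
  · have hbc : c * b = b * c * (a * b) ^ 2 := by
      rw [← hv] at hu ⊢
      have h1 : b * c * (b * c) ^ 2 = (b * c)⁻¹ * ((b * c) ^ 2 * (b * c) ^ 2) := by
        simp only [pow_two]; group
      rw [h1, hu, mul_one, mul_inv_rev, hbi, hci]
    have huc : (a * b) ^ 2 * c = c * (a * b) ^ 2 := by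
      rw [← hv] at hu ⊢
      have h1 : ((b * c) ^ 2)⁻¹ * c = c * (b * c) ^ 2 := by
        simp only [pow_two, mul_inv_rev, hbi, hci, mul_assoc]
      rw [← h1, inv_eq_of_mul_eq_one_left hu]
    exact card_le_sixteen ha hb hc hu hgen hbu.symm huc hab hac (Or.inr hbc)

/-- The element `(bc)²` has the largest order possible. Here `N` plays the role of the Frattini
subgroup; it is the union of `⟨h⟩` and `(ab)²⟨h⟩` with `h = g²`. -/
lemma order_v {G : Type*} [Group G] [Finite G] {k : ℕ} (hcard : Nat.card G = 2 ^ (k + 5))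
    {N : Subgroup G} (hNcard : Nat.card N = 2 ^ (k + 2)) (hN : ∀ x : G, x ^ 2 ∈ N)
    {g : G} (hg : orderOf (g ^ 2) = 2 ^ (k + 1))
    {a b c : G} (ha : a * a = 1) (hb : b * b = 1) (hc : c * c = 1) (hac : a * c = c * a)
    (hgen : Subgroup.closure ({a, b, c} : Set G) = ⊤)
    (hu : (a * b) ^ 2 * (a * b) ^ 2 = 1) (huZ : (a * b) ^ 2 ∉ Subgroup.zpowers (g ^ 2))
    (hv : (b * c) ^ 2 ≠ 1) : ((b * c) ^ 2) ^ (2 ^ k) ≠ 1 := by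
  have hconj : ∀ y, y * g ^ 2 * y⁻¹ ∈ N := fun y => by rw [← conj_pow]; exact hN _
  have hgN := hN g
  have huN := hN (a * b)
  have hvN := hN (b * c)
  have hab : ∀ {α β : ℤ}, a * g ^ 2 * a⁻¹ = (g ^ 2) ^ α → b * g ^ 2 * b⁻¹ = (g ^ 2) ^ β →
      (a * b) ^ 2 * g ^ 2 * ((a * b) ^ 2)⁻¹ = g ^ 2 := fun h1 h2 =>
    comm_of_normalize ha hb h1 h2
  have hsmall : ∀ K : Subgroup G, K.Normal → Nat.card K = 2 ^ k →
      ((b * c) ^ 2 ∈ K ∨ ∃ x ∈ K, (b * c) ^ 2 = (a * b) ^ 2 * x) → False := by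
    intro K hK hKcard hvK
    have h32 : Nat.card (G ⧸ K) = 32 := by
      have := K.card_mul_index
      rw [hKcard, hcard, Subgroup.index_eq_card, pow_add] at this
      exact Nat.eq_of_mul_eq_mul_left (by positivity) this
    have h16 : Nat.card (G ⧸ K) ≤ 16 := by
      refine card_le_sixteen_of_v (a := (a : G ⧸ K)) (b := (b : G ⧸ K)) (c := (c : G ⧸ K))
        ?_ ?_ ?_ ?_ ?_ ?_ ?_
      · exact congrArg (QuotientGroup.mk' K) ha
      · exact congrArg (QuotientGroup.mk' K) hb
      · exact congrArg (QuotientGroup.mk' K) hc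
      · exact congrArg (QuotientGroup.mk' K) hac
      · exact congrArg (QuotientGroup.mk' K) hu
      · have := congrArg (Subgroup.map (QuotientGroup.mk' K)) hgen
        rw [MonoidHom.map_closure, Subgroup.map_top_of_surjective _
          (QuotientGroup.mk'_surjective K)] at this
        simpa [Set.image_insert_eq] using this
      · rcases hvK with h | ⟨x, hx, h⟩
        · left; exact (QuotientGroup.eq_one_iff _).2 h
        · right
          have h' := congrArg (QuotientGroup.mk' K) h
          rw [map_mul, show QuotientGroup.mk' K x = 1 from (QuotientGroup.eq_one_iff x).2 hx,
            mul_one] at h'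
          exact h'
    omega
  generalize (a * b) ^ 2 = u at *
  generalize (b * c) ^ 2 = v at *
  generalize g ^ 2 = h at *
  have hui : u⁻¹ = u := inv_eq_of_mul_eq_one_left hu
  have hNZ : ∀ x ∈ N, ∃ i : ℤ, x = h ^ i ∨ x = u * h ^ i := by
    intro x hx
    by_cases hxZ : x ∈ Subgroup.zpowers h
    · obtain ⟨i, rfl⟩ := hxZ; exact ⟨i, Or.inl rfl⟩
    · obtain ⟨_, ⟨i, rfl⟩, hi⟩ := coset_of_card (Z := Subgroup.zpowers h) (N := N)
        (by rw [Subgroup.zpowers_le]; exact hgN)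
        (by rw [Nat.card_zpowers, hg, hNcard]; ring) huN huZ hx hxZ
      exact ⟨i, Or.inr hi⟩
  obtain ⟨r, hr⟩ : ∃ r : ℤ, u * h * u⁻¹ = h ^ r := by
    obtain ⟨r, hr | hr⟩ := hNZ _ (hconj u)
    · exact ⟨r, hr⟩
    · exfalso; apply huZ
      rw [mul_assoc, mul_right_inj, mul_inv_eq_iff_eq_mul] at hr
      refine ⟨-r + 1, ?_⟩
      change h ^ (-r + 1) = u
      rw [zpow_add_one, zpow_neg, inv_mul_eq_iff_eq_mul]
      exact hr
  have hr' : ∀ i : ℤ, u * h ^ i * u⁻¹ = h ^ (r * i) := fun i => by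
    rw [← conj_zpow, hr, zpow_mul]
  have hsq : ∀ i : ℤ, (u * h ^ i) ^ 2 = h ^ (i * (r + 1)) := by
    intro i
    have : (u * h ^ i) ^ 2 = (u * h ^ i * u) * h ^ i := by rw [pow_two]; simp only [mul_assoc]
    rw [this]
    nth_rw 2 [← hui]
    rw [hr', ← zpow_add]; congr 1; ring
  have hrodd : Odd r := by
    have h1 : h ^ (r * r - 1) = 1 := by
      rw [zpow_sub_one, ← hr', ← hr]
      have : u * (u * h * u⁻¹) * u⁻¹ = (u * u) * h * (u * u)⁻¹ := by group
      rw [this, hu]; simp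
    rw [zpow_pow_dvd hg, pow_succ] at h1
    have h2 : (2 : ℤ) ∣ r * r - 1 := (Dvd.intro_left _ rfl).trans h1
    by_contra hne
    obtain ⟨s, rfl⟩ := Int.not_odd_iff_even.1 hne
    have h3 : (2 : ℤ) ∣ (s + s) * (s + s) := ⟨s * (s + s), by ring⟩
    omega
  obtain ⟨j, hj⟩ := hNZ v hvN
  rcases Int.even_or_odd j with ⟨t, ht⟩ | hodd
  · -- `v` lies in `K` or `uK` for `K = ⟨h²⟩`, which is normal in `G`.
    exfalso
    have hKh : ∀ i : ℤ, Even i → h ^ i ∈ Subgroup.zpowers (h ^ 2) := by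
      rintro i ⟨t, rfl⟩
      refine ⟨t, ?_⟩
      change (h ^ 2) ^ t = h ^ (t + t)
      rw [← zpow_natCast, ← zpow_mul]; congr 1; push_cast; ring
    refine hsmall (Subgroup.zpowers (h ^ 2)) ⟨?_⟩ ?_ ?_
    · rintro _ ⟨i, rfl⟩ y
      simp only
      rw [← conj_zpow]
      refine Subgroup.zpow_mem _ ?_ i
      rw [← conj_pow]
      obtain ⟨l, hl | hl⟩ := hNZ _ (hconj y)
      · rw [hl, pow_two (h ^ l), ← zpow_add]
        exact hKh _ ⟨l, rfl⟩
      · rw [hl, hsq]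
        exact hKh _ ((hrodd.add_odd odd_one).mul_left l)
    · rw [Nat.card_zpowers, orderOf_pow_of_dvd (by norm_num) (by rw [hg, pow_succ]; simp), hg,
        pow_succ]
      simp
    · rcases hj with hj | hj
      · exact Or.inl (hj ▸ hKh j ⟨t, ht⟩)
      · exact Or.inr ⟨_, hKh j ⟨t, ht⟩, hj⟩
  · rcases hj with rfl | rfl
    · intro h1
      rw [← zpow_natCast, ← zpow_mul, zpow_pow_dvd hg, pow_succ, mul_comm j] at h1
      push_cast at h1
      have := Int.dvd_of_mul_dvd_mul_left (by positivity) h1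
      obtain ⟨t, rfl⟩ := hodd
      omega
    · obtain _ | k := k
      · simpa using hv
      · intro h1
        have h4 : (4 : ℤ) ∣ r + 1 := by
          rw [pow_succ', pow_mul, hsq, ← zpow_natCast, ← zpow_mul, zpow_pow_dvd hg] at h1
          have h2 : (2 : ℤ) ^ k * 4 ∣ 2 ^ k * (j * (r + 1)) := by
            convert h1 using 1
            · ring
            · push_cast; ring
          have h3 := Int.dvd_of_mul_dvd_mul_left (by positivity) h2
          refine IsCoprime.dvd_of_dvd_mul_left ?_ h3
          have : IsCoprime ((2 : ℤ) ^ 2) j := IsCoprime.pow_left (by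
            obtain ⟨t, rfl⟩ := hodd; exact ⟨-t, 1, by ring⟩)
          simpa using this
        -- Elements of `u⟨h⟩` have squares in `⟨h⁴⟩`, hence smaller order than `h`, so `⟨h⟩` is normal.
        have hnorm : ∀ y, ∃ α : ℤ, y * h * y⁻¹ = h ^ α := by
          intro y
          obtain ⟨l, hl | hl⟩ := hNZ _ (hconj y)
          · exact ⟨l, hl⟩
          · exfalso
            have h5 : (y * h * y⁻¹) ^ 2 ^ (k + 1) = 1 := by
              rw [hl, pow_succ', pow_mul, hsq, ← zpow_natCast, ← zpow_mul, zpow_pow_dvd hg]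
              obtain ⟨t, ht⟩ := h4
              exact ⟨l * t, by rw [ht]; push_cast; ring⟩
            rw [conj_pow, mul_inv_eq_one, mul_eq_left, ← orderOf_dvd_iff_pow_eq_one, hg,
              Nat.pow_dvd_pow_iff_le_right (by norm_num)] at h5
            omega
        obtain ⟨α, hα⟩ := hnorm a
        obtain ⟨β, hβ⟩ := hnorm b
        have h6 : h ^ (r - 1) = 1 := by
          rw [zpow_sub_one, ← hr, hab hα hβ, mul_inv_cancel]
        rw [zpow_pow_dvd hg] at h6
        have h7 : (4 : ℤ) ∣ r - 1 := Dvd.dvd.trans ⟨2 ^ k, by ring⟩ h6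
        omega

/-- A 2-group generated by three involutions as in the theorem, with the first rotation of
order 4, satisfies the relations of `M(m, e)`, where `m = k + 5`. -/
lemma rank_three {G : Type*} [Group G] [Finite G] {k : ℕ} (hcard : Nat.card G = 2 ^ (k + 5))
    (hexp : ∀ x : G, x ^ 2 ^ (k + 2) = 1)
    {N : Subgroup G} (hNcard : Nat.card N = 2 ^ (k + 2)) (hN : ∀ x : G, x ^ 2 ∈ N)
    {g : G} (hg : orderOf (g ^ 2) = 2 ^ (k + 1))
    {a b c : G} (ha : a * a = 1) (hb : b * b = 1) (hc : c * c = 1) (hac : a * c = c * a)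
    (hgen : Subgroup.closure ({a, b, c} : Set G) = ⊤)
    (hu : (a * b) ^ 2 * (a * b) ^ 2 = 1) (huZ : (a * b) ^ 2 ∉ Subgroup.zpowers (g ^ 2))
    (huV : (a * b) ^ 2 ∉ Subgroup.zpowers ((b * c) ^ 2))
    (hv : (b * c) ^ 2 ≠ 1) :
    ∃ e : ℕ, e ≤ 1 ∧ (k + 5 = 5 → e = 0) ∧ Nonempty (G ≃* Mgrp (k + 5) e) := by
  have hvo : orderOf ((b * c) ^ 2) = 2 ^ (k + 1) := by
    refine orderOf_eq_prime_pow (order_v hcard hNcard hN hg ha hb hc hac hgen hu huZ hv) ?_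
    rw [← pow_mul, ← pow_succ']; exact hexp _
  suffices ∃ e : ℕ, e ≤ 1 ∧ (k + 5 = 5 → e = 0) ∧
      (a * b) ^ 2 * ((b * c) * (a * b) ^ 2 * (b * c)⁻¹) = (b * c) ^ (2 ^ (k + 1) * e) by
    obtain ⟨e, he1, he2, he⟩ := this
    exact ⟨e, he1, he2, mulEquiv_of_rels (by omega) hcard ha hb hc hu hac
      (by simpa using hexp (b * c)) (by simpa using he) hgen⟩
  have huN := hN (a * b)
  have hvN := hN (b * c)
  have hwN : (b * c) * (a * b) ^ 2 * (b * c)⁻¹ ∈ N := by rw [← conj_pow]; exact hN _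
  have hwv : (b * c) ^ 2 * (b * c) = (b * c) * (b * c) ^ 2 := by rw [pow_two, mul_assoc]
  have hvw : ∀ i : ℤ, (b * c)⁻¹ * ((b * c) ^ 2) ^ i * (b * c) = ((b * c) ^ 2) ^ i := by
    intro i
    have : Commute (((b * c) ^ 2) ^ i) (b * c) := Commute.zpow_left hwv i
    rw [mul_assoc, this.eq, inv_mul_cancel_left]
  have hav := a_conj_v ha hb hac
  have hbv : b * (b * c) ^ 2 * b⁻¹ = ((b * c) ^ 2) ^ (-1 : ℤ) := by
    rw [← conj_pow, b_conj_w hb hc, inv_pow, zpow_neg_one]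
  have hpow : ∀ e : ℕ, (b * c) ^ (2 ^ (k + 1) * e) = ((b * c) ^ 2) ^ (2 ^ k * e) := by
    intro e; rw [← pow_mul]; congr 1; ring
  have hcomm : ∀ {α : ℤ}, a * (b * c) ^ 2 * a⁻¹ = ((b * c) ^ 2) ^ α →
      (a * b) ^ 2 * (b * c) ^ 2 * ((a * b) ^ 2)⁻¹ = (b * c) ^ 2 := fun h =>
    comm_of_normalize ha hb h hbv
  simp only [hpow]
  have hwu2 : ((b * c) * (a * b) ^ 2 * (b * c)⁻¹) ^ 2 = 1 := by
    rw [conj_pow, pow_two ((a * b) ^ 2), hu]; group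
  generalize (a * b) ^ 2 = u at *
  generalize (b * c) ^ 2 = v at *
  generalize b * c = w at *
  obtain ⟨j, hj⟩ : ∃ j : ℤ, w * u * w⁻¹ = u * v ^ j := by
    have hnot : w * u * w⁻¹ ∉ Subgroup.zpowers v := by
      rintro ⟨i, hi⟩
      apply huV
      refine ⟨i, ?_⟩
      have : u = w⁻¹ * (w * u * w⁻¹) * w := by group
      rw [this, ← hi]; exact (hvw i).symm
    obtain ⟨_, ⟨i, rfl⟩, hi⟩ := coset_of_card (Z := Subgroup.zpowers v) (N := N)
      (by rw [Subgroup.zpowers_le]; exact hvN)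
      (by rw [Nat.card_zpowers, hvo, hNcard]; ring) huN huV hwN hnot
    exact ⟨i, hi⟩
  have huj : u * (w * u * w⁻¹) = v ^ j := by rw [hj, ← mul_assoc, hu, one_mul]
  -- Hence `a` normalizes `⟨v⟩`, and `u` centralizes it.
  have hav' : a * v * a⁻¹ = v ^ (j + 1) := by rw [hav, huj, zpow_add_one]
  have huv : Commute u v := mul_inv_eq_iff_eq_mul.1 (hcomm hav')
  have h2j : v ^ (j * 2) = 1 := by
    rw [hj, (huv.zpow_right j).mul_pow, pow_two u, hu, one_mul, ← zpow_natCast, ← zpow_mul] at hwu2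
    exact hwu2
  rw [zpow_pow_dvd hvo, pow_succ] at h2j
  obtain ⟨t, ht⟩ := Int.dvd_of_mul_dvd_mul_right (by norm_num) h2j
  rcases Int.even_or_odd t with ⟨s, hs⟩ | ⟨s, hs⟩
  · refine ⟨0, by norm_num, fun _ => rfl, ?_⟩
    rw [huj, mul_zero, pow_zero, zpow_pow_dvd hvo]
    exact ⟨s, by rw [ht, hs]; ring⟩
  · refine ⟨1, le_rfl, fun hk => ?_, ?_⟩
    · exfalso
      have hk0 : k = 0 := by omega
      subst hk0
      apply hv
      have : v ^ (j + 1) = 1 := by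
        rw [zpow_pow_dvd hvo]; exact ⟨s + 1, by rw [ht, hs]; ring⟩
      rwa [← hav', mul_inv_eq_one, mul_eq_left] at this
    · rw [huj, mul_one, ← mul_inv_eq_one, ← zpow_natCast, ← zpow_sub, zpow_pow_dvd hvo]
      exact ⟨s, by rw [ht, hs]; push_cast; ring⟩

/-- In rank 3 one of the rotations `ab`, `bc` has order 4 and its square lies outside `⟨g²⟩`,
because `⟨g²⟩` has index 2 in the Frattini subgroup `N`, while the subgroups generated by
`(ab)²` and `(bc)²` meet trivially. Up to reversing the string this is the situation of
`rank_three`. -/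
lemma rank_three' {G : Type*} [Group G] [Finite G] {k : ℕ} (hcard : Nat.card G = 2 ^ (k + 5))
    (hexp : ∀ x : G, x ^ 2 ^ (k + 2) = 1)
    {N : Subgroup G} (hNcard : Nat.card N = 2 ^ (k + 2)) (hN : ∀ x : G, x ^ 2 ∈ N)
    {g : G} (hg : orderOf (g ^ 2) = 2 ^ (k + 1))
    {a b c : G} (ha : a * a = 1) (hb : b * b = 1) (hc : c * c = 1) (hac : a * c = c * a)
    (hgen : Subgroup.closure ({a, b, c} : Set G) = ⊤)
    (hu : (a * b) ^ 2 ≠ 1) (hv : (b * c) ^ 2 ≠ 1)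
    (hcap : ∀ x ∈ Subgroup.zpowers ((a * b) ^ 2), x ∈ Subgroup.zpowers ((b * c) ^ 2) → x = 1) :
    ∃ e : ℕ, e ≤ 1 ∧ (k + 5 = 5 → e = 0) ∧ Nonempty (G ≃* Mgrp (k + 5) e) := by
  have hai : a⁻¹ = a := inv_eq_of_mul_eq_one_left ha
  have hbi : b⁻¹ = b := inv_eq_of_mul_eq_one_left hb
  have hci : c⁻¹ = c := inv_eq_of_mul_eq_one_left hc
  have hba : (b * a) ^ 2 = ((a * b) ^ 2)⁻¹ := by rw [← inv_pow, mul_inv_rev, hai, hbi]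
  have hcb : (c * b) ^ 2 = ((b * c) ^ 2)⁻¹ := by rw [← inv_pow, mul_inv_rev, hbi, hci]
  have hsq : ∀ x ∈ N, x ^ 2 ∈ Subgroup.zpowers (g ^ 2) := by
    intro x hx
    by_cases hxZ : x ∈ Subgroup.zpowers (g ^ 2)
    · exact Subgroup.pow_mem _ hxZ 2
    by_contra hx2
    obtain ⟨z, hz, hxz⟩ := coset_of_card (Z := Subgroup.zpowers (g ^ 2)) (N := N)
      (by rw [Subgroup.zpowers_le]; exact hN g)
      (by rw [Nat.card_zpowers, hg, hNcard]; ring) hx hxZ (N.pow_mem hx 2) hx2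
    rw [pow_two, mul_right_inj] at hxz
    exact hxZ (hxz ▸ hz)
  -- The two rotation subgroups cannot both meet the cyclic group `⟨g²⟩`
  have hexcl : ∀ x ∈ Subgroup.zpowers ((a * b) ^ 2), ∀ y ∈ Subgroup.zpowers ((b * c) ^ 2),
      x ∈ Subgroup.zpowers (g ^ 2) → y ∈ Subgroup.zpowers (g ^ 2) → x ≠ 1 → y = 1 := by
    intro x hx y hy hxZ hyZ hx1
    by_contra hy1
    have h1 := Subgroup.zpowers_le.2 hx (involution_mem hg hxZ hx1)
    have h2 := Subgroup.zpowers_le.2 hy (involution_mem hg hyZ hy1)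
    have h3 := hcap _ h1 h2
    rw [← orderOf_dvd_iff_pow_eq_one, hg, Nat.pow_dvd_pow_iff_le_right (by norm_num)] at h3
    omega
  have hum := Subgroup.mem_zpowers ((a * b) ^ 2)
  have hvm := Subgroup.mem_zpowers ((b * c) ^ 2)
  by_cases hmain : ((a * b) ^ 2) ^ 2 = 1 ∧ (a * b) ^ 2 ∉ Subgroup.zpowers (g ^ 2)
  · refine rank_three hcard hexp hNcard hN hg ha hb hc hac hgen ?_ hmain.2 ?_ hv
    · rw [← pow_two, hmain.1]
    · exact fun h => hu (hcap _ hum h)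
  · have hdual : ((b * c) ^ 2) ^ 2 = 1 ∧ (b * c) ^ 2 ∉ Subgroup.zpowers (g ^ 2) := by
      have hv2 := Subgroup.pow_mem _ hvm 2
      have hu2 := Subgroup.pow_mem _ hum 2
      by_cases huZ : (a * b) ^ 2 ∈ Subgroup.zpowers (g ^ 2)
      · exact ⟨hexcl _ hum _ hv2 huZ (hsq _ (hN _)) hu, fun h => hv (hexcl _ hum _ hvm huZ h hu)⟩
      · have hu21 : ((a * b) ^ 2) ^ 2 ≠ 1 := fun h => hmain ⟨h, huZ⟩
        have huZ2 := hsq _ (hN (a * b))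
        exact ⟨hexcl _ hu2 _ hv2 huZ2 (hsq _ (hN _)) hu21,
          fun h => hv (hexcl _ hu2 _ hvm huZ2 h hu21)⟩
    refine rank_three (a := c) (b := b) (c := a) hcard hexp hNcard hN hg hc hb ha hac.symm ?_
      ?_ ?_ ?_ ?_
    · rw [← hgen]; congr 1; ext x; simp only [Set.mem_insert_iff, Set.mem_singleton_iff]; tauto
    · rw [hcb, ← pow_two, inv_pow, hdual.1, inv_one]
    · rw [hcb, inv_mem_iff]; exact hdual.2
    · rw [hcb, hba, inv_mem_iff, Subgroup.zpowers_inv]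
      exact fun h => hv (hcap _ h hvm)
    · rw [hba]; simpa using hu

/-! ### String C-groups -/

/-- The product of two adjacent generators of a connected family has nontrivial square. -/
lemma adj_sq_ne_one {G : Type*} [Group G] {a b : G} (h : 2 < orderOf (a * b)) :
    (a * b) ^ 2 ≠ 1 := fun h' => by
  have := orderOf_le_of_pow_eq_one (by norm_num) h'
  omega

/-- A connected string C-group of order 2^m and exponent 2^(m-3)
satisfies m ≥ 5, and is isomorphic to the presented group M(m, e) for some
e ∈ {0, 1}, with e = 0 when m = 5. -/
theorem stmt_7 {G : Type*} [Group G] [Finite G] (m n : ℕ) (hn : 1 ≤ n)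
    (hcard : Nat.card G = 2 ^ m) (hexp : Monoid.exponent G = 2 ^ (m - 3))
    (s : Fin n → G) (hs : IsStringCGroup s) (hconn : IsConnectedFamily s) :
    5 ≤ m ∧ ∃ e : ℕ, e ≤ 1 ∧ (m = 5 → e = 0) ∧ Nonempty (G ≃* Mgrp m e) := by
  obtain ⟨hinj, hinv, hgen, hcomm, hcap⟩ := hs
  have hinv' : ∀ i, s i * s i = 1 := fun i => by rw [← pow_two]; exact (hinv i).2
  have hpow : ∀ x : G, x ^ 2 ^ (m - 3) = 1 := fun x => hexp ▸ Monoid.pow_exponent_eq_one x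
  have hn2 : 2 ≤ n := by
    by_contra hlt
    obtain rfl : n = 1 := by omega
    have htop : Subgroup.zpowers (s 0) = ⊤ := by
      rw [← hgen, Subgroup.zpowers_eq_closure]; congr 1; ext x; simp [Fin.exists_fin_one, eq_comm]
    have h2 : orderOf (s 0) = 2 := orderOf_eq_prime (hinv 0).2 (hinv 0).1
    rw [← Nat.card_zpowers, htop, Subgroup.card_top, hcard] at h2
    have hm : m = 1 := Nat.pow_right_injective le_rfl (by simpa using h2)
    subst hm
    exact (hinv 0).1 (by simpa using hpow (s 0))
  have hm : 5 ≤ m := by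
    by_contra hlt
    refine adj_sq_ne_one (hconn 0 (by omega) (by omega)) ?_
    have h := hpow (s ⟨0, by omega⟩ * s ⟨0 + 1, by omega⟩)
    obtain ⟨d, hd⟩ : 2 ^ (m - 3) ∣ 2 ^ 1 := pow_dvd_pow 2 (by omega)
    rw [show 2 = 2 ^ (m - 3) * d by simpa using hd, pow_mul, h, one_pow]
  refine ⟨hm, ?_⟩
  obtain ⟨k, rfl⟩ := Nat.exists_eq_add_of_le' hm
  rw [show k + 5 - 3 = k + 2 by omega] at hexp hpow
  have hn3 : 3 ≤ n := by
    by_contra hlt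
    obtain rfl : n = 2 := by omega
    have htop : Subgroup.closure ({s 0, s 1} : Set G) = ⊤ := by
      rw [← hgen]; congr 1; ext x; simp [Fin.exists_fin_two, eq_comm]
    have h := (card_dihedral_le (hinv' 0) (hinv' 1) (N := 2 ^ (k + 2)) (by positivity)
      (hpow _)).2
    rw [htop, Subgroup.card_top, hcard, ← pow_succ', Nat.pow_le_pow_iff_right (by norm_num)] at h
    omega
  have hind : ∀ i, s i ∉ Subgroup.closure (s '' {i}ᶜ) := by
    intro i hi
    have h := hcap {i} {i}ᶜ
    have h1 : s i ∈ Subgroup.closure (s '' {i}) := Subgroup.subset_closure ⟨i, rfl, rfl⟩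
    have h2 : s i ∈ Subgroup.closure (s '' ({i} ∩ {i}ᶜ)) := h ▸ ⟨h1, hi⟩
    simp only [Set.inter_compl_self, Set.image_empty, Subgroup.closure_empty,
      Subgroup.mem_bot] at h2
    exact (hinv i).1 h2
  obtain ⟨N, hNcard, hN⟩ := exists_frattini (IsPGroup.of_card hcard) hinv' hgen hind
  obtain ⟨g, hg⟩ := Nat.Prime.exists_orderOf_eq_pow_factorization_exponent G Nat.prime_two
  rw [hexp, Nat.Prime.factorization_pow Nat.prime_two, Finsupp.single_eq_same] at hg
  have hh : orderOf (g ^ 2) = 2 ^ (k + 1) := by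
    rw [orderOf_pow_of_dvd (by norm_num) (by rw [hg, pow_succ]; simp), hg, pow_succ]
    simp
  have hle : Subgroup.zpowers (g ^ 2) ≤ N := by rw [Subgroup.zpowers_le]; exact hN g
  have hcle : 2 ^ (k + 1) ≤ Nat.card N := by
    rw [← hh, ← Nat.card_zpowers]
    exact Nat.le_of_dvd Nat.card_pos (Subgroup.card_dvd_of_le hle)
  rw [hcard] at hNcard
  have hn4 : n ≤ 4 := by
    have h1 : 2 ^ (k + 1 + n) ≤ 2 ^ (k + 5) := by
      rw [← hNcard, pow_add]; exact Nat.mul_le_mul_right _ hcle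
    rw [Nat.pow_le_pow_iff_right (by norm_num)] at h1
    omega
  obtain rfl | rfl : n = 3 ∨ n = 4 := by omega
  · have hNcard' : Nat.card N = 2 ^ (k + 2) := by
      have : Nat.card N * 2 ^ 3 = 2 ^ (k + 2) * 2 ^ 3 := by rw [hNcard, ← pow_add]
      exact Nat.eq_of_mul_eq_mul_right (by norm_num) this
    have hu : (s 0 * s 1) ^ 2 ≠ 1 := adj_sq_ne_one (hconn 0 (by omega) (by omega))
    have hv : (s 1 * s 2) ^ 2 ≠ 1 := adj_sq_ne_one (hconn 1 (by omega) (by omega))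
    refine rank_three' hcard hpow hNcard' hN hh (hinv' 0) (hinv' 1) (hinv' 2)
      (hcomm 0 2 (by simp)) ?_ hu hv ?_
    · rw [← hgen]; congr 1; ext x
      simp only [Set.mem_insert_iff, Set.mem_singleton_iff, Set.mem_range, Fin.exists_fin_succ]
      simp [eq_comm]
    · intro x hxu hxv
      have h0 : ∀ i ∈ ({0, 1} : Set (Fin 3)), s i ∈ Subgroup.closure (s '' {0, 1}) :=
        fun i hi => Subgroup.subset_closure ⟨i, hi, rfl⟩
      have h1 : ∀ i ∈ ({1, 2} : Set (Fin 3)), s i ∈ Subgroup.closure (s '' {1, 2}) :=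
        fun i hi => Subgroup.subset_closure ⟨i, hi, rfl⟩
      have hx0 : x ∈ Subgroup.closure (s '' {0, 1}) := Subgroup.zpowers_le.2 (Subgroup.pow_mem _
        (Subgroup.mul_mem _ (h0 0 (by simp)) (h0 1 (by simp))) 2) hxu
      have hx1 : x ∈ Subgroup.closure (s '' {1, 2}) := Subgroup.zpowers_le.2 (Subgroup.pow_mem _
        (Subgroup.mul_mem _ (h1 1 (by simp)) (h1 2 (by simp))) 2) hxv
      have hx : x ∈ Subgroup.closure (s '' ({0, 1} ∩ {1, 2})) := hcap _ _ ▸ ⟨hx0, hx1⟩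
      have hset : ({0, 1} ∩ {1, 2} : Set (Fin 3)) = {1} := by ext i; fin_cases i <;> simp
      rw [hset, Set.image_singleton, ← Subgroup.zpowers_eq_closure] at hx
      by_contra hx1
      -- Otherwise `s 1` would be a power of the rotation `s 0 * s 1`, hence commute with it.
      have hxs : s 1 ∈ Subgroup.zpowers x := by
        have := involution_mem (k := 0) (h := s 1) (by
          simpa using orderOf_eq_prime (hinv 1).2 (hinv 1).1) hx hx1
        simpa using this
      obtain ⟨i, hi⟩ := Subgroup.zpowers_le.2 hxu hxs
      have hcm : Commute ((s 0 * s 1) ^ 2) (s 0 * s 1) := Commute.pow_self _ 2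
      have h3 : Commute (s 1) (s 0 * s 1) := by
        have hz := hcm.zpow_left i
        rwa [show ((s 0 * s 1) ^ 2) ^ i = s 1 from hi] at hz
      have h4 : s 1 * s 0 = s 0 * s 1 := by
        have := h3.eq
        rw [← mul_assoc] at this
        exact mul_right_cancel this
      apply hu
      calc (s 0 * s 1) ^ 2 = s 0 * (s 1 * s 0) * s 1 := by rw [pow_two]; simp only [mul_assoc]
        _ = (s 0 * s 0) * (s 1 * s 1) := by rw [h4]; simp only [mul_assoc]
        _ = 1 := by rw [hinv', hinv', mul_one]
  · exfalso
    have hNcard' : Nat.card N = 2 ^ (k + 1) := by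
      have : Nat.card N * 2 ^ 4 = 2 ^ (k + 1) * 2 ^ 4 := by rw [hNcard, ← pow_add]
      exact Nat.eq_of_mul_eq_mul_right (by norm_num) this
    have hNZ : Subgroup.zpowers (g ^ 2) = N :=
      Subgroup.eq_of_le_of_card_ge hle (by rw [Nat.card_zpowers, hh, hNcard'])
    have hmem : ∀ i j : Fin 4, (s i * s j) ^ 2 ≠ 1 →
        (g ^ 2) ^ 2 ^ k ∈ Subgroup.closure (s '' {i, j}) := by
      intro i j hij
      have hi : s i ∈ Subgroup.closure (s '' {i, j}) := Subgroup.subset_closure ⟨i, by simp, rfl⟩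
      have hj : s j ∈ Subgroup.closure (s '' {i, j}) := Subgroup.subset_closure ⟨j, by simp, rfl⟩
      exact Subgroup.zpowers_le.2 (Subgroup.pow_mem _ (Subgroup.mul_mem _ hi hj) 2)
        (involution_mem hh (hNZ ▸ hN _) hij)
    have h01 := hmem 0 1 (adj_sq_ne_one (hconn 0 (by omega) (by omega)))
    have h23 := hmem 2 3 (adj_sq_ne_one (hconn 2 (by omega) (by omega)))
    have hx : (g ^ 2) ^ 2 ^ k ∈ Subgroup.closure (s '' ({0, 1} ∩ {2, 3})) :=
      hcap _ _ ▸ ⟨h01, h23⟩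
    have hset : ({0, 1} ∩ {2, 3} : Set (Fin 4)) = ∅ := by ext i; fin_cases i <;> simp
    rw [hset, Set.image_empty, Subgroup.closure_empty, Subgroup.mem_bot,
      ← orderOf_dvd_iff_pow_eq_one, hh, Nat.pow_dvd_pow_iff_le_right (by norm_num)] at hx
    omega
end

section
/- For every m ≥ 7 and every e ∈ {0, 1}, the presented group M(m, e) has cardinality Nat.card (M(m, e)) = 2^m and exponent Monoid.exponent (M(m, e)) = 2^(m−3). -/
namespace Pres

/-! ### Normal form and upper bound -/

section UpperBound

variable {G : Type*} [Group G]

lemma exists_fin_pow (g : G) (n : ℕ) (hn : 0 < n) (hg : g ^ n = 1) (i : ℤ) :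
    ∃ k : Fin n, g ^ (k : ℕ) = g ^ i := by
  have hn' : (0 : ℤ) < n := by exact_mod_cast hn
  have h0 := Int.emod_nonneg i hn'.ne'
  have h1 := Int.emod_lt_of_pos i hn'
  refine ⟨⟨(i % n).toNat, by omega⟩, ?_⟩
  have h2 : (((i % n).toNat : ℕ) : ℤ) = i % n := Int.toNat_of_nonneg h0
  have h3 : g ^ (n : ℤ) = 1 := by exact_mod_cast hg
  rw [← zpow_natCast, h2]
  conv_rhs => rw [← Int.emod_add_mul_ediv i n, zpow_add, zpow_mul, h3, one_zpow, mul_one]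

lemma zpow_eq_one_or (g : G) (hg : g * g = 1) (s : ℤ) : g ^ s = 1 ∨ g ^ s = g := by
  have h2 : g ^ (2 : ℤ) = 1 := by rw [zpow_two, hg]
  rcases Int.even_or_odd' s with ⟨k, rfl | rfl⟩
  · left; rw [zpow_mul, h2, one_zpow]
  · right; rw [zpow_add, zpow_mul, h2, one_zpow, one_mul, zpow_one]

/-- An involution conjugating `t` to `t ^ q` moves past powers of `t`. -/
lemma invol_mul_zpow {g t : G} {q : ℤ} (hg : g * g = 1) (h : g * t * g = t ^ q) (i : ℤ) :
    g * t ^ i = t ^ (q * i) * g := by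
  have hgi : g⁻¹ = g := inv_eq_of_mul_eq_one_left hg
  have h1 : g * t ^ i * g⁻¹ = t ^ (q * i) := by
    rw [← conj_zpow, hgi, h, zpow_mul]
  rw [← h1]; group

/-- The normal form `tⁱ cˢ (ab)ʲ aᵏ`, with `t = (cb)²`. -/
lemma normal_form {a b c : G} {q : ℤ} (ha : a * a = 1) (hb : b * b = 1) (hc : c * c = 1)
    (hac : a * c = c * a) (hat : a * (c * b) ^ 2 * a = ((c * b) ^ 2) ^ q)
    (hgen : Subgroup.closure {a, b, c} = ⊤) (g : G) :
    ∃ i s j k : ℤ, g = ((c * b) ^ 2) ^ i * c ^ s * (a * b) ^ j * a ^ k := by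
  have hai : a⁻¹ = a := inv_eq_of_mul_eq_one_left ha
  have hbi : b⁻¹ = b := inv_eq_of_mul_eq_one_left hb
  have hci : c⁻¹ = c := inv_eq_of_mul_eq_one_left hc
  obtain ⟨t, ht⟩ : ∃ t, t = (c * b) ^ 2 := ⟨_, rfl⟩
  rw [← ht] at hat ⊢
  have hti : t⁻¹ = b * c * b * c := by
    rw [ht, sq]; simp [mul_inv_rev, hbi, hci, mul_assoc]
  have hct : c * t * c = t ^ (-1 : ℤ) := by
    rw [zpow_neg_one, hti, ht, sq]
    calc c * (c * b * (c * b)) * c = (c * c) * b * c * b * c := by group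
      _ = _ := by rw [hc]; group
  have hbt : b * t * b = t ^ (-1 : ℤ) := by
    rw [zpow_neg_one, hti, ht, sq]
    calc b * (c * b * (c * b)) * b = b * c * b * c * (b * b) := by group
      _ = _ := by rw [hb]; group
  have hbc : b * c = t⁻¹ * c * b := by
    rw [hti]
    calc b * c = b * c * b * b := by rw [mul_assoc (b * c), hb, mul_one]
      _ = b * c * b * (c * c) * b := by rw [hc, mul_one]
      _ = _ := by group
  have haab : a * (a * b) * a = (a * b) ^ (-1 : ℤ) := by
    rw [zpow_neg_one, mul_inv_rev, hai, hbi, ← mul_assoc, ha, one_mul]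
  have hA := invol_mul_zpow ha hat
  have hB := invol_mul_zpow hb hbt
  have hC := invol_mul_zpow hc hct
  have hR := invol_mul_zpow ha haab
  have hacs : ∀ s : ℤ, a * c ^ s = c ^ s * a := fun s =>
    ((show Commute a c from hac).zpow_right s).eq
  have stepA : ∀ g : G, (∃ i s j k : ℤ, g = t ^ i * c ^ s * (a * b) ^ j * a ^ k) →
      ∃ i s j k : ℤ, a * g = t ^ i * c ^ s * (a * b) ^ j * a ^ k := by
    rintro g ⟨i, s, j, k, rfl⟩
    refine ⟨q * i, s, -1 * j, 1 + k, ?_⟩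
    calc a * (t ^ i * c ^ s * (a * b) ^ j * a ^ k)
        = (a * t ^ i) * c ^ s * (a * b) ^ j * a ^ k := by simp only [mul_assoc]
      _ = t ^ (q * i) * (a * c ^ s) * (a * b) ^ j * a ^ k := by rw [hA]; simp only [mul_assoc]
      _ = t ^ (q * i) * c ^ s * (a * (a * b) ^ j) * a ^ k := by rw [hacs]; simp only [mul_assoc]
      _ = _ := by rw [hR, zpow_one_add]; simp only [mul_assoc]
  have stepC : ∀ g : G, (∃ i s j k : ℤ, g = t ^ i * c ^ s * (a * b) ^ j * a ^ k) →
      ∃ i s j k : ℤ, c * g = t ^ i * c ^ s * (a * b) ^ j * a ^ k := by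
    rintro g ⟨i, s, j, k, rfl⟩
    refine ⟨-1 * i, 1 + s, j, k, ?_⟩
    calc c * (t ^ i * c ^ s * (a * b) ^ j * a ^ k)
        = (c * t ^ i) * c ^ s * (a * b) ^ j * a ^ k := by simp only [mul_assoc]
      _ = _ := by rw [hC, zpow_one_add]; simp only [mul_assoc]
  have hbw : ∀ j k : ℤ, b * ((a * b) ^ j * a ^ k) = (a * b) ^ (-1 * (1 + j)) * a ^ (1 + k) := by
    intro j k
    calc b * ((a * b) ^ j * a ^ k) = (a * a) * b * ((a * b) ^ j * a ^ k) := by rw [ha, one_mul]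
      _ = (a * (a * b) ^ (1 + j)) * a ^ k := by rw [zpow_one_add]; simp only [mul_assoc]
      _ = _ := by rw [hR, zpow_one_add a]; simp only [mul_assoc]
  have stepB : ∀ g : G, (∃ i s j k : ℤ, g = t ^ i * c ^ s * (a * b) ^ j * a ^ k) →
      ∃ i s j k : ℤ, b * g = t ^ i * c ^ s * (a * b) ^ j * a ^ k := by
    rintro g ⟨i, s, j, k, rfl⟩
    have h1 : b * (t ^ i * c ^ s * (a * b) ^ j * a ^ k)
        = t ^ (-1 * i) * (b * c ^ s) * ((a * b) ^ j * a ^ k) := by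
      calc _ = (b * t ^ i) * c ^ s * ((a * b) ^ j * a ^ k) := by simp only [mul_assoc]
        _ = _ := by rw [hB]; simp only [mul_assoc]
    rcases zpow_eq_one_or c hc s with h | h
    · refine ⟨-1 * i, 0, -1 * (1 + j), 1 + k, ?_⟩
      rw [h1, h, mul_one, mul_assoc, hbw, zpow_zero]
      simp only [mul_assoc, one_mul]
    · refine ⟨-1 * i + -1, 1, -1 * (1 + j), 1 + k, ?_⟩
      rw [h1, h, hbc, zpow_add, zpow_neg_one, zpow_one]
      simp only [mul_assoc]
      rw [hbw]
  have hg : g ∈ Subgroup.closure {a, b, c} := by rw [hgen]; trivial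
  induction hg using Subgroup.closure_induction_left with
  | one => exact ⟨0, 0, 0, 0, by simp⟩
  | mul_left x hx y _ ih =>
    rcases hx with rfl | rfl | rfl
    exacts [stepA _ ih, stepB _ ih, stepC _ ih]
  | inv_mul_cancel x hx y _ ih =>
    rcases hx with rfl | rfl | rfl
    · rw [hai]; exact stepA _ ih
    · rw [hbi]; exact stepB _ ih
    · rw [hci]; exact stepC _ ih

/-- The bound `2 * h * 2 * 4 * 2` on the number of normal forms, where `2 * h` is a period
of `t`. -/
lemma card_le {a b c : G} {h e : ℕ} (hpos : 0 < h)
    (ha : a ^ 2 = 1) (hb : b ^ 2 = 1) (hc : c ^ 2 = 1)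
    (hab : (a * b) ^ 4 = 1) (hac : (a * c) ^ 2 = 1) (hbc : (b * c) ^ (2 * (2 * h)) = 1)
    (hr : (a * b * c * b) ^ 2 * (c * b) ^ (2 * h * e) = 1)
    (hgen : Subgroup.closure {a, b, c} = ⊤) :
    Finite G ∧ Nat.card G ≤ 16 * (2 * h) := by
  have hab4 := hab
  have ha2 := ha
  have hc2 := hc
  rw [sq] at ha hb hc hac
  have hai : a⁻¹ = a := inv_eq_of_mul_eq_one_left ha
  have hbi : b⁻¹ = b := inv_eq_of_mul_eq_one_left hb
  have hci : c⁻¹ = c := inv_eq_of_mul_eq_one_left hc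
  have hcomm : a * c = c * a := by
    have : (a * c)⁻¹ = a * c := inv_eq_of_mul_eq_one_left hac
    rw [← this, mul_inv_rev, hai, hci]
  have hct : c * (c * b) ^ 2 * c = ((c * b) ^ 2) ^ (-1 : ℤ) := by
    rw [zpow_neg_one, sq]
    simp only [mul_inv_rev, hbi, hci]
    calc c * (c * b * (c * b)) * c = (c * c) * b * c * b * c := by group
      _ = _ := by rw [hc]; group
  -- The last relation says `a (bcb) a (bcb) = (cb) ^ (-2he)`, and `t = c (bcb)`.
  have hat : a * (c * b) ^ 2 * a = ((c * b) ^ 2) ^ ((h * e : ℕ) + 1 : ℤ) := by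
    have h1 : a * b * c * b * a * (b * c * b) = ((c * b) ^ 2) ^ (-(h * e : ℕ) : ℤ) := by
      rw [zpow_neg, zpow_natCast, ← pow_mul, ← mul_assoc]
      rw [← eq_inv_iff_mul_eq_one, sq] at hr
      rw [← mul_assoc, ← mul_assoc 2, ← hr]
      group
    have h2 : (b * c * b) * (b * c * b) = 1 := by
      calc _ = b * c * (b * b) * c * b := by group
        _ = b * (c * c) * b := by rw [hb]; group
        _ = 1 := by rw [hc, mul_one, hb]
    calc a * (c * b) ^ 2 * a = (a * c) * (b * c * b) * a := by rw [sq]; group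
      _ = c * (a * b * c * b * a * (b * c * b)) * (b * c * b) := by
        rw [hcomm]
        calc _ = c * (a * b * c * b * a) * 1 := by group
          _ = _ := by rw [← h2]; group
      _ = (c * ((c * b) ^ 2) ^ (-(h * e : ℕ) : ℤ)) * (b * c * b) := by rw [h1]
      _ = ((c * b) ^ 2) ^ ((h * e : ℕ) : ℤ) * (c * b) ^ 2 := by
        rw [invol_mul_zpow hc hct, neg_one_mul, neg_neg, sq]; group
      _ = _ := by rw [zpow_add_one]
  have htn : ((c * b) ^ 2) ^ (2 * h) = 1 := by
    have : c * b = (b * c)⁻¹ := by rw [mul_inv_rev, hbi, hci]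
    rw [← pow_mul, this, inv_pow, hbc, inv_one]
  let f : Fin (2 * h) × Fin 2 × Fin 4 × Fin 2 → G := fun p =>
    ((c * b) ^ 2) ^ (p.1 : ℕ) * c ^ (p.2.1 : ℕ) * (a * b) ^ (p.2.2.1 : ℕ) * a ^ (p.2.2.2 : ℕ)
  have hf : Function.Surjective f := by
    intro g
    obtain ⟨i, s, j, k, rfl⟩ := normal_form ha hb hc hcomm hat hgen g
    obtain ⟨i', hi⟩ := exists_fin_pow _ (2 * h) (by omega) htn i
    obtain ⟨s', hs⟩ := exists_fin_pow _ 2 (by omega) hc2 s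
    obtain ⟨j', hj⟩ := exists_fin_pow _ 4 (by omega) hab4 j
    obtain ⟨k', hk⟩ := exists_fin_pow _ 2 (by omega) ha2 k
    exact ⟨(i', s', j', k'), by simp only [f, hi, hs, hj, hk]⟩
  refine ⟨Finite.of_surjective f hf, (Nat.card_le_card_of_surjective f hf).trans ?_⟩
  simp only [Nat.card_eq_fintype_card, Fintype.card_prod, Fintype.card_fin]
  omega

end UpperBound

/-! ### The action on `ZMod n × Bool` -/

section Action

variable {n : ℕ}

/-- The action of `a`: multiplication by `u`, where `u² = 1`. -/
def permA (u : ZMod n) (hu : u * u = 1) : Equiv.Perm (ZMod n × Bool) :=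
  Function.Involutive.toPerm (fun p => (u * p.1, p.2))
    (fun p => by ext <;> simp [← mul_assoc, hu])

/-- The action of `b`: reflection of each of the two copies of `ZMod n`, about `0` and `1 / 2`. -/
def permB : Equiv.Perm (ZMod n × Bool) :=
  Function.Involutive.toPerm (fun p => ((if p.2 then 1 else 0) - p.1, p.2))
    (fun p => by ext <;> simp)

/-- The action of `c`: exchange of the two copies of `ZMod n`. -/
def permC : Equiv.Perm (ZMod n × Bool) :=
  Function.Involutive.toPerm (fun p => (p.1, !p.2)) (fun p => by ext <;> simp)

@[simp] lemma permA_apply (u : ZMod n) (hu : u * u = 1) (p) :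
    permA u hu p = (u * p.1, p.2) := rfl

@[simp] lemma permB_apply (p : ZMod n × Bool) :
    permB p = ((if p.2 then 1 else 0) - p.1, p.2) := rfl

@[simp] lemma permC_apply (p : ZMod n × Bool) : permC p = (p.1, !p.2) := rfl

lemma shift_pow (g : Equiv.Perm (ZMod n × Bool)) (w : Bool → ZMod n)
    (hg : ∀ i s, g (i, s) = (i + w s, s)) (k : ℕ) (i : ZMod n) (s : Bool) :
    (g ^ k) (i, s) = (i + k * w s, s) := by
  induction k generalizing i with
  | zero => simp
  | succ k ih =>
    rw [pow_succ, Equiv.Perm.mul_apply, hg, ih]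
    push_cast
    ext
    · simp only; ring
    · rfl

/-- The permutations `(i, s) ↦ (u i + v s, s + σ)` with `u² = 1`. -/
def IsAff (g : Equiv.Perm (ZMod n × Bool)) : Prop :=
  ∃ (u : ZMod n) (v : Bool → ZMod n) (σ : Bool), u * u = 1 ∧
    ∀ i s, g (i, s) = (u * i + v s, xor s σ)

lemma IsAff.one : IsAff (1 : Equiv.Perm (ZMod n × Bool)) :=
  ⟨1, 0, false, by simp, by simp⟩

lemma IsAff.mul {g g' : Equiv.Perm (ZMod n × Bool)} (hg : IsAff g) (hg' : IsAff g') :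
    IsAff (g * g') := by
  obtain ⟨u, v, σ, hu, h⟩ := hg
  obtain ⟨u', v', σ', hu', h'⟩ := hg'
  refine ⟨u * u', fun s => u * v' s + v (xor s σ'), xor σ' σ, ?_, fun i s => ?_⟩
  · linear_combination u' * u' * hu + hu'
  · rw [Equiv.Perm.mul_apply, h', h, Bool.xor_assoc]
    ext
    · simp only; ring
    · rfl

/-- The square of an affine permutation translates each copy of `ZMod n`, hence has order
dividing `n`. -/
lemma IsAff.pow_eq_one {g : Equiv.Perm (ZMod n × Bool)} (hg : IsAff g) : g ^ (2 * n) = 1 := by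
  obtain ⟨u, v, σ, hu, h⟩ := hg
  ext1 ⟨i, s⟩
  rw [pow_mul, shift_pow (g ^ 2) (fun s => u * v s + v (xor s σ))]
  · simp
  · intro i s
    rw [sq, Equiv.Perm.mul_apply, h, h]
    ext
    · simp only; linear_combination i * hu
    · simp

lemma isAff_permA (u : ZMod n) (hu : u * u = 1) : IsAff (permA u hu) :=
  ⟨u, 0, false, hu, by simp⟩

lemma isAff_permB : IsAff (permB : Equiv.Perm (ZMod n × Bool)) :=
  ⟨-1, fun s => if s then 1 else 0, false, by simp, fun i s => by
    ext
    · simp only [permB_apply]; ring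
    · simp⟩

lemma isAff_permC : IsAff (permC : Equiv.Perm (ZMod n × Bool)) :=
  ⟨1, 0, true, by simp, by simp⟩

lemma permBC_sq (i : ZMod n) (s : Bool) :
    ((permB * permC) ^ 2 : Equiv.Perm (ZMod n × Bool)) (i, s)
      = (i + (if s then 1 else -1), s) := by
  cases s <;> simp [sq, Equiv.Perm.mul_apply] <;> ring

lemma permCB_sq (i : ZMod n) (s : Bool) :
    ((permC * permB) ^ 2 : Equiv.Perm (ZMod n × Bool)) (i, s)
      = (i + (if s then -1 else 1), s) := by
  cases s <;> simp [sq, Equiv.Perm.mul_apply] <;> ring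

lemma permA_sq (u : ZMod n) (hu : u * u = 1) : permA u hu ^ 2 = 1 := by
  ext1 ⟨i, s⟩
  simp [sq, Equiv.Perm.mul_apply, ← mul_assoc, hu]

lemma permB_sq : (permB : Equiv.Perm (ZMod n × Bool)) ^ 2 = 1 := by
  ext1 ⟨i, s⟩
  simp [sq, Equiv.Perm.mul_apply]

lemma permC_sq : (permC : Equiv.Perm (ZMod n × Bool)) ^ 2 = 1 := by
  ext1 ⟨i, s⟩
  simp [sq, Equiv.Perm.mul_apply]

lemma permAC (u : ZMod n) (hu : u * u = 1) : (permA u hu * permC) ^ 2 = 1 := by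
  ext1 ⟨i, s⟩
  simp [sq, Equiv.Perm.mul_apply, ← mul_assoc, hu]

lemma permAB (u : ZMod n) (hu : u * u = 1) (hu2 : 2 * u = 2) :
    (permA u hu * permB) ^ 4 = 1 := by
  have h : ∀ (i : ZMod n) (s : Bool), ((permA u hu * permB) ^ 2 : Equiv.Perm (ZMod n × Bool)) (i, s) = (i + (if s then u - 1 else 0), s) := by
    intro i s
    cases s <;> simp [sq, Equiv.Perm.mul_apply]
    · linear_combination i * hu
    · linear_combination (i - 1) * hu
  ext1 ⟨i, s⟩
  rw [show 4 = 2 * 2 from rfl, pow_mul, shift_pow _ _ h]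
  cases s <;> simp
  linear_combination hu2

lemma permBC (h : ℕ) (hn : n = 2 * h) :
    (permB * permC : Equiv.Perm (ZMod n × Bool)) ^ (2 * (2 * h)) = 1 := by
  rw [← hn]
  exact (isAff_permB.mul isAff_permC).pow_eq_one

lemma permRel (h e : ℕ) (u : ZMod n) (hu : u * u = 1)
    (hue : u = 1 + (e * h : ℕ)) :
    (permA u hu * permB * permC * permB) ^ 2 * (permC * permB) ^ (2 * h * e) = 1 := by
  ext1 ⟨i, s⟩
  have key : ((e * h : ℕ) : ZMod n) = u - 1 := by rw [hue]; ring
  rw [Equiv.Perm.mul_apply, mul_assoc 2, pow_mul _ 2, mul_comm h e, shift_pow _ _ permCB_sq, key]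
  cases s <;> simp [sq, Equiv.Perm.mul_apply]
  · linear_combination (i + u) * hu
  · linear_combination (i - u) * hu

end Action

end Pres

/-! ### Order and exponent of `M(m, e)` -/

/-- A homomorphism kills the relators if and only if the images of the generators satisfy the
defining relations, with the exponents written in terms of `h = 2 ^ (m - 5)`. -/
lemma Mrels_hold (m e h : ℕ) (hh : h = 2 ^ (m - 5)) (hm : 7 ≤ m) {G : Type*} [Group G]
    (f : FreeGroup (Fin 3) →* G) :
    (∀ r ∈ Mrels m e, f r = 1) ↔
      (f (.of 0) ^ 2 = 1 ∧ f (.of 1) ^ 2 = 1 ∧ f (.of 2) ^ 2 = 1 ∧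
        (f (.of 0) * f (.of 1)) ^ 4 = 1 ∧ (f (.of 0) * f (.of 2)) ^ 2 = 1 ∧
        (f (.of 1) * f (.of 2)) ^ (2 * (2 * h)) = 1 ∧
        (f (.of 0) * f (.of 1) * f (.of 2) * f (.of 1)) ^ 2 *
          (f (.of 2) * f (.of 1)) ^ (2 * h * e) = 1) := by
  obtain ⟨k, rfl⟩ : ∃ k, m = k + 5 := ⟨m - 5, by omega⟩
  have h1 : 2 * h = 2 ^ (k + 5 - 4) := by
    rw [hh, show k + 5 - 4 = (k + 5 - 5) + 1 by omega, pow_succ]; ring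
  have h2 : 2 * (2 * h) = 2 ^ (k + 5 - 3) := by
    rw [h1, show k + 5 - 3 = (k + 5 - 4) + 1 by omega, pow_succ]; ring
  rw [h2, h1]
  simp [Mrels]

/-- For m ≥ 7 and e ∈ {0, 1}, the presented group M(m, e) has order
2^m and exponent 2^(m-3). -/
theorem stmt_8 (m e : ℕ) (hm : 7 ≤ m) (he : e ≤ 1) :
    Nat.card (Mgrp m e) = 2 ^ m ∧ Monoid.exponent (Mgrp m e) = 2 ^ (m - 3) := by
  obtain ⟨h, hh⟩ : ∃ h, h = 2 ^ (m - 5) := ⟨_, rfl⟩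
  obtain ⟨n, hn⟩ : ∃ n, n = 2 * h := ⟨_, rfl⟩
  have hpos : 0 < h := by rw [hh]; positivity
  have hcard : 16 * n = 2 ^ m := by
    rw [hn, hh, show m = (m - 5) + 5 by omega, Nat.add_sub_cancel, pow_add]; ring
  have hexp : 2 * n = 2 ^ (m - 3) := by
    rw [hn, hh, show m - 3 = (m - 5) + 2 by omega, pow_add]; ring
  have hexp' : n = 2 ^ (m - 4) := by
    rw [hn, hh, show m - 4 = (m - 5) + 1 by omega, pow_add]; ring
  have h4 : 4 ∣ 2 * n := by rw [hn]; exact ⟨h, by ring⟩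
  have h2h : (2 * h : ZMod n) = 0 := by
    have : ((2 * h : ℕ) : ZMod n) = 0 := by rw [← hn]; simp
    exact_mod_cast this
  -- `h` is even, so `h * h` is a multiple of `n = 2 * h`.
  have hhh : (h * h : ZMod n) = 0 := by
    obtain ⟨j, hj⟩ : ∃ j, h = 2 * j := ⟨2 ^ (m - 6), by
      rw [hh, show m - 5 = (m - 6) + 1 by omega, pow_add]; ring⟩
    have : (h : ZMod n) = 2 * j := by rw [hj]; push_cast; ring
    calc (h * h : ZMod n) = (2 * h) * j := by nth_rw 2 [this]; ring
      _ = 0 := by rw [h2h, zero_mul]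
  have : NeZero n := ⟨by omega⟩
  obtain ⟨u, hue⟩ : ∃ u : ZMod n, u = 1 + (e * h : ℕ) := ⟨_, rfl⟩
  have hu : u * u = 1 := by
    rw [hue]; push_cast; linear_combination e * h2h + e * e * hhh
  have hu2 : 2 * u = 2 := by
    rw [hue]; push_cast; linear_combination e * h2h
  -- The action on `ZMod n × Bool`.
  let φ : Mgrp m e →* Equiv.Perm (ZMod n × Bool) :=
    PresentedGroup.toGroup (f := ![Pres.permA u hu, Pres.permB, Pres.permC])
      ((Mrels_hold m e h hh hm _).2 (by
        simp only [FreeGroup.lift_apply_of]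
        exact ⟨Pres.permA_sq u hu, Pres.permB_sq, Pres.permC_sq, Pres.permAB u hu hu2,
          Pres.permAC u hu, Pres.permBC h hn, Pres.permRel h e u hu hue⟩))
  -- The dihedral quotient.
  let ψ : Mgrp m e →* DihedralGroup 4 :=
    PresentedGroup.toGroup (f := ![DihedralGroup.sr 0, DihedralGroup.sr 1, 1])
      ((Mrels_hold m e h hh hm _).2 (by
        simp only [FreeGroup.lift_apply_of]
        refine ⟨by decide, by decide, by decide, by decide, by decide, ?_, ?_⟩
        · rw [pow_mul]
          exact (congrArg (· ^ (2 * h)) (by decide)).trans (one_pow _)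
        · rw [mul_assoc 2, pow_mul _ 2]
          refine (congrArg₂ (fun x y : DihedralGroup 4 => x * y ^ (h * e))
            (show _ = 1 by decide) (show _ = 1 by decide)).trans ?_
          simp))
  set a : Mgrp m e := PresentedGroup.of 0 with ha
  set b : Mgrp m e := PresentedGroup.of 1 with hb
  set c : Mgrp m e := PresentedGroup.of 2 with hc
  have φa : φ a = Pres.permA u hu := PresentedGroup.toGroup.of _
  have φb : φ b = Pres.permB := PresentedGroup.toGroup.of _
  have φc : φ c = Pres.permC := PresentedGroup.toGroup.of _
  have ψa : ψ a = DihedralGroup.sr 0 := PresentedGroup.toGroup.of _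
  have ψb : ψ b = DihedralGroup.sr 1 := PresentedGroup.toGroup.of _
  have ψc : ψ c = 1 := PresentedGroup.toGroup.of _
  have hgen : Subgroup.closure {a, b, c} = (⊤ : Subgroup (Mgrp m e)) := by
    rw [← PresentedGroup.closure_range_of (Mrels m e)]
    congr 1
    ext x
    simp [Fin.exists_fin_succ, ha, hb, hc, eq_comm]
  obtain ⟨r1, r2, r3, r4, r5, r6, r7⟩ :=
    (Mrels_hold m e h hh hm (PresentedGroup.mk (Mrels m e))).1
      (fun r hr => PresentedGroup.one_of_mem hr)
  obtain ⟨hfin, hle⟩ := Pres.card_le (G := Mgrp m e) (a := a) (b := b) (c := c)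
    hpos r1 r2 r3 r4 r5 r6 r7 hgen
  rw [← hn] at hle
  let F : Mgrp m e → (ZMod n × Bool) × DihedralGroup 4 := fun g => (φ g (0, false), ψ g)
  have hF : Function.Surjective F := by
    rintro ⟨⟨i, s⟩, w⟩
    -- `⟨a, b⟩` fixes the base point and maps onto the dihedral group.
    have ha0 : φ a (0, false) = (0, false) := by rw [φa]; simp
    have hb0 : φ b (0, false) = (0, false) := by rw [φb]; simp
    have hw : ∃ g, φ g (0, false) = (0, false) ∧ ψ g = w := by
      have hr : ∀ k : ℕ, φ ((a * b) ^ k) (0, false) = (0, false) := by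
        intro k
        induction k with
        | zero => simp
        | succ k ih =>
          rw [pow_succ, map_mul, Equiv.Perm.mul_apply, map_mul, Equiv.Perm.mul_apply, hb0, ha0, ih]
      have hψ : ∀ k : ZMod 4, ψ ((a * b) ^ k.val) = DihedralGroup.r k := by
        intro k
        rw [map_pow, map_mul, ψa, ψb]
        revert k; decide
      cases w with
      | r k => exact ⟨(a * b) ^ k.val, hr _, hψ k⟩
      | sr k =>
        refine ⟨a * (a * b) ^ k.val, ?_, ?_⟩
        · rw [map_mul, Equiv.Perm.mul_apply, hr, ha0]
        · rw [map_mul, hψ, ψa]; simp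
    obtain ⟨g, hg0, hgw⟩ := hw
    -- `⟨t, c⟩` is transitive on `ZMod n × Bool` and lies in the kernel of `ψ`.
    have ht : ∀ k : ℕ, φ (((c * b) ^ 2) ^ k) (0, false) = ((k : ZMod n), false) := by
      intro k
      rw [map_pow, map_pow, map_mul, φc, φb, Pres.shift_pow _ _ Pres.permCB_sq]
      simp
    have htψ : ∀ k : ℕ, ψ (((c * b) ^ 2) ^ k) = 1 := by
      intro k
      rw [map_pow, map_pow, map_mul, ψc, ψb]
      rw [show ((1 : DihedralGroup 4) * DihedralGroup.sr 1) ^ 2 = 1 by decide, one_pow]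
    cases s with
    | false =>
      refine ⟨((c * b) ^ 2) ^ i.val * g, ?_⟩
      simp only [F]
      rw [map_mul, Equiv.Perm.mul_apply, hg0, ht, map_mul, htψ, hgw, one_mul,
        ZMod.natCast_zmod_val]
    | true =>
      refine ⟨c * (((c * b) ^ 2) ^ i.val * g), ?_⟩
      simp only [F]
      rw [map_mul, map_mul, Equiv.Perm.mul_apply, Equiv.Perm.mul_apply, hg0, ht, map_mul ψ,
        map_mul ψ, htψ, hgw, one_mul, ZMod.natCast_zmod_val, φc, ψc, one_mul]
      simp
  have hcod : Nat.card ((ZMod n × Bool) × DihedralGroup 4) = 16 * n := by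
    rw [Nat.card_prod, Nat.card_prod, Nat.card_zmod, DihedralGroup.nat_card,
      Nat.card_eq_fintype_card, Fintype.card_bool]
    ring
  have hge : 16 * n ≤ Nat.card (Mgrp m e) := hcod ▸ Nat.card_le_card_of_surjective F hF
  have hG : Nat.card (Mgrp m e) = 16 * n := le_antisymm hle hge
  have hFinj : Function.Injective F :=
    ((Nat.bijective_iff_surjective_and_card F).2 ⟨hF, by rw [hG, hcod]⟩).1
  have hAff : ∀ g : Mgrp m e, Pres.IsAff (φ g) := by
    intro g
    have hA : Pres.IsAff (φ a) := by rw [φa]; exact Pres.isAff_permA u hu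
    have hB : Pres.IsAff (φ b) := by rw [φb]; exact Pres.isAff_permB
    have hC : Pres.IsAff (φ c) := by rw [φc]; exact Pres.isAff_permC
    have hg : g ∈ Subgroup.closure {a, b, c} := by rw [hgen]; trivial
    have hai : a⁻¹ = a := inv_eq_of_mul_eq_one_left ((sq a).symm.trans r1)
    have hbi : b⁻¹ = b := inv_eq_of_mul_eq_one_left ((sq b).symm.trans r2)
    have hci : c⁻¹ = c := inv_eq_of_mul_eq_one_left ((sq c).symm.trans r3)
    induction hg using Subgroup.closure_induction_left with
    | one => rw [map_one]; exact Pres.IsAff.one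
    | mul_left x hx y _ ih =>
      rw [map_mul]
      rcases hx with rfl | rfl | rfl
      exacts [hA.mul ih, hB.mul ih, hC.mul ih]
    | inv_mul_cancel x hx y _ ih =>
      rw [map_mul]
      rcases hx with rfl | rfl | rfl
      · rw [hai]; exact hA.mul ih
      · rw [hbi]; exact hB.mul ih
      · rw [hci]; exact hC.mul ih
  have hdvd : Monoid.exponent (Mgrp m e) ∣ 2 * n := by
    rw [Monoid.exponent_dvd_iff_forall_pow_eq_one]
    intro g
    apply hFinj
    have hD : ∀ w : DihedralGroup 4, w ^ 4 = 1 := by decide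
    obtain ⟨j, hj⟩ := h4
    have hψ : ψ g ^ (2 * n) = 1 := by rw [hj, pow_mul, hD, one_pow]
    simp only [F]
    rw [map_pow, map_pow, (hAff g).pow_eq_one, hψ, map_one, map_one]
  have hord : orderOf (b * c) = 2 ^ (m - 4 + 1) := by
    apply orderOf_eq_prime_pow
    · rw [← hexp']
      intro h1
      have h3 : φ ((b * c) ^ (2 * h)) (0, false) = (0, false) := by
        rw [← hn, h1, map_one]; rfl
      rw [pow_mul, map_pow, map_pow, map_mul, φb, φc,
        Pres.shift_pow _ _ Pres.permBC_sq] at h3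
      have h5 : (h : ZMod n) = 0 := by simpa using h3
      rw [ZMod.natCast_eq_zero_iff] at h5
      have := Nat.le_of_dvd hpos h5
      omega
    · rw [show m - 4 + 1 = m - 3 by omega, ← hexp, hn]
      exact r6
  refine ⟨hG.trans hcard, Nat.dvd_antisymm (hexp ▸ hdvd) ?_⟩
  rw [show m - 3 = m - 4 + 1 by omega, ← hord]
  exact Monoid.order_dvd_exponent _
end

section
/- For every m ≥ 7 and every e ∈ {0, 1}, the images σ₀, σ₁, σ₂ of the generators x₀, x₁, x₂ in the presented group M(m, e) satisfy: orderOf σ₀ = orderOf σ₁ = orderOf σ₂ = 2, orderOf (σ₀ * σ₁) = 4, orderOf (σ₀ * σ₂) = 2, and orderOf (σ₁ * σ₂) = 2^(m−3). Hence M(m, e) is a smooth quotient of the string Coxeter group [4, 2^(m−3)] and has Schläfli type {4, 2^(m−3)}. -/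
/-- The relations of `M(m, e)` hold for its generators. -/
lemma Msigma_rels (m e : ℕ) :
    Msigma m e 0 ^ 2 = 1 ∧ Msigma m e 1 ^ 2 = 1 ∧ Msigma m e 2 ^ 2 = 1 ∧
      (Msigma m e 0 * Msigma m e 1) ^ 4 = 1 ∧ (Msigma m e 0 * Msigma m e 2) ^ 2 = 1 ∧
      (Msigma m e 1 * Msigma m e 2) ^ (2 ^ (m - 3)) = 1 := by
  have key : ∀ r ∈ Mrels m e, PresentedGroup.mk (Mrels m e) r = 1 :=
    fun r hr => PresentedGroup.one_of_mem hr
  simp only [Mrels, Set.mem_insert_iff, Set.mem_singleton_iff, forall_eq_or_imp, forall_eq] at key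
  exact ⟨key.1, key.2.1, key.2.2.1, key.2.2.2.1, key.2.2.2.2.1, key.2.2.2.2.2.1⟩

/-- The universal property of `M(m, e)`. -/
lemma Mgrp_exists_hom {G : Type*} [Group G] (m e : ℕ) (a b c : G)
    (ha : a ^ 2 = 1) (hb : b ^ 2 = 1) (hc : c ^ 2 = 1) (hab : (a * b) ^ 4 = 1)
    (hac : (a * c) ^ 2 = 1) (hbc : (b * c) ^ (2 ^ (m - 3)) = 1)
    (hr : (a * b * c * b) ^ 2 * (c * b) ^ (2 ^ (m - 4) * e) = 1) :
    ∃ f : Mgrp m e →* G, f (Msigma m e 0) = a ∧ f (Msigma m e 1) = b ∧ f (Msigma m e 2) = c := by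
  have h : ∀ r ∈ Mrels m e, FreeGroup.lift ![a, b, c] r = 1 := by
    simp only [Mrels, Set.mem_insert_iff, Set.mem_singleton_iff, forall_eq_or_imp, forall_eq,
      map_pow, map_mul, FreeGroup.lift_apply_of]
    exact ⟨ha, hb, hc, hab, hac, hbc, hr⟩
  refine ⟨PresentedGroup.toGroup h, ?_, ?_, ?_⟩ <;> simp [Msigma]

/-- The displacement of the action of `x₀`: `h` on the classes `2` and `3` modulo 4, `0` on the
classes `0` and `1`. -/
def displacement {R : Type*} [Zero R] (h : R) (x : ZMod 4) : R :=
  if x = 2 ∨ x = 3 then h else 0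

/-- The action of `M(m, e)` on `ℤ/2^(m-3)`, with `m = t + 7`. Only the effect of `σ₁` and `σ₂` is
recorded, since the order of `σ₀` is read off from the dihedral quotient. -/
lemma exists_action (t e : ℕ) :
    ∃ f : Mgrp (t + 7) e →* Equiv.Perm (ZMod (2 ^ (t + 4))),
      (∀ k, f (Msigma (t + 7) e 1) k = -k) ∧ (∀ k, f (Msigma (t + 7) e 2) k = 1 - k) := by
  have hdvd : 4 ∣ 2 ^ (t + 4) := ⟨2 ^ (t + 2), by ring⟩
  set p : ZMod (2 ^ (t + 4)) →+* ZMod 4 := ZMod.castHom hdvd (ZMod 4)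
  obtain ⟨h, hh⟩ : ∃ h : ZMod (2 ^ (t + 4)), h = ((2 ^ (t + 3) * e : ℕ) : ZMod (2 ^ (t + 4))) :=
    ⟨_, rfl⟩
  have hN : ((2 ^ (t + 4) : ℕ) : ZMod (2 ^ (t + 4))) = 0 := ZMod.natCast_self _
  have h2 : h + h = 0 := by
    rw [hh, ← Nat.cast_add, show 2 ^ (t + 3) * e + 2 ^ (t + 3) * e = 2 ^ (t + 4) * e by ring,
      Nat.cast_mul, hN, zero_mul]
  have hph : p h = 0 := by
    rw [hh, map_natCast, ZMod.natCast_eq_zero_iff]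
    exact ⟨2 ^ (t + 1) * e, by ring⟩
  have hcases : ∀ x : ZMod 4, x = 0 ∨ x = 1 ∨ x = 2 ∨ x = 3 := by decide
  have s0 : displacement h 0 = 0 := if_neg (by decide)
  have s1 : displacement h 1 = 0 := if_neg (by decide)
  have s2 : displacement h 2 = h := if_pos (by decide)
  have s3 : displacement h 3 = h := if_pos (by decide)
  have hA : Function.Involutive (fun k => k + displacement h (p k)) := by
    intro k
    rcases hcases (p k) with hk | hk | hk | hk <;>
      simp [hk, hph, s0, s1, s2, s3, add_assoc, h2]
  have hB : Function.Involutive (fun k : ZMod (2 ^ (t + 4)) => -k) := fun k => neg_neg k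
  have hC : Function.Involutive (fun k : ZMod (2 ^ (t + 4)) => 1 - k) :=
    fun k => sub_sub_cancel 1 k
  set A := hA.toPerm
  set B := hB.toPerm
  set C := hC.toPerm
  have eA : ∀ k, A k = k + displacement h (p k) := fun k => rfl
  have eB : ∀ k, B k = -k := fun k => rfl
  have eC : ∀ k, C k = 1 - k := fun k => rfl
  -- Arithmetic in `ℤ/4` that tracks the class of `k` through the generators.
  have d1 : (-1 : ZMod 4) = 3 := by decide
  have d2 : (-2 : ZMod 4) = 2 := by decide
  have d3 : (-3 : ZMod 4) = 1 := by decide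
  have d4 : (1 - 2 : ZMod 4) = 3 := by decide
  have d5 : (1 - 3 : ZMod 4) = 2 := by decide
  have hBC : ∀ (n : ℕ) k, ((B * C) ^ n) k = k - n := by
    intro n
    induction n with
    | zero => simp
    | succ n ih =>
      intro k
      rw [pow_succ' (_ * _), Equiv.Perm.mul_apply, ih, Equiv.Perm.mul_apply, eC, eB]
      push_cast
      ring
  have hCB : ∀ (n : ℕ) k, ((C * B) ^ n) k = k + n := by
    intro n
    induction n with
    | zero => simp
    | succ n ih =>
      intro k
      rw [pow_succ' (_ * _), Equiv.Perm.mul_apply, ih, Equiv.Perm.mul_apply, eB, eC]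
      push_cast
      ring
  obtain ⟨f, -, f1, f2⟩ := Mgrp_exists_hom (t + 7) e A B C
    (by ext1 k; exact hA k)
    (by ext1 k; exact hB k)
    (by ext1 k; exact hC k)
    (by
      ext1 k
      rcases hcases (p k) with hk | hk | hk | hk <;>
        simp [pow_succ, s0, s1, s2, s3, eA, eB, hk, hph, d1, d2, d3] <;> grind)
    (by
      ext1 k
      rcases hcases (p k) with hk | hk | hk | hk <;>
        simp [pow_succ, s0, s1, s2, s3, eA, eC, hk, hph, d4, d5] <;> grind)
    (by ext1 k; rw [show t + 7 - 3 = t + 4 by rfl, hBC, hN, sub_zero]; rfl)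
    (by
      ext1 k
      rw [show t + 7 - 4 = t + 3 by rfl, Equiv.Perm.mul_apply, hCB, ← hh]
      rcases hcases (p k) with hk | hk | hk | hk <;>
        simp [pow_succ, s0, s3, eA, eB, eC, hk, hph, d1, d2, d3, d4, d5] <;> grind)
  exact ⟨f, fun k => by rw [f1, eB], fun k => by rw [f2, eC]⟩

/-- For m ≥ 7 and e ∈ {0, 1}, the generator images σ₀, σ₁, σ₂ of
M(m, e) each have order 2, and the products σ₀σ₁, σ₀σ₂, σ₁σ₂ have orders
4, 2 and 2^(m-3) respectively (Schläfli type {4, 2^(m-3)}). -/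
theorem stmt_9 (m e : ℕ) (hm : 7 ≤ m) (he : e ≤ 1) :
    orderOf (Msigma m e 0) = 2 ∧ orderOf (Msigma m e 1) = 2 ∧
      orderOf (Msigma m e 2) = 2 ∧
      orderOf (Msigma m e 0 * Msigma m e 1) = 4 ∧
      orderOf (Msigma m e 0 * Msigma m e 2) = 2 ∧
      orderOf (Msigma m e 1 * Msigma m e 2) = 2 ^ (m - 3) := by
  obtain ⟨t, rfl⟩ : ∃ t, m = t + 7 := ⟨m - 7, by omega⟩
  obtain ⟨r0, r1, r2, r01, r02, r12⟩ := Msigma_rels (t + 7) e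
  rw [show t + 7 - 3 = t + 4 by rfl] at r12 ⊢
  have hB : (DihedralGroup.sr 1 : DihedralGroup 4) ^ 2 = 1 := by decide
  obtain ⟨g, g0, g1, g2⟩ := Mgrp_exists_hom (t + 7) e
    (DihedralGroup.sr 0 : DihedralGroup 4) (DihedralGroup.sr 1) 1
    (by decide) (by decide) (by decide) (by decide) (by decide)
    (by rw [mul_one, show 2 ^ (t + 7 - 3) = 2 * 2 ^ (t + 3) by
          rw [show t + 7 - 3 = t + 3 + 1 by rfl]; ring, pow_mul, hB, one_pow])
    (by rw [one_mul, show 2 ^ (t + 7 - 4) * e = 2 * (2 ^ (t + 2) * e) by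
          rw [show t + 7 - 4 = t + 2 + 1 by rfl]; ring, pow_mul, hB, one_pow]
        decide)
  obtain ⟨f, f1, f2⟩ := exists_action t e
  have : Nontrivial (ZMod (2 ^ (t + 4))) :=
    @ZMod.nontrivial _ ⟨Nat.one_lt_two_pow (by omega)⟩
  refine ⟨orderOf_eq_prime r0 fun h => ?_, orderOf_eq_prime r1 fun h => ?_,
    orderOf_eq_prime r2 fun h => ?_, ?_, orderOf_eq_prime r02 fun h => ?_, ?_⟩
  · rw [h, map_one] at g0
    exact absurd g0 (by decide)
  · rw [h, map_one] at g1
    exact absurd g1 (by decide)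
  · have := f2 0
    rw [h, map_one] at this
    simp at this
  · refine orderOf_eq_prime_pow (p := 2) (n := 1) (fun h => ?_) r01
    have := congrArg g h
    rw [map_pow, map_mul, g0, g1, map_one] at this
    exact absurd this (by decide)
  · have := congrArg g h
    rw [map_mul, g0, g2, map_one] at this
    exact absurd this (by decide)
  · refine Nat.dvd_antisymm (orderOf_dvd_of_pow_eq_one r12) ?_
    have hpow : ∀ (n : ℕ) k, (f ((Msigma (t + 7) e 1 * Msigma (t + 7) e 2) ^ n)) k = k - n := by
      intro n
      induction n with
      | zero => simp
      | succ n ih =>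
        intro k
        rw [pow_succ' (_ * _), map_mul, Equiv.Perm.mul_apply, ih, map_mul, Equiv.Perm.mul_apply, f2, f1]
        push_cast
        ring
    have := hpow (orderOf (Msigma (t + 7) e 1 * Msigma (t + 7) e 2)) 0
    rw [pow_orderOf_eq_one, map_one, Equiv.Perm.one_apply, zero_sub, eq_comm, neg_eq_zero,
      ZMod.natCast_eq_zero_iff] at this
    exact this
end
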